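/- Let G be a minimal counterexample as in the context. Then O_{2'}(F(G)) ≠ 1; equivalently, there exist an odd prime p and a nontrivial normal subgroup of G that is a p-group. -/

import Mathlib

namespace Wreathed

/-- The cyclic group of order `2^n`. -/
abbrev C (n : ℕ) : Type := Multiplicative (ZMod (2^n))

/-- The coordinate-swapping automorphism of `C n × C n`. -/
def swapAut (n : ℕ) : MulAut (C n × C n) := MulEquiv.prodComm

lemma swapAut_mul_self (n : ℕ) : swapAut n * swapAut n = 1 := by
  ext x <;> rfl

lemma two_cases (x : Multiplicative (ZMod 2)) :
    x = 1 ∨ x = Multiplicative.ofAdd 1 := by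
  revert x; decide

/-- The action of `C_2` on `C n × C n` by swapping the two coordinates. -/
def act (n : ℕ) : Multiplicative (ZMod 2) →* MulAut (C n × C n) where
  toFun x := if x = 1 then 1 else swapAut n
  map_one' := if_pos rfl
  map_mul' := by
    have h11 : (Multiplicative.ofAdd 1 : Multiplicative (ZMod 2)) *
        Multiplicative.ofAdd 1 = 1 := by decide
    have h1ne : (Multiplicative.ofAdd 1 : Multiplicative (ZMod 2)) ≠ 1 := by decide
    intro x y
    rcases two_cases x with hx | hx <;> rcases two_cases y with hy | hy <;>
      subst hx <;> subst hy <;>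
      simp [h11, h1ne, swapAut_mul_self]

/-- The wreathed 2-group `W = (C_{2^n} × C_{2^n}) ⋊ C_2`,
i.e. the wreath product `Z_{2^n} ≀ Z_2`. -/
abbrev W (n : ℕ) : Type := (C n × C n) ⋊[act n] (Multiplicative (ZMod 2))

/-- The element `a = ((g,1); 0)`. -/
def a (n : ℕ) : W n := SemidirectProduct.inl (Multiplicative.ofAdd 1, 1)

/-- The element `b = ((1,g); 0)`. -/
def b (n : ℕ) : W n := SemidirectProduct.inl (1, Multiplicative.ofAdd 1)

/-- The element `t = ((1,1); 1)`. -/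
def t (n : ℕ) : W n := SemidirectProduct.inr (Multiplicative.ofAdd 1)

/-- The base subgroup `A = ⟨a, b⟩`. -/
def A (n : ℕ) : Subgroup (W n) := Subgroup.closure {a n, b n}

/-- The diagonal `Δ = ⟨ab⟩`. -/
def diag (n : ℕ) : Subgroup (W n) := Subgroup.zpowers (a n * b n)

/-- The anti-diagonal `Δ⁻ = ⟨ab⁻¹⟩`. -/
def antidiag (n : ℕ) : Subgroup (W n) := Subgroup.zpowers (a n * (b n)⁻¹)

end Wreathed

/-- The subgroup of inner automorphisms of `G`, i.e. `Inn(G)` inside `Aut(G)`. -/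
def innAut (G : Type*) [Group G] : Subgroup (MulAut G) :=
  (MulAut.conj : G →* MulAut G).range

instance innAut_normal (G : Type*) [Group G] : (innAut G).Normal := by
  constructor
  intro x hx f
  obtain ⟨g, rfl⟩ := hx
  refine ⟨f g, ?_⟩
  ext y
  simp only [MulAut.conj_apply, MulAut.mul_apply, map_mul, map_inv,
    MulEquiv.apply_symm_apply, MulAut.inv_def]

/-- An automorphism is class-preserving if it maps every element to a conjugate. -/
def IsClassPreserving {G : Type*} [Group G] (φ : MulAut G) : Prop :=
  ∀ x : G, IsConj x (φ x)

/-- An automorphism is a Coleman automorphism if its restriction to every Sylow subgroup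
is induced by conjugation by a group element. -/
def IsColeman {G : Type*} [Group G] (φ : MulAut G) : Prop :=
  ∀ (p : ℕ), p.Prime → ∀ P : Sylow p G, ∃ y : G,
    ∀ u ∈ (P : Subgroup G), φ u = y⁻¹ * u * y

/-- The subgroup `Aut_c(G)` of class-preserving automorphisms. -/
def autC (G : Type*) [Group G] : Subgroup (MulAut G) where
  carrier := {φ | IsClassPreserving φ}
  one_mem' := fun x => by simpa using IsConj.refl x
  mul_mem' := by
    intro φ ψ hφ hψ x
    exact (hψ x).trans (hφ (ψ x))
  inv_mem' := by
    intro φ hφ x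
    have := (hφ (φ⁻¹ x)).symm
    simpa using this

/-- The subgroup `Aut_Col(G)` of Coleman automorphisms. -/
def autCol (G : Type*) [Group G] : Subgroup (MulAut G) where
  carrier := {φ | IsColeman φ}
  one_mem' := fun p hp P => ⟨1, fun u _ => by simp⟩
  mul_mem' := by
    intro φ ψ hφ hψ p hp P
    obtain ⟨y, hy⟩ := hψ p hp P
    obtain ⟨z, hz⟩ := hφ p hp (y⁻¹ • P)
    refine ⟨y * z, fun u hu => ?_⟩
    have hmem : ψ u ∈ ((y⁻¹ • P : Sylow p G) : Subgroup G) := by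
      rw [Sylow.coe_subgroup_smul, Subgroup.mem_pointwise_smul_iff_inv_smul_mem]
      have : (MulAut.conj y⁻¹)⁻¹ • (ψ u) = u := by
        rw [hy u hu]
        simp [MulAut.smul_def, mul_assoc]
      rw [this]; exact hu
    have h2 := hz _ hmem
    calc (φ * ψ) u = φ (ψ u) := rfl
      _ = z⁻¹ * (ψ u) * z := h2
      _ = (y * z)⁻¹ * u * (y * z) := by rw [hy u hu]; group
  inv_mem' := by
    intro φ hφ p hp P
    obtain ⟨z, hz⟩ := hφ p hp (φ⁻¹ • P)
    refine ⟨z⁻¹, fun u hu => ?_⟩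
    have hmem : φ⁻¹ u ∈ ((φ⁻¹ • P : Sylow p G) : Subgroup G) := by
      rw [Sylow.pointwise_smul_def, Subgroup.mem_pointwise_smul_iff_inv_smul_mem]
      have : (φ⁻¹)⁻¹ • (φ⁻¹ u) = u := by
        simp [MulAut.smul_def]
      rw [this]; exact hu
    have h2 := hz _ hmem
    have : u = z⁻¹ * (φ⁻¹ u) * z := by
      conv_lhs => rw [show u = φ (φ⁻¹ u) by simp]
      exact h2
    rw [show (φ⁻¹ : MulAut G) u = (z⁻¹)⁻¹ * ((z⁻¹ * (φ⁻¹ u) * z) * z⁻¹) from by group]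
    rw [← this]; group

/-- The image `Out_c(G)` of `Aut_c(G)` in `Out(G) = Aut(G)/Inn(G)`. -/
def outC (G : Type*) [Group G] : Subgroup (MulAut G ⧸ innAut G) :=
  (autC G).map (QuotientGroup.mk' (innAut G))

/-- The image `Out_Col(G)` of `Aut_Col(G)` in `Out(G) = Aut(G)/Inn(G)`. -/
def outCol (G : Type*) [Group G] : Subgroup (MulAut G ⧸ innAut G) :=
  (autCol G).map (QuotientGroup.mk' (innAut G))

/-- A group has wreathed Sylow 2-subgroups if its Sylow 2-subgroups are isomorphic to
the wreathed 2-group `(C_{2^n} × C_{2^n}) ⋊ C_2` for some `n ≥ 2`. -/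
def HasWreathedSylow2 (G : Type*) [Group G] : Prop :=
  ∃ n : ℕ, 2 ≤ n ∧ ∀ P : Sylow 2 G, Nonempty ((P : Subgroup G) ≃* Wreathed.W n)

set_option linter.unusedSectionVars false
namespace WPf
open Subgroup

variable {Γ : Type*} [Group Γ]

def TwoEl (x : Γ) : Prop := ∃ k : ℕ, x ^ (2 ^ k) = 1

theorem two_odd {c : Γ} {n : ℕ} (hc : TwoEl c) (hn : Odd n) (h : c ^ n = 1) : c = 1 := by
  obtain ⟨k, hk⟩ := hc
  have h1 := orderOf_dvd_of_pow_eq_one hk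
  have h2 := orderOf_dvd_of_pow_eq_one h
  have hco : Nat.Coprime (2 ^ k) n := Nat.Coprime.pow_left k (Nat.coprime_two_left.mpr hn)
  have := Nat.eq_one_of_dvd_coprimes hco h1 h2
  exact orderOf_eq_one_iff.mp this

theorem TwoEl.conj {x : Γ} (h : TwoEl x) (g : Γ) : TwoEl (g * x * g⁻¹) := by
  obtain ⟨k, hk⟩ := h
  exact ⟨k, by rw [conj_pow, hk]; simp⟩

theorem TwoEl.pow {x : Γ} (h : TwoEl x) (n : ℕ) : TwoEl (x ^ n) := by
  obtain ⟨k, hk⟩ := h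
  exact ⟨k, by rw [← pow_mul, mul_comm, pow_mul, hk, one_pow]⟩

theorem TwoEl.of_mem {S : Subgroup Γ} (hS : IsPGroup 2 S) {x : Γ} (hx : x ∈ S) : TwoEl x := by
  obtain ⟨k, hk⟩ := hS ⟨x, hx⟩
  exact ⟨k, by simpa [Subtype.ext_iff] using hk⟩

theorem TwoEl.zpowers {x : Γ} (h : TwoEl x) : IsPGroup 2 (zpowers x) := by
  obtain ⟨k, hk⟩ := h
  rintro ⟨y, n, rfl⟩
  refine ⟨k, ?_⟩
  ext
  simp only [SubmonoidClass.coe_pow, OneMemClass.coe_one]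
  rw [← zpow_natCast, ← zpow_mul, mul_comm, zpow_mul, zpow_natCast, hk, one_zpow]

/-- decomposition of an element into a two-part and an odd part -/
theorem split_order [Finite Γ] (x : Γ) : ∃ k q : ℕ, Odd q ∧ orderOf x = 2 ^ k * q ∧
    TwoEl (x ^ q) ∧ Odd (orderOf (x ^ (2 ^ k))) := by
  obtain ⟨k, q, hq, h⟩ := Nat.exists_eq_two_pow_mul_odd (orderOf_pos x).ne'
  refine ⟨k, q, hq, h, ⟨k, ?_⟩, ?_⟩
  · rw [← pow_mul, mul_comm, ← h, pow_orderOf_eq_one]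
  · have : orderOf (x ^ (2 ^ k)) ∣ q := by
      apply orderOf_dvd_of_pow_eq_one
      rw [← pow_mul, ← h, pow_orderOf_eq_one]
    exact Odd.of_dvd_nat hq this

/-- An element lies in a subgroup when its two-part and odd part do. -/
theorem mem_of_parts [Finite Γ] (D : Subgroup Γ) (x : Γ) (h2 : ∀ n : ℕ, TwoEl (x ^ n) → x ^ n ∈ D)
    (ho : ∀ n : ℕ, Odd (orderOf (x ^ n)) → x ^ n ∈ D) : x ∈ D := by
  obtain ⟨k, q, hq, h, ha, hb⟩ := split_order x
  have h1 := h2 _ ha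
  have h3 := ho _ hb
  have hco : IsCoprime ((q : ℕ) : ℤ) ((2 ^ k : ℕ) : ℤ) :=
    Nat.isCoprime_iff_coprime.mpr (Nat.Coprime.pow_right k (Nat.coprime_two_right.mpr hq))
  obtain ⟨a, b, hab⟩ := hco
  have : x = (x ^ q) ^ a * (x ^ (2 ^ k)) ^ b := by
    rw [← zpow_natCast, ← zpow_natCast, ← zpow_mul, ← zpow_mul, ← zpow_add]
    rw [mul_comm _ a, mul_comm _ b, hab, zpow_one]
  rw [this]
  exact D.mul_mem (D.zpow_mem h1 _) (D.zpow_mem h3 _)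

theorem conj_iter {x b c : Γ} (h : x * b * x⁻¹ = c * b) (hc : Commute x c) (n : ℕ) :
    x ^ n * b * (x ^ n)⁻¹ = c ^ n * b := by
  induction n with
  | zero => simp
  | succ n ih =>
    have h1 : x ^ (n+1) * b * (x ^ (n+1))⁻¹ = x * (x ^ n * b * (x ^ n)⁻¹) * x⁻¹ := by
      rw [pow_succ']; group
    rw [h1, ih]
    have h2 : x * c ^ n * x⁻¹ = c ^ n := by
      have := (hc.pow_right n).eq
      rw [this]; group
    calc x * (c ^ n * b) * x⁻¹ = (x * c ^ n * x⁻¹) * (x * b * x⁻¹) := by group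
      _ = c ^ (n+1) * b := by rw [h2, h, pow_succ]; group

theorem odd_comm_aux {x b c : Γ} (hx : Odd (orderOf x)) (h : x * b * x⁻¹ = c * b)
    (hc : Commute x c) (h2 : TwoEl c) : Commute x b := by
  have := conj_iter h hc (orderOf x)
  rw [pow_orderOf_eq_one] at this
  have h3 : c ^ orderOf x = 1 := by
    have h4 : 1 * b = c ^ orderOf x * b := by rw [← this]; group
    exact (mul_right_cancel h4).symm
  have := two_odd h2 hx h3
  rw [this, one_mul] at h
  exact mul_inv_eq_iff_eq_mul.mp h

/-- Odd order elements normalizing an abelian 2-group and centralizing its involutions. -/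
theorem OA {x : Γ} (hx : Odd (orderOf x)) (B : Subgroup Γ) (hab : ∀ a ∈ B, ∀ b ∈ B, Commute a b)
    (h2 : ∀ b ∈ B, TwoEl b) (hn : ∀ b ∈ B, x * b * x⁻¹ ∈ B)
    (hi : ∀ b ∈ B, b ^ 2 = 1 → Commute x b) : ∀ b ∈ B, Commute x b := by
  have key : ∀ k : ℕ, ∀ b ∈ B, b ^ (2 ^ k) = 1 → Commute x b := by
    intro k
    induction k with
    | zero => intro b _ h; simp at h; rw [h]; exact Commute.one_right x
    | succ k ih =>
      intro b hb h
      have hb2 : Commute x (b ^ 2) := by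
        apply ih _ (B.pow_mem hb 2)
        rw [← pow_mul, ← pow_succ', h]
      set c := x * b * x⁻¹ * b⁻¹ with hc
      have hcB : c ∈ B := B.mul_mem (hn b hb) (B.inv_mem hb)
      have hc2 : c ^ 2 = 1 := by
        have : Commute (x * b * x⁻¹) b⁻¹ := hab _ (hn b hb) _ (B.inv_mem hb)
        rw [hc, this.mul_pow, conj_pow, hb2.eq]; group
      exact odd_comm_aux hx (c := c) (by rw [hc]; group) (hi c hcB hc2) (h2 c hcB)
  intro b hb
  obtain ⟨k, hk⟩ := h2 b hb
  exact key k b hb hk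

variable [Finite Γ]

/-- Sylow conjugation within a subgroup containing a Sylow subgroup. -/
theorem sylC (T : Sylow 2 Γ) (D S : Subgroup Γ) (hT : (T : Subgroup Γ) ≤ D) (hS : S ≤ D)
    (h2 : IsPGroup 2 S) : ∃ γ ∈ D, ∀ s ∈ S, γ * s * γ⁻¹ ∈ T := by
  have h3 : IsPGroup 2 (S.subgroupOf D) := h2.of_equiv (Subgroup.subgroupOfEquivOfLe hS).symm
  obtain ⟨Q, hQ⟩ := h3.exists_le_sylow
  obtain ⟨g, hg⟩ := MulAction.exists_smul_eq D Q (T.subtype hT)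
  refine ⟨g, g.2, fun s hs => ?_⟩
  have h4 : (⟨s, hS hs⟩ : D) ∈ Q := hQ (by simpa [Subgroup.mem_subgroupOf] using hs)
  have h5 : g * ⟨s, hS hs⟩ * g⁻¹ ∈ T.subtype hT := by
    rw [← hg]
    exact Subgroup.smul_mem_pointwise_smul (⟨s, hS hs⟩ : D) (MulAut.conj g) Q h4
  exact h5

theorem conj_into (T : Sylow 2 Γ) {x : Γ} (hx : TwoEl x) : ∃ γ, γ * x * γ⁻¹ ∈ T := by
  obtain ⟨γ, _, h⟩ := sylC T ⊤ (zpowers x) le_top le_top hx.zpowers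
  exact ⟨γ, h x (mem_zpowers x)⟩

theorem common (D : Subgroup Γ) {a b : Γ} (ha : a ∈ D) (hb : b ∈ D) (ha2 : TwoEl a)
    (hb2 : TwoEl b) : ∃ k ∈ D, ∃ S : Subgroup Γ, IsPGroup 2 S ∧ a ∈ S ∧ k * b * k⁻¹ ∈ S := by
  have l1 : zpowers a ≤ D := by simpa using ha
  have l2 : zpowers b ≤ D := by simpa using hb
  have h3 : IsPGroup 2 ((zpowers a).subgroupOf D) :=
    ha2.zpowers.of_equiv (Subgroup.subgroupOfEquivOfLe l1).symm
  have h4 : IsPGroup 2 ((zpowers b).subgroupOf D) :=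
    hb2.zpowers.of_equiv (Subgroup.subgroupOfEquivOfLe l2).symm
  obtain ⟨Q, hQ⟩ := h3.exists_le_sylow
  obtain ⟨R, hR⟩ := h4.exists_le_sylow
  obtain ⟨g, hg⟩ := MulAction.exists_smul_eq D R Q
  have h5 : (⟨b, hb⟩ : D) ∈ R := hR (by simp [Subgroup.mem_subgroupOf])
  have h6 : g * ⟨b, hb⟩ * g⁻¹ ∈ Q := by
    rw [← hg]
    exact Subgroup.smul_mem_pointwise_smul (⟨b, hb⟩ : D) (MulAut.conj g) R h5
  have h7 : (⟨a, ha⟩ : D) ∈ Q := hQ (by simp [Subgroup.mem_subgroupOf])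
  refine ⟨g, g.2, (Q : Subgroup D).map D.subtype, Q.2.map _, ?_, ?_⟩
  · exact ⟨_, h7, rfl⟩
  · exact ⟨_, h6, rfl⟩

/-- `u` is weakly closed. -/
def Weak (u : Γ) : Prop := ∀ S : Subgroup Γ, IsPGroup 2 S → ∀ a ∈ S, ∀ b ∈ S,
  IsConj u a → IsConj u b → a = b

theorem conj_iff {a b : Γ} : IsConj a b ↔ ∃ c, c * a * c⁻¹ = b := isConj_iff

theorem weak_of (T : Sylow 2 Γ) {u : Γ} (h : ∀ γ, γ * u * γ⁻¹ ∈ T → γ * u * γ⁻¹ = u) :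
    Weak u := by
  intro S hS a ha b hb hua hub
  obtain ⟨g, _, hg⟩ := sylC T ⊤ S le_top le_top hS
  obtain ⟨α, rfl⟩ := isConj_iff.mp hua
  obtain ⟨β, rfl⟩ := isConj_iff.mp hub
  have h1 := hg _ ha
  have h2 := hg _ hb
  have h3 := h (g * α) (by convert h1 using 1; group)
  have h4 := h (g * β) (by convert h2 using 1; group)
  have : g * (α * u * α⁻¹) * g⁻¹ = g * (β * u * β⁻¹) * g⁻¹ := by
    calc _ = g * α * u * (g * α)⁻¹ := by group
      _ = g * β * u * (g * β)⁻¹ := by rw [h3, h4]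
      _ = _ := by group
  exact mul_left_cancel (mul_right_cancel this)

theorem Weak.eq_of_mem {u : Γ} (h : Weak u) (T : Sylow 2 Γ) (hu : u ∈ T) {γ : Γ}
    (h1 : γ * u * γ⁻¹ ∈ T) : γ * u * γ⁻¹ = u :=
  h T T.2 _ h1 _ hu (isConj_iff.mpr ⟨γ, rfl⟩) (IsConj.refl u)

theorem sup_two {x y : Γ} (hx : TwoEl x) (hy : TwoEl y) (h : y * x * y⁻¹ = x⁻¹ ∨ y * x * y⁻¹ = x) :
    ∃ S : Subgroup Γ, IsPGroup 2 S ∧ x ∈ S ∧ y ∈ S := by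
  refine ⟨zpowers y ⊔ zpowers x, ?_, mem_sup_right (mem_zpowers x), mem_sup_left (mem_zpowers y)⟩
  apply IsPGroup.to_sup_of_normal_right' hy.zpowers hx.zpowers
  rw [zpowers_le]
  have : (zpowers x).map (MulAut.conj y).toMonoidHom = zpowers x := by
    rw [MonoidHom.map_zpowers]
    simp only [MulAut.conj_apply, MulEquiv.toMonoidHom_eq_coe, MonoidHom.coe_coe]
    rcases h with h | h
    · rw [h, zpowers_inv]
    · rw [h]
  rw [mem_normalizer_iff]
  intro w
  constructor
  · intro hw
    have hw2 : y * w * y⁻¹ ∈ (zpowers x).map (MulAut.conj y).toMonoidHom := ⟨w, hw, by simp⟩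
    rw [this] at hw2; exact hw2
  · intro hw
    rw [← this] at hw
    obtain ⟨w', hw', he⟩ := hw
    simp at he
    rwa [← he]

/-- commuting conjugates coincide -/
theorem Weak.comm_eq {u : Γ} (h : Weak u) (hu : TwoEl u) {a b : Γ} (ha : IsConj u a)
    (hb : IsConj u b) (hab : Commute a b) : a = b := by
  obtain ⟨α, rfl⟩ := isConj_iff.mp ha
  obtain ⟨β, rfl⟩ := isConj_iff.mp hb
  obtain ⟨S, hS, h1, h2⟩ := sup_two (hu.conj α) (hu.conj β)
    (Or.inr (by rw [← hab.eq]; group))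
  exact h S hS _ h1 _ h2 ha hb

/-- fusion control -/
theorem FC {u : Γ} (h : Weak u) (hu2 : TwoEl u) {s y g : Γ} (hs : Commute s u) (hy : Commute y u)
    (hg : g * s * g⁻¹ = y) : ∃ δ, Commute δ u ∧ δ * s * δ⁻¹ = y := by
  have h1 : u ∈ centralizer {y} := by rw [mem_centralizer_singleton_iff]; exact hy.symm.eq
  have h2 : g * u * g⁻¹ ∈ centralizer {y} := by
    rw [mem_centralizer_singleton_iff, ← hg]
    calc g * u * g⁻¹ * (g * s * g⁻¹) = g * (u * s) * g⁻¹ := by group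
      _ = g * (s * u) * g⁻¹ := by rw [hs.eq]
      _ = _ := by group
  obtain ⟨k, hk, S, hS, ha, hb⟩ := common _ h1 h2 hu2 (hu2.conj g)
  have := h S hS _ ha _ hb (IsConj.refl u) (isConj_iff.mpr ⟨k * g, by group⟩)
  rw [mem_centralizer_singleton_iff] at hk
  refine ⟨k * g, ?_, ?_⟩
  · have h5 : k * g * u * (k * g)⁻¹ = u := by
      conv_rhs => rw [this]
      group
    exact mul_inv_eq_iff_eq_mul.mp h5
  · calc k * g * s * (k * g)⁻¹ = k * (g * s * g⁻¹) * k⁻¹ := by group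
      _ = k * y * k⁻¹ := by rw [hg]
      _ = y := by rw [hk]; group

end WPf

set_option linter.unusedSectionVars false
namespace WPf
open Subgroup

variable {Γ : Type*} [Group Γ] [Finite Γ]

/-- hypotheses of the latin square argument -/
structure Lat (u : Γ) : Prop where
  weak : Weak u
  two : TwoEl u
  sq : ∀ γ, Commute γ (u ^ 2)

theorem Lat.sq_eq {u : Γ} (h : Lat u) {a : Γ} (ha : IsConj u a) : a ^ 2 = u ^ 2 := by
  obtain ⟨α, rfl⟩ := isConj_iff.mp ha
  rw [conj_pow, (h.sq α).eq]; group

theorem isConj_conj {u a : Γ} (ha : IsConj u a) (g : Γ) : IsConj u (g * a * g⁻¹) :=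
  ha.trans (isConj_iff.mpr ⟨g, rfl⟩)

theorem isConj_conj_iff {u a : Γ} (g : Γ) : IsConj u (g * a * g⁻¹) ↔ IsConj u a := by
  constructor
  · intro h
    have := isConj_conj h g⁻¹
    convert this using 1; group
  · intro h; exact isConj_conj h g

theorem Lat.inv_d {u : Γ} (h : Lat u) {μ ω : Γ} (hμ : IsConj u μ) (hω : IsConj u ω) :
    ω * (μ * ω⁻¹) * ω⁻¹ = (μ * ω⁻¹)⁻¹ := by
  have h1 : ω ^ 2 = μ ^ 2 := by rw [h.sq_eq hμ, h.sq_eq hω]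
  calc ω * (μ * ω⁻¹) * ω⁻¹ = ω * μ * (ω ^ 2)⁻¹ := by group
    _ = ω * μ * (μ ^ 2)⁻¹ := by rw [h1]
    _ = _ := by group

theorem inv_pow_d {d ω : Γ} (hd : ω * d * ω⁻¹ = d⁻¹) (k : ℕ) : d ^ k * ω * (d ^ k)⁻¹ = d ^ (2 * k) * ω := by
  have h1 : ω * d ^ k * ω⁻¹ = (d ^ k)⁻¹ := by rw [← conj_pow, hd, inv_pow]
  have h2 : ω * (d ^ k)⁻¹ * ω⁻¹ = d ^ k := by
    have := congrArg (·⁻¹) h1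
    simpa [mul_assoc] using this
  calc d ^ k * ω * (d ^ k)⁻¹ = d ^ k * (ω * (d ^ k)⁻¹ * ω⁻¹) * ω := by group
    _ = d ^ (2 * k) * ω := by rw [h2, two_mul, pow_add]

theorem Lat.odd_d {u : Γ} (h : Lat u) {μ ω : Γ} (hμ : IsConj u μ) (hω : IsConj u ω) :
    Odd (orderOf (μ * ω⁻¹)) := by
  set d := μ * ω⁻¹ with hd
  have hi : ω * d * ω⁻¹ = d⁻¹ := h.inv_d hμ hω
  obtain ⟨k, q, hq, ho, h2, _⟩ := split_order d
  obtain ⟨m, hm⟩ := hq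
  have hω2 : TwoEl ω := by
    obtain ⟨α, rfl⟩ := isConj_iff.mp hω; exact h.two.conj α
  have h3 : IsConj u (d ^ q * ω) := by
    have h4 : d ^ q * ω = d ^ m * μ * (d ^ m)⁻¹ := by
      have h5 : μ = d * ω := by rw [hd]; group
      calc d ^ q * ω = d * (d ^ (2 * m) * ω) := by rw [hm, pow_succ']; group
        _ = d * (d ^ m * ω * (d ^ m)⁻¹) := by rw [inv_pow_d hi]
        _ = d ^ m * (d * ω) * (d ^ m)⁻¹ := by
          rw [show d * (d ^ m * ω * (d ^ m)⁻¹) = (d * d ^ m) * ω * (d ^ m)⁻¹ by group,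
            ← pow_succ', pow_succ]; group
        _ = _ := by rw [← h5]
    rw [h4]; exact isConj_conj hμ _
  obtain ⟨S, hS, h4, h5⟩ := sup_two h2 hω2 (Or.inl (by rw [← conj_pow, hi, inv_pow]))
  have := h.weak S hS _ (S.mul_mem h4 h5) _ h5 h3 hω
  have h6 : d ^ q = 1 := by simpa using this
  exact Odd.of_dvd_nat ⟨m, hm⟩ (orderOf_dvd_of_pow_eq_one h6)

theorem odd_sq_inj {a b : Γ} (ha : Odd (orderOf a)) (hb : Odd (orderOf b)) (h : a ^ 2 = b ^ 2) :
    a = b := by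
  have e : ∀ c : Γ, Odd (orderOf c) → ∀ n, orderOf c ∣ n → Odd n → c = (c ^ 2) ^ ((n + 1) / 2) := by
    intro c _ n hn ho
    obtain ⟨k, hk⟩ := ho
    have : (n + 1) / 2 = k + 1 := by omega
    rw [← pow_mul, this, show 2 * (k + 1) = n + 1 by omega, pow_succ,
      orderOf_dvd_iff_pow_eq_one.mp hn, one_mul]
  have h1 := e a ha (orderOf a * orderOf b) (Dvd.intro _ rfl) (ha.mul hb)
  have h2 := e b hb (orderOf a * orderOf b) (Dvd.intro_left _ rfl) (ha.mul hb)
  exact h1.trans ((congrArg (fun y => y ^ ((orderOf a * orderOf b + 1) / 2)) h).trans h2.symm)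

theorem Lat.conj_formula {u : Γ} (h : Lat u) {μ ω : Γ} (hμ : IsConj u μ) (hω : IsConj u ω) :
    μ * ω * μ⁻¹ = (μ * ω⁻¹) ^ 2 * ω := by
  have := inv_pow_d (h.inv_d hμ hω) 1
  rw [pow_one, mul_one] at this
  rw [← this]; group

theorem Lat.inj {u : Γ} (h : Lat u) {μ ν ω : Γ} (hμ : IsConj u μ) (hν : IsConj u ν)
    (hω : IsConj u ω) (he : μ * ω * μ⁻¹ = ν * ω * ν⁻¹) : μ = ν := by
  rw [h.conj_formula hμ hω, h.conj_formula hν hω] at he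
  have := odd_sq_inj (h.odd_d hμ hω) (h.odd_d hν hω) (mul_right_cancel he)
  exact mul_right_cancel this

theorem Lat.surj {u : Γ} (h : Lat u) {ω ω' : Γ} (hω : IsConj u ω) (hω' : IsConj u ω') :
    ∃ μ, IsConj u μ ∧ μ * ω * μ⁻¹ = ω' := by
  let f : {x // IsConj u x} → {x // IsConj u x} := fun μ => ⟨μ * ω * (μ : Γ)⁻¹, isConj_conj hω _⟩
  have hf : Function.Injective f := by
    intro a b hab
    have := congrArg Subtype.val hab
    exact Subtype.ext (h.inj a.2 b.2 hω this)
  obtain ⟨μ, hμ⟩ := (Finite.injective_iff_surjective.mp hf) ⟨ω', hω'⟩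
  exact ⟨μ, μ.2, congrArg Subtype.val hμ⟩

/-- anything commuting with endpoints commutes with the midpoint -/
theorem Lat.comm_mid {u : Γ} (h : Lat u) {μ ω ω' g : Γ} (hμ : IsConj u μ) (hω : IsConj u ω)
    (he : μ * ω * μ⁻¹ = ω') (h1 : Commute g ω) (h2 : Commute g ω') : Commute g μ := by
  have : g * μ * g⁻¹ = μ := by
    apply h.inj (isConj_conj hμ g) hμ hω
    calc g * μ * g⁻¹ * ω * (g * μ * g⁻¹)⁻¹ = g * (μ * (g⁻¹ * ω * g) * μ⁻¹) * g⁻¹ := by group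
      _ = g * (μ * ω * μ⁻¹) * g⁻¹ := by
        have : g⁻¹ * ω * g = ω := by rw [mul_assoc, ← h1.eq]; group
        rw [this]
      _ = _ := by rw [he, h2.eq]; group
  exact mul_inv_eq_iff_eq_mul.mp this

/-- conjugates of `u` commuting with a set -/
def Cn (u : Γ) (S : Set Γ) : Set Γ := {ω | IsConj u ω ∧ ∀ s ∈ S, Commute s ω}

theorem Lat.PF {u : Γ} (h : Lat u) (S : Set Γ) (hS : ∀ s ∈ S, Commute s u) {v : Γ}
    (hv : Commute v u) (hX : ∀ ω ∈ Cn u S, v * ω * v⁻¹ ∈ Cn u S)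
    (hv2 : ∀ ω ∈ Cn u S, Commute (v ^ 2) ω) :
    (Cn u S).ncard = (Cn u (insert v S)).ncard * (Cn u (insert (v * u) S)).ncard := by
  classical
  have hu : IsConj u u := IsConj.refl u
  -- midpoint map
  have hm : ∀ ω : Γ, ∃ μ, IsConj u ω → IsConj u μ ∧ μ * ω * μ⁻¹ = v * ω * v⁻¹ := by
    intro ω
    by_cases hω : IsConj u ω
    · obtain ⟨μ, h1, h2⟩ := h.surj hω (isConj_conj hω v)
      exact ⟨μ, fun _ => ⟨h1, h2⟩⟩
    · exact ⟨1, fun hh => absurd hh hω⟩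
  choose m hm using hm
  have hg : ∀ μ : Γ, ∃ g, IsConj u μ → IsConj u g ∧ g * u * g⁻¹ = μ := by
    intro ω
    by_cases hω : IsConj u ω
    · obtain ⟨μ, h1, h2⟩ := h.surj hu hω
      exact ⟨μ, fun _ => ⟨h1, h2⟩⟩
    · exact ⟨1, fun hh => absurd hh hω⟩
  choose g hg using hg
  have hmX : ∀ ω ∈ Cn u S, m ω ∈ Cn u (insert v S) := by
    intro ω hω
    obtain ⟨h1, h2⟩ := hm ω hω.1
    refine ⟨h1, ?_⟩
    rintro s (rfl | hs)
    · have : s * m ω * s⁻¹ = m ω := by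
        apply h.inj (isConj_conj h1 _) h1 (isConj_conj hω.1 s)
        have e1 : m ω * (s * ω * s⁻¹) * (m ω)⁻¹ = ω := by
          rw [← h2]
          have h3 := h.sq_eq h1
          have h4 := (h.sq ω).eq
          calc m ω * (m ω * ω * (m ω)⁻¹) * (m ω)⁻¹ = (m ω) ^ 2 * ω * ((m ω) ^ 2)⁻¹ := by rw [pow_two]; group
            _ = u ^ 2 * ω * (u ^ 2)⁻¹ := by rw [h3]
            _ = ω := by rw [← h4]; group
        rw [e1]
        have h5 := (hv2 ω hω).eq
        calc s * m ω * s⁻¹ * (s * ω * s⁻¹) * (s * m ω * s⁻¹)⁻¹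
            = s * (m ω * ω * (m ω)⁻¹) * s⁻¹ := by group
          _ = s ^ 2 * ω * (s ^ 2)⁻¹ := by rw [h2, pow_two]; group
          _ = ω := by rw [h5]; group
      exact mul_inv_eq_iff_eq_mul.mp this
    · exact h.comm_mid h1 hω.1 h2 (hω.2 s hs) ((hX ω hω).2 s hs)
  have hgC : ∀ μ ∈ Cn u (insert v S), ∀ s ∈ insert v S, Commute s (g μ) := by
    intro μ hμ s hs
    obtain ⟨h1, h2⟩ := hg μ hμ.1
    refine h.comm_mid h1 hu h2 ?_ (hμ.2 s hs)
    rcases hs with rfl | hs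
    · exact hv
    · exact hS s hs
  rw [← Set.ncard_prod]
  -- the fibre condition
  have fib : ∀ μ ω, IsConj u ω → IsConj u μ → (μ * ω * μ⁻¹ = v * ω * v⁻¹ → m ω = μ) := by
    intro μ ω hω hμ he
    obtain ⟨h1, h2⟩ := hm ω hω
    exact h.inj h1 hμ hω (h2.trans he.symm)
  have key : (fun ω => (m ω, (g (m ω))⁻¹ * ω * g (m ω))) '' Cn u S =
      Cn u (insert v S) ×ˢ Cn u (insert (v * u) S) := by
    ext ⟨μ, ω'⟩
    simp only [Set.mem_image, Set.mem_prod, Prod.mk.injEq]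
    constructor
    · rintro ⟨ω, hω, rfl, rfl⟩
      have hμ := hmX ω hω
      obtain ⟨h1, h2⟩ := hm ω hω.1
      obtain ⟨h3, h4⟩ := hg (m ω) hμ.1
      refine ⟨hμ, ?_, ?_⟩
      · have := isConj_conj hω.1 (g (m ω))⁻¹
        simpa using this
      · have hvg := hgC _ hμ v (Set.mem_insert _ _)
        rintro s (rfl | hs)
        · -- (v u) commutes with g⁻¹ ω g
          have e1 : Commute ((m ω)⁻¹ * v) ω := by
            have : (m ω)⁻¹ * (v * ω * v⁻¹) * m ω = ω := by rw [← h2]; group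
            have e : (m ω)⁻¹ * v * ω * ((m ω)⁻¹ * v)⁻¹ = ω := by
              conv_rhs => rw [← this]
              group
            exact mul_inv_eq_iff_eq_mul.mp e
          have e2 : (g (m ω))⁻¹ * ((m ω)⁻¹ * v) * g (m ω) = u⁻¹ * v := by
            have a1 : (g (m ω))⁻¹ * (m ω)⁻¹ * g (m ω) = u⁻¹ := by
              have a2 : (m ω)⁻¹ = g (m ω) * u⁻¹ * (g (m ω))⁻¹ := by
                have := congrArg (·⁻¹) h4
                simpa [mul_assoc] using this.symm
              rw [a2]; group
            calc (g (m ω))⁻¹ * ((m ω)⁻¹ * v) * g (m ω)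
                = ((g (m ω))⁻¹ * (m ω)⁻¹ * g (m ω)) * ((g (m ω))⁻¹ * (v * g (m ω))) := by group
              _ = u⁻¹ * ((g (m ω))⁻¹ * (v * g (m ω))) := by rw [a1]
              _ = u⁻¹ * v := by rw [hvg.eq]; group
          have e3 : Commute (u⁻¹ * v) ((g (m ω))⁻¹ * ω * g (m ω)) := by
            rw [← e2]
            have := e1.conj (g (m ω))⁻¹
            simpa using this
          have e4 : v * u = u ^ 2 * (u⁻¹ * v) := by rw [hv.eq]; group
          rw [e4]
          exact ((h.sq _).symm).mul_left e3
        · have := hgC _ hμ s (Set.mem_insert_of_mem _ hs)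
          have h5 := hω.2 s hs
          exact ((this.inv_right.mul_right h5).mul_right this)
    · rintro ⟨hμ, hω'⟩
      obtain ⟨h3, h4⟩ := hg μ hμ.1
      have hvg := hgC _ hμ v (Set.mem_insert _ _)
      have hω : g μ * ω' * (g μ)⁻¹ ∈ Cn u S := by
        refine ⟨isConj_conj hω'.1 _, fun s hs => ?_⟩
        have := hgC _ hμ s (Set.mem_insert_of_mem _ hs)
        exact (this.mul_right (hω'.2 s (Set.mem_insert_of_mem _ hs))).mul_right this.inv_right
      have hmm : m (g μ * ω' * (g μ)⁻¹) = μ := by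
        apply fib _ _ hω.1 hμ.1
        have c1 := hω'.2 (v * u) (Set.mem_insert _ _)
        -- u ω' u⁻¹ = v⁻¹... 
        have c2 : u * ω' * u⁻¹ = v * ω' * v⁻¹ := by
          have c3 : v * (u * ω' * u⁻¹) * v⁻¹ = ω' := by
            have := c1.eq
            calc v * (u * ω' * u⁻¹) * v⁻¹ = (v * u * ω') * (v * u)⁻¹ := by group
              _ = ω' := by rw [this]; group
          have c4 : u ^ 2 * ω' * (u ^ 2)⁻¹ = ω' := by rw [← (h.sq ω').eq]; group
          have c5 : u * (v * ω' * v⁻¹) * u⁻¹ = ω' := by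
            calc u * (v * ω' * v⁻¹) * u⁻¹ = (u * v) * ω' * (u * v)⁻¹ := by group
              _ = (v * u) * ω' * (v * u)⁻¹ := by rw [hv.eq]
              _ = ω' := by rw [c1.eq]; group
          have c6 : u * (u * ω' * u⁻¹) * u⁻¹ = u * (v * ω' * v⁻¹) * u⁻¹ := by
            rw [c5]
            calc u * (u * ω' * u⁻¹) * u⁻¹ = u ^ 2 * ω' * (u ^ 2)⁻¹ := by rw [pow_two]; group
              _ = ω' := c4
          exact mul_left_cancel (mul_right_cancel c6)
        calc μ * (g μ * ω' * (g μ)⁻¹) * μ⁻¹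
            = (g μ * u * (g μ)⁻¹) * (g μ * ω' * (g μ)⁻¹) * (g μ * u * (g μ)⁻¹)⁻¹ := by rw [h4]
          _ = g μ * (u * ω' * u⁻¹) * (g μ)⁻¹ := by group
          _ = (g μ * v) * ω' * (g μ * v)⁻¹ := by rw [c2]; group
          _ = (v * g μ) * ω' * (v * g μ)⁻¹ := by rw [hvg.eq]
          _ = _ := by group
      exact ⟨_, hω, hmm, by rw [hmm]; group⟩
  rw [← key, Set.InjOn.ncard_image]
  intro a _ b _ hab
  simp only [Prod.mk.injEq] at hab
  obtain ⟨h1, h2⟩ := hab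
  rw [h1] at h2
  exact mul_left_cancel (mul_right_cancel h2)

end WPf

set_option linter.unusedSectionVars false
namespace WPf
open Subgroup commutatorElement

variable {Γ : Type*} [Group Γ] [Finite Γ]

theorem ncard_orbit (D : Subgroup Γ) (u : Γ) :
    {ω | ∃ γ ∈ D, γ * u * γ⁻¹ = ω}.ncard = (centralizer {u}).relIndex D := by
  let _ : MulAction D Γ := MulAction.compHom Γ ((MulAut.conj : Γ →* MulAut Γ).comp D.subtype)
  have hsm : ∀ (d : D) (x : Γ), d • x = d * x * (d : Γ)⁻¹ := fun d x => rfl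
  have h1 : {ω | ∃ γ ∈ D, γ * u * γ⁻¹ = ω} = MulAction.orbit D u := by
    ext ω
    simp only [Set.mem_ofPred_eq, MulAction.mem_orbit_iff, hsm]
    constructor
    · rintro ⟨γ, h, e⟩; exact ⟨⟨γ, h⟩, e⟩
    · rintro ⟨γ, e⟩; exact ⟨γ, γ.2, e⟩
  have h2 : (centralizer {u}).subgroupOf D = MulAction.stabilizer D u := by
    ext γ
    rw [mem_subgroupOf, mem_centralizer_singleton_iff, MulAction.mem_stabilizer_iff, hsm,
      mul_inv_eq_iff_eq_mul]
  rw [h1, Subgroup.relIndex, h2, MulAction.index_stabilizer]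

theorem ncard_class (u : Γ) : (Cn u ∅).ncard = (centralizer {u}).index := by
  rw [← Subgroup.relIndex_top_right, ← ncard_orbit]
  congr 1
  ext ω
  simp [Cn, isConj_iff]

theorem ncard_eq_of_conj {X Y : Set Γ} (g : Γ) (h : ∀ ω, ω ∈ X ↔ g * ω * g⁻¹ ∈ Y) :
    X.ncard = Y.ncard := by
  have : (fun ω => g * ω * g⁻¹) '' X = Y := by
    ext y
    constructor
    · rintro ⟨x, hx, rfl⟩; exact (h x).mp hx
    · intro hy
      refine ⟨g⁻¹ * y * g, (h _).mpr ?_, ?_⟩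
      · convert hy using 1; group
      · simp only; group
  rw [← this, Set.InjOn.ncard_image]
  intro a _ b _ hab
  exact mul_left_cancel (mul_right_cancel hab)

theorem commute_conj_iff {s ω g : Γ} : Commute (g * s * g⁻¹) (g * ω * g⁻¹) ↔ Commute s ω := by
  constructor
  · intro h
    have := Commute.conj h g⁻¹
    convert this using 1 <;> group
  · intro h; exact Commute.conj h g

theorem commute_of_conj {s x : Γ} (h : s * x * s⁻¹ = x) : Commute s x := mul_inv_eq_iff_eq_mul.mp h
theorem conj_of_commute {s x : Γ} (h : Commute s x) : s * x * s⁻¹ = x := by rw [h.eq]; group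

theorem mod_four (X : Set Γ) (κ x0 : Γ) (hκ : κ ^ 4 = 1) (hX : ∀ ω ∈ X, κ * ω * κ⁻¹ ∈ X)
    (hx0 : x0 ∈ X) (hc : Commute κ x0) (hfix : ∀ ω ∈ X, Commute (κ ^ 2) ω → ω = x0) :
    X.ncard % 4 = 1 := by
  classical
  by_cases hk2 : κ ^ 2 = 1
  · have : X = {x0} := by
      ext ω
      constructor
      · intro h; exact hfix ω h (by rw [hk2]; exact Commute.one_left ω)
      · rintro rfl; exact hx0
    rw [this]; simp
  have ho : orderOf κ = 4 := by
    apply orderOf_eq_prime_pow (p := 2) (n := 1)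
    · simpa using hk2
    · simpa using hκ
  let Y : Set Γ := X \ {x0}
  have hY : ∀ ω ∈ Y, κ * ω * κ⁻¹ ∈ Y := by
    rintro ω ⟨h1, h2⟩
    refine ⟨hX ω h1, ?_⟩
    intro h3
    apply h2
    have h4 : κ * ω * κ⁻¹ = κ * x0 * κ⁻¹ := by rw [conj_of_commute hc]; exact h3
    exact mul_left_cancel (mul_right_cancel h4)
  have hYn : ∀ n : ℕ, ∀ ω ∈ Y, κ ^ n * ω * (κ ^ n)⁻¹ ∈ Y := by
    intro n
    induction n with
    | zero => intro ω h; simpa using h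
    | succ n ih =>
      intro ω h
      have := hY _ (ih ω h)
      convert this using 1
      rw [pow_succ']; group
  have hYz : ∀ k ∈ zpowers κ, ∀ ω ∈ Y, k * ω * k⁻¹ ∈ Y := by
    intro k hk ω h
    obtain ⟨n, rfl⟩ := (mem_zpowers_iff_mem_range_orderOf.trans Finset.mem_image).mp hk |>.imp fun n h => h.2
    exact hYn n ω h
  let _ : MulAction (zpowers κ) Y :=
    { smul := fun k ω => ⟨k * ω * (k : Γ)⁻¹, hYz k k.2 ω ω.2⟩
      one_smul := fun ω => Subtype.ext (show (1 : Γ) * ω * (1 : Γ)⁻¹ = ω by group)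
      mul_smul := fun a b ω => Subtype.ext (show (a * b : Γ) * ω * (a * b : Γ)⁻¹ =
        a * (b * ω * (b : Γ)⁻¹) * (a : Γ)⁻¹ by group) }
  have hsm : ∀ (k : zpowers κ) (ω : Y), ((k • ω : Y) : Γ) = k * ω * (k : Γ)⁻¹ := fun _ _ => rfl
  have hst : ∀ ω : Y, MulAction.stabilizer (zpowers κ) ω = ⊥ := by
    intro ω
    rw [eq_bot_iff]
    rintro ⟨k, hk⟩ hs
    rw [MulAction.mem_stabilizer_iff] at hs
    have hs2 : Commute k (ω : Γ) := commute_of_conj (congrArg Subtype.val hs)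
    obtain ⟨n, hn, rfl⟩ := (mem_zpowers_iff_mem_range_orderOf.trans Finset.mem_image).mp hk
    rw [ho, Finset.mem_range] at hn
    have hno : ¬ Commute (κ ^ 2) (ω : Γ) := fun h => ω.2.2 (hfix _ ω.2.1 h)
    rw [mem_bot]
    ext
    simp only [OneMemClass.coe_one]
    interval_cases n
    · simp
    · exfalso; apply hno; exact (by simpa using hs2 : Commute κ (ω : Γ)).pow_left 2
    · exact absurd hs2 hno
    · exfalso; apply hno
      have := hs2.pow_left 2
      rw [← pow_mul, show 3 * 2 = 4 + 2 by norm_num, pow_add, hκ, one_mul] at this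
      exact this
  have e := Nat.card_congr (MulAction.selfEquivOrbitsQuotientProd (G := zpowers κ) (X := Y) hst)
  rw [Nat.card_prod, Nat.card_zpowers, ho] at e
  have e2 : Y.ncard = Nat.card Y := (Nat.card_coe_set_eq Y).symm
  have e3 : Y.ncard + 1 = X.ncard := Set.ncard_sdiff_singleton_add_one hx0
  rw [← e3, e2, e]; omega

/-- factorization from coprime indices -/
theorem factor {p : ℕ} [Fact p.Prime] (Q : Sylow p Γ) (u : Γ) {a : ℕ}
    (h : (Cn u ∅).ncard = p ^ a) : ∀ ω, IsConj u ω → ∃ q ∈ Q, q * u * q⁻¹ = ω := by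
  set D := centralizer {u} with hD
  have hi : D.index = p ^ a := by rw [← ncard_class, h]
  have h1 := ncard_orbit (Q : Subgroup Γ) u
  have h2 : D.relIndex Q * (Q : Subgroup Γ).index = (D ⊓ Q).index := by
    rw [← inf_relIndex_right, relIndex_mul_index inf_le_right]
  have h3 : p ^ a ∣ D.relIndex Q := by
    have h4 : p ^ a ∣ D.relIndex Q * (Q : Subgroup Γ).index := by
      rw [h2, ← hi]; exact index_dvd_of_le inf_le_left
    refine Nat.Coprime.dvd_of_dvd_mul_right ?_ h4
    apply Nat.Coprime.pow_left
    exact ((Fact.out : p.Prime).coprime_iff_not_dvd).mpr Q.not_dvd_index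
  have h5 : p ^ a ≤ D.relIndex Q := Nat.le_of_dvd (Nat.pos_of_ne_zero (Subgroup.index_ne_zero_of_finite)) h3
  have h6 : {ω | ∃ γ ∈ (Q : Subgroup Γ), γ * u * γ⁻¹ = ω} = Cn u ∅ := by
    apply Set.eq_of_subset_of_ncard_le
    · rintro ω ⟨γ, _, e⟩; exact ⟨isConj_iff.mpr ⟨γ, e⟩, by simp⟩
    · rw [h1, h]; exact h5
    · exact Set.toFinite _
  intro ω hω
  have : ω ∈ Cn u ∅ := ⟨hω, by simp⟩
  rw [← h6] at this
  exact this

/-- closure of the odd order elements -/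
def Rn (N : Subgroup Γ) : Subgroup Γ := closure {x | x ∈ N ∧ Odd (orderOf x)}

theorem Rn_le (N : Subgroup Γ) : Rn N ≤ N := by
  rw [Rn, closure_le]; exact fun x hx => hx.1

theorem mem_Rn {N : Subgroup Γ} {x : Γ} (hx : x ∈ N) (ho : Odd (orderOf x)) : x ∈ Rn N :=
  subset_closure ⟨hx, ho⟩

theorem orderOf_conj' (g x : Γ) : orderOf (g * x * g⁻¹) = orderOf x := by
  simpa using (MulAut.conj g : Γ ≃* Γ).orderOf_eq x

theorem Rn_normal (N : Subgroup Γ) (hN : N.Normal) : (Rn N).Normal := by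
  constructor
  intro n hn g
  induction hn using closure_induction with
  | mem x hx =>
    exact mem_Rn (hN.conj_mem x hx.1 g) (by rw [orderOf_conj']; exact hx.2)
  | one => simp
  | mul x y _ _ h1 h2 =>
    have := mul_mem h1 h2
    convert this using 1; group
  | inv x _ h => 
    have := inv_mem h
    convert this using 1; group

theorem Rn_bot {N : Subgroup Γ} (h : Rn N = ⊥) : IsPGroup 2 N := by
  rintro ⟨x, hx⟩
  obtain ⟨k, q, hq, ho, h2, h3⟩ := split_order x
  have h4 : x ^ 2 ^ k ∈ Rn N := mem_Rn (N.pow_mem hx _) h3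
  rw [h, mem_bot] at h4
  exact ⟨k, Subtype.ext h4⟩

/-- In an abelian group, products of odd order elements are odd. So homs kill. -/
theorem Rn_hom (N : Subgroup Γ) {C : Type*} [CommGroup C] [Finite C] (f : Rn N →* C) (x : Rn N) :
    Odd (orderOf (f x)) := by
  obtain ⟨x, hx⟩ := x
  refine closure_induction (k := {x | x ∈ N ∧ Odd (orderOf x)})
    (p := fun y (hy : y ∈ Rn N) => Odd (orderOf (f (⟨y, hy⟩ : Rn N)))) ?_ ?_ ?_ ?_ hx
  · intro y hy
    refine Odd.of_dvd_nat hy.2 ((orderOf_map_dvd f _).trans ?_)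
    rw [← Subgroup.orderOf_coe]
  · have : f (1 : Rn N) = 1 := map_one f
    have h2 : Odd (orderOf (f (1 : Rn N))) := by rw [this]; simp
    exact h2
  · intro y w hy hw h1 h2
    have : f ((⟨y, hy⟩ : Rn N) * ⟨w, hw⟩) = f ⟨y, hy⟩ * f ⟨w, hw⟩ := map_mul f _ _
    have h3 : Odd (orderOf (f ((⟨y, hy⟩ : Rn N) * ⟨w, hw⟩))) := by
      rw [this]
      refine Odd.of_dvd_nat (h1.mul h2) ?_
      apply orderOf_dvd_of_pow_eq_one
      rw [mul_pow, pow_mul, pow_orderOf_eq_one, one_pow, one_mul,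
        mul_comm (orderOf _) (orderOf _), pow_mul, pow_orderOf_eq_one, one_pow]
    exact h3
  · intro y hy h
    have : f ((⟨y, hy⟩ : Rn N)⁻¹) = (f ⟨y, hy⟩)⁻¹ := map_inv f _
    have h3 : Odd (orderOf (f ((⟨y, hy⟩ : Rn N)⁻¹))) := by rw [this, orderOf_inv]; exact h
    exact h3

theorem Rn_hom_two (N : Subgroup Γ) {C : Type*} [CommGroup C] [Finite C] (f : Rn N →* C) (x : Rn N)
    (hx : TwoEl (f x)) : f x = 1 :=
  two_odd hx (Rn_hom N f x) (pow_orderOf_eq_one _)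

/-- Sylow of normal subgroup -/
theorem sylow_normal (T : Sylow 2 Γ) (R : Subgroup Γ) (hR : R.Normal) :
    ∃ S : Sylow 2 R, (S : Subgroup R) = (T : Subgroup Γ).subgroupOf R := by
  have h2 : IsPGroup 2 ((T : Subgroup Γ).subgroupOf R) :=
    T.2.comap_of_injective R.subtype Subtype.coe_injective
  obtain ⟨S, hS⟩ := h2.exists_le_sylow
  refine ⟨S, le_antisymm ?_ hS⟩
  obtain ⟨γ, _, hγ⟩ := sylC T ⊤ ((S : Subgroup R).map R.subtype) le_top le_top (S.2.map _)
  -- cardinalities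
  have hc : Nat.card S ≤ Nat.card ((T : Subgroup Γ).subgroupOf R) := by
    let F : S → (T : Subgroup Γ).subgroupOf R := fun s =>
      ⟨⟨γ * (s : R) * γ⁻¹, hR.conj_mem _ (s : R).2 γ⟩, hγ _ ⟨s, s.2, rfl⟩⟩
    apply Nat.card_le_card_of_injective F
    intro a b hab
    have : γ * ((a : R) : Γ) * γ⁻¹ = γ * ((b : R) : Γ) * γ⁻¹ :=
      congrArg (fun y : (T : Subgroup Γ).subgroupOf R => ((y : R) : Γ)) hab
    exact Subtype.ext (Subtype.ext (mul_left_cancel (mul_right_cancel this)))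
  exact (Subgroup.eq_of_le_of_card_ge hS hc).symm.le

/-- transfer argument: no abelian Sylow -/
theorem transfer_arg (T : Sylow 2 Γ) (N : Subgroup Γ) (hN : N.Normal) (z : Γ) (hz : z ≠ 1)
    (hz2 : z ^ 2 = 1) (hzR : z ∈ Rn N) (_hzT : z ∈ T)
    (hw : ∀ γ ∈ Rn N, γ * z * γ⁻¹ ∈ T → γ * z * γ⁻¹ = z)
    (hab : ∀ x ∈ T, ∀ y ∈ T, x ∈ Rn N → y ∈ Rn N → Commute x y) : False := by
  obtain ⟨S, hS⟩ := sylow_normal T (Rn N) (Rn_normal N hN)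
  have hmem : ∀ x : Rn N, x ∈ (S : Subgroup (Rn N)) ↔ (x : Γ) ∈ T := by
    intro x; rw [hS, mem_subgroupOf]; rfl
  let _ : CommGroup (S : Subgroup (Rn N)) :=
    { (inferInstance : Group (S : Subgroup (Rn N))) with
      mul_comm := fun a b => by
        ext
        exact hab _ ((hmem _).mp a.2) _ ((hmem _).mp b.2) (a : Rn N).2 (b : Rn N).2 }
  have key := MonoidHom.transfer_eq_pow (H := (S : Subgroup (Rn N)))
    (MonoidHom.id (S : Subgroup (Rn N))) ⟨z, hzR⟩ (by
      intro k g₀ hk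
      rcases Nat.even_or_odd k with he | ho
      · obtain ⟨j, rfl⟩ := he
        have : (⟨z, hzR⟩ : Rn N) ^ (j + j) = 1 := by
          ext; simp only [SubmonoidClass.coe_pow, OneMemClass.coe_one]
          rw [← two_mul, pow_mul, hz2, one_pow]
        rw [this]; group
      · obtain ⟨j, rfl⟩ := ho
        have : (⟨z, hzR⟩ : Rn N) ^ (2 * j + 1) = ⟨z, hzR⟩ := by
          ext; simp only [SubmonoidClass.coe_pow]
          rw [pow_succ, pow_mul, hz2, one_pow, one_mul]
        rw [this] at hk ⊢
        rw [hmem] at hk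
        ext
        have := hw (g₀⁻¹ : Rn N) (g₀⁻¹ : Rn N).2 (by simpa using hk)
        simpa using this)
  have h1 := Rn_hom_two N (MonoidHom.transfer (MonoidHom.id (S : Subgroup (Rn N)))) ⟨z, hzR⟩
    (S.2 _)
  rw [key] at h1
  have h2 : z ^ (S : Subgroup (Rn N)).index = 1 := by
    have := congrArg (fun y : (S : Subgroup (Rn N)) => ((y : Rn N) : Γ)) h1
    simpa using this
  have h3 : Odd (S : Subgroup (Rn N)).index := by
    rw [← Nat.not_even_iff_odd, even_iff_two_dvd]; exact S.not_dvd_index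
  exact hz (two_odd ⟨1, by simpa using hz2⟩ h3 h2)

/-- focal subgroup argument -/
theorem focal_arg (T : Sylow 2 Γ) (N A : Subgroup Γ) (hN : N.Normal)
    (hA : ∀ x ∈ T, ∀ y ∈ T, x ∈ N → y ∈ N → x ∉ A → y ∉ A → x * y⁻¹ ∈ A)
    (hne : ∃ v ∈ T, v ∈ Rn N ∧ v ∉ A) :
    ∃ s ∈ T, s ∈ N ∧ s ∉ A ∧ ∃ γ, γ * s * γ⁻¹ ∈ A ∧ γ * s * γ⁻¹ ∈ T := by
  by_contra hcon
  push Not at hcon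
  obtain ⟨v, hvT, hvR, hvA⟩ := hne
  obtain ⟨S, hS⟩ := sylow_normal T (Rn N) (Rn_normal N hN)
  have hmem : ∀ x : Rn N, x ∈ (S : Subgroup (Rn N)) ↔ (x : Γ) ∈ T := by
    intro x; rw [hS, mem_subgroupOf]; rfl
  have hv1 : (⟨v, hvR⟩ : Rn N) ∈ commutator (Rn N) := by
    rw [← Abelianization.ker_of, MonoidHom.mem_ker]
    apply Rn_hom_two
    obtain ⟨k, hk⟩ := TwoEl.of_mem T.2 hvT
    refine ⟨k, ?_⟩
    rw [← map_pow]
    have : (⟨v, hvR⟩ : Rn N) ^ 2 ^ k = 1 := Subtype.ext (by simpa using hk)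
    rw [this, map_one]
  have hv2 : (⟨v, hvR⟩ : Rn N) ∈ (S : Subgroup (Rn N)).focalSubgroup := by
    rw [← Subgroup.commutator_inf_eq_focalSubgroup]
    exact ⟨hv1, (hmem _).mpr hvT⟩
  have hle : (S : Subgroup (Rn N)).focalSubgroup ≤ A.subgroupOf (Rn N) := by
    rw [focalSubgroup_def, closure_le]
    rintro g ⟨hg, x, hx, w, rfl⟩
    rw [SetLike.mem_coe, mem_subgroupOf]
    rw [hmem] at hx
    rw [hmem] at hg
    have hxN := Rn_le N x.2
    have e : ((⁅x, w⁆ : Rn N) : Γ) = (x : Γ) * ((w : Γ) * x * (w : Γ)⁻¹)⁻¹ := by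
      simp [commutatorElement_def, mul_assoc]
    have hyT : ((w : Γ) * x * (w : Γ)⁻¹) ∈ T := by
      rw [e] at hg
      have := (T : Subgroup Γ).mul_mem ((T : Subgroup Γ).inv_mem hg) hx
      convert! this using 1; group
    have hyN := hN.conj_mem _ hxN (w : Γ)
    rw [e]
    by_cases h1 : (x : Γ) ∈ A
    · by_cases h2 : ((w : Γ) * x * (w : Γ)⁻¹) ∈ A
      · exact A.mul_mem h1 (A.inv_mem h2)
      · exfalso
        refine hcon _ hyT hyN h2 (w : Γ)⁻¹ ?_ ?_
        · convert h1 using 1; group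
        · convert hx using 1; group
    · by_cases h2 : ((w : Γ) * x * (w : Γ)⁻¹) ∈ A
      · exact absurd hyT (hcon _ hx hxN h1 _ h2)
      · exact hA _ hx _ hyT hxN hyN h1 h2
  exact hvA (hle hv2)

/-- nontrivial normal subgroups meeting T meet its centre -/
theorem meet_center (T : Sylow 2 Γ) (R : Subgroup Γ) (hR : R.Normal) (he : 2 ∣ Nat.card R) :
    ∃ w ∈ T, w ∈ R ∧ w ≠ 1 ∧ ∀ x ∈ T, Commute x w := by
  obtain ⟨r, hr⟩ := exists_prime_orderOf_dvd_card' (G := R) 2 he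
  have hr2 : (r : Γ) ^ 2 = 1 := by
    have := pow_orderOf_eq_one r
    rw [hr] at this
    simpa [Subtype.ext_iff] using this
  have hr1 : (r : Γ) ≠ 1 := by
    intro h
    have : r = 1 := Subtype.ext h
    rw [this] at hr; simp at hr
  obtain ⟨γ, hγ⟩ := conj_into T (x := (r : Γ)) ⟨1, by simpa using hr2⟩
  set U : Subgroup T := R.subgroupOf T with hU
  have : U.Normal := by
    constructor
    intro n hn g
    rw [hU, mem_subgroupOf] at hn ⊢
    exact hR.conj_mem _ hn g
  have hnt : U ≠ ⊥ := by
    intro h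
    have : (⟨γ * r * γ⁻¹, hγ⟩ : T) ∈ U := by
      rw [hU, mem_subgroupOf]; exact hR.conj_mem _ r.2 γ
    rw [h, mem_bot] at this
    have h2 : γ * r * γ⁻¹ = 1 := congrArg Subtype.val this
    apply hr1
    have := conj_eq_one_iff.mp h2
    exact this
  have : Finite T := inferInstance
  let _ : MulAction T U :=
    { smul := fun g x => ⟨g * x * g⁻¹, Subgroup.Normal.conj_mem inferInstance _ x.2 g⟩
      one_smul := fun x => Subtype.ext (show (1 : T) * x * (1 : T)⁻¹ = x by group)
      mul_smul := fun a b x => Subtype.ext (show (a * b) * x * (a * b)⁻¹ =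
        a * (b * x * b⁻¹) * a⁻¹ by group) }
  have hsm : ∀ (g : T) (x : U), ((g • x : U) : T) = g * x * g⁻¹ := fun _ _ => rfl
  have hpU : IsPGroup 2 U := T.2.to_subgroup U
  have hdvd : 2 ∣ Nat.card U := by
    obtain ⟨n, hn⟩ := IsPGroup.iff_card.mp hpU
    rcases n with _ | n
    · exfalso; apply hnt; exact Subgroup.card_eq_one.mp (by simpa using hn)
    · rw [hn]; exact dvd_pow_self 2 (by omega)
  obtain ⟨w, hw, hne⟩ := T.2.exists_fixed_point_of_prime_dvd_card_of_fixed_point U hdvd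
    (a := (1 : U)) (by intro g; ext; simp [hsm])
  refine ⟨((w : T) : Γ), (w : T).2, w.2, ?_, ?_⟩
  · intro h
    apply hne
    ext; simpa using h.symm
  · intro x hx
    have h1 := hw ⟨x, hx⟩
    have h2 := congrArg (fun y : U => ((y : T) : Γ)) h1
    exact commute_of_conj h2

end WPf

set_option linter.unusedSectionVars false
set_option linter.unusedVariables false
namespace WPf
open Subgroup

/-- The configuration: `Γ = G⟨f⟩` with `f` centralizing a Sylow 2-subgroup. -/
structure MD (Γ : Type*) [Group Γ] where
  G : Subgroup Γ
  T : Sylow 2 Γ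
  f : Γ
  A : Subgroup Γ
  t : Γ
  κ : Γ
  hG : G.Normal
  hf : f ∈ T
  hfT : ∀ x ∈ T, Commute f x
  hgen : ∀ γ, ∃ g ∈ G, ∃ i : ℕ, γ = g * f ^ i
  hAG : ∀ x ∈ A, x ∈ G
  hAT : ∀ x ∈ A, x ∈ T
  hAab : ∀ a ∈ A, ∀ b ∈ A, Commute a b
  hA2 : ∀ x ∈ G, x ∈ T → ∀ y ∈ G, y ∈ T → x ∉ A → y ∉ A → x * y ∈ A
  htG : t ∈ G
  htT : t ∈ T
  htA : t ∉ A
  hκA : κ ∈ A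
  hκ4 : κ ^ 4 = 1
  hκ2 : κ ^ 2 ≠ 1
  hκt : t * κ ^ 2 * t⁻¹ ≠ κ ^ 2
  hinv : ∀ x ∈ A, x ^ 2 = 1 → x = 1 ∨ x = κ ^ 2 ∨ x = t * κ ^ 2 * t⁻¹ ∨
    x = κ ^ 2 * (t * κ ^ 2 * t⁻¹)
  hO : ∀ N : Subgroup Γ, N.Normal → N ≤ G → ¬ 2 ∣ Nat.card N → N = ⊥
  hidx : (T : Subgroup Γ).index ≤ 225
  hCol : ∀ p : ℕ, p.Prime → Odd p → ∃ Q : Sylow p Γ, ∃ y ∈ G, ∀ q ∈ Q, Commute (f * y) q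

variable {Γ : Type*} [Group Γ] [Finite Γ]

namespace MD
variable (d : MD Γ)

def e1 : Γ := d.κ ^ 2
def κ' : Γ := d.t * d.κ * d.t⁻¹
def e2 : Γ := d.t * d.κ ^ 2 * d.t⁻¹
def z : Γ := d.e1 * d.e2
def ι : Γ := d.κ * d.κ'

theorem mulT {x y : Γ} (hx : x ∈ d.T) (hy : y ∈ d.T) : x * y ∈ d.T := (d.T : Subgroup Γ).mul_mem hx hy
theorem invT {x : Γ} (hx : x ∈ d.T) : x⁻¹ ∈ d.T := (d.T : Subgroup Γ).inv_mem hx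
theorem powT {x : Γ} (hx : x ∈ d.T) (n : ℕ) : x ^ n ∈ d.T := (d.T : Subgroup Γ).pow_mem hx n
theorem conjT {x y : Γ} (hx : x ∈ d.T) (hy : y ∈ d.T) : y * x * y⁻¹ ∈ d.T :=
  d.mulT (d.mulT hy hx) (d.invT hy)
theorem twoT {x : Γ} (hx : x ∈ d.T) : TwoEl x := TwoEl.of_mem d.T.2 hx
theorem conjG {x : Γ} (hx : x ∈ d.G) (g : Γ) : g * x * g⁻¹ ∈ d.G := d.hG.conj_mem x hx g

/-- abelian quotient -/
theorem comG (a b : Γ) : a * b * a⁻¹ * b⁻¹ ∈ d.G := by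
  have := d.hG
  rw [← QuotientGroup.eq_one_iff]
  have key : ∀ x : Γ, ∃ i : ℕ, ((x : Γ) : Γ ⧸ d.G) = ((d.f : Γ) : Γ ⧸ d.G) ^ i := by
    intro x
    obtain ⟨g, hg, i, rfl⟩ := d.hgen x
    refine ⟨i, ?_⟩
    rw [QuotientGroup.mk_mul, (QuotientGroup.eq_one_iff g).mpr hg, one_mul, QuotientGroup.mk_pow]
  obtain ⟨i, hi⟩ := key a
  obtain ⟨j, hj⟩ := key b
  simp only [QuotientGroup.mk_mul, QuotientGroup.mk_inv, hi, hj]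
  have : Commute (((d.f : Γ) : Γ ⧸ d.G) ^ i) (((d.f : Γ) : Γ ⧸ d.G) ^ j) :=
    (Commute.refl _).pow_pow i j
  rw [this.eq]; group

/-- elements of T -/
theorem memT {x : Γ} (hx : x ∈ d.T) : ∃ p ∈ d.G, p ∈ d.T ∧ ∃ i : ℕ, x = p * d.f ^ i := by
  obtain ⟨g, hg, i, rfl⟩ := d.hgen x
  refine ⟨g, hg, ?_, i, rfl⟩
  have := d.mulT hx (d.invT (d.powT d.hf i))
  convert! this using 1; group

theorem commT {x : Γ} (hx : x ∈ d.T) (h : ∀ p ∈ d.G, p ∈ d.T → Commute p x) :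
    ∀ y ∈ d.T, Commute y x := by
  intro y hy
  obtain ⟨p, hp, hpT, i, rfl⟩ := d.memT hy
  exact (h p hp hpT).mul_left ((d.hfT x hx).pow_left i)

theorem e1A : d.e1 ∈ d.A := d.A.pow_mem d.hκA 2

theorem normA {p x : Γ} (hp : p ∈ d.G) (hpT : p ∈ d.T) (hx : x ∈ d.A) : p * x * p⁻¹ ∈ d.A := by
  by_cases h : p ∈ d.A
  · exact d.A.mul_mem (d.A.mul_mem h hx) (d.A.inv_mem h)
  · apply d.hA2
    · exact d.G.mul_mem hp (d.hAG x hx)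
    · exact d.mulT hpT (d.hAT x hx)
    · exact d.G.inv_mem hp
    · exact d.invT hpT
    · intro h2; apply h
      have := d.A.mul_mem h2 (d.A.inv_mem hx)
      simpa using this
    · intro h2; apply h; simpa using d.A.inv_mem h2

theorem κ'A : d.κ' ∈ d.A := d.normA d.htG d.htT d.hκA
theorem e2A : d.e2 ∈ d.A := d.normA d.htG d.htT d.e1A
theorem zA : d.z ∈ d.A := d.A.mul_mem d.e1A d.e2A
theorem ιA : d.ι ∈ d.A := d.A.mul_mem d.hκA d.κ'A
theorem κ'sq : d.κ' ^ 2 = d.e2 := by rw [κ', e2, conj_pow]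
theorem e1sq : d.e1 ^ 2 = 1 := by rw [e1, ← pow_mul]; exact d.hκ4
theorem e2sq : d.e2 ^ 2 = 1 := by
  rw [e2, conj_pow, ← pow_mul, d.hκ4]; simp
theorem ce : Commute d.e1 d.e2 := d.hAab _ d.e1A _ d.e2A
theorem zsq : d.z ^ 2 = 1 := by rw [z, d.ce.mul_pow, e1sq, e2sq, one_mul]
theorem ιsq : d.ι ^ 2 = d.z := by
  rw [ι, (d.hAab _ d.hκA _ d.κ'A).mul_pow, κ'sq]; rfl
theorem e12 : d.e1 ≠ d.e2 := fun h => d.hκt h.symm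
theorem e1ne : d.e1 ≠ 1 := d.hκ2
theorem e1inv : d.e1⁻¹ = d.e1 := by
  rw [inv_eq_iff_mul_eq_one, ← pow_two]; exact d.e1sq
theorem e2inv : d.e2⁻¹ = d.e2 := by
  rw [inv_eq_iff_mul_eq_one, ← pow_two]; exact d.e2sq
theorem zne : d.z ≠ 1 := by
  intro h; apply d.e12
  have := eq_inv_of_mul_eq_one_left h
  rw [this, e2inv]
theorem e2ne : d.e2 ≠ 1 := by
  intro h
  rw [e2] at h
  exact d.hκ2 (by simpa using h)
theorem ze1 : d.z ≠ d.e1 := by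
  intro h; rw [z] at h; exact d.e2ne (by simpa using h)
theorem ze2 : d.z ≠ d.e2 := by
  intro h; rw [z] at h; exact d.e1ne (by simpa using h)
theorem e1z : d.e1 * d.z = d.e2 := by
  rw [z, ← mul_assoc, ← pow_two, e1sq, one_mul]
theorem zinv : d.z⁻¹ = d.z := by
  rw [inv_eq_iff_mul_eq_one, ← pow_two]; exact d.zsq

/-- outside elements are `a t` with `a` in `A` -/
theorem outA {v : Γ} (hv : v ∈ d.G) (hvT : v ∈ d.T) (hvA : v ∉ d.A) : ∃ a ∈ d.A, v = a * d.t := by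
  refine ⟨v * d.t⁻¹, ?_, by group⟩
  apply d.hA2 v hv hvT _ (d.G.inv_mem d.htG) (d.invT d.htT) hvA
  intro h; exact d.htA (by simpa using d.A.inv_mem h)

theorem sqA {v : Γ} (hv : v ∈ d.G) (hvT : v ∈ d.T) : v ^ 2 ∈ d.A := by
  by_cases h : v ∈ d.A
  · exact d.A.pow_mem h 2
  · rw [pow_two]; exact d.hA2 v hv hvT v hv hvT h h

theorem out_conj {v x : Γ} (hv : v ∈ d.G) (hvT : v ∈ d.T) (hvA : v ∉ d.A) (hx : x ∈ d.A) :
    v * x * v⁻¹ = d.t * x * d.t⁻¹ := by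
  obtain ⟨a, ha, rfl⟩ := d.outA hv hvT hvA
  have h1 := d.hAab a ha _ (d.normA d.htG d.htT hx)
  have := conj_of_commute h1
  rw [← this]
  conv_rhs => rw [this, ← this]
  group

theorem te1 : d.t * d.e1 * d.t⁻¹ = d.e2 := rfl
theorem te2 : d.t * d.e2 * d.t⁻¹ = d.e1 := by
  have h := d.hAab _ (d.sqA d.htG d.htT) _ d.e1A
  have := conj_of_commute h
  conv_rhs => rw [← this]
  rw [← te1, pow_two]; group
theorem tz : d.t * d.z * d.t⁻¹ = d.z := by
  calc d.t * d.z * d.t⁻¹ = (d.t * d.e1 * d.t⁻¹) * (d.t * d.e2 * d.t⁻¹) := by rw [z]; group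
    _ = d.z := by rw [te1, te2, z, d.ce.eq]
theorem tκ' : d.t * d.κ' * d.t⁻¹ = d.κ := by
  have h := d.hAab _ (d.sqA d.htG d.htT) _ d.hκA
  have := conj_of_commute h
  conv_rhs => rw [← this]
  rw [κ', pow_two]; group
theorem tι : d.t * d.ι * d.t⁻¹ = d.ι := by
  calc d.t * d.ι * d.t⁻¹ = (d.t * d.κ * d.t⁻¹) * (d.t * d.κ' * d.t⁻¹) := by rw [ι]; group
    _ = d.ι := by rw [tκ', ι, ← (d.hAab _ d.hκA _ d.κ'A).eq.symm]; rfl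

/-- membership in the centre of `T` for elements of `A` -/
theorem cenA {x v : Γ} (hx : x ∈ d.A) (hv : v ∈ d.G) (hvT : v ∈ d.T) (hvA : v ∉ d.A)
    (h : Commute v x) : ∀ y ∈ d.T, Commute y x := by
  apply d.commT (d.hAT x hx)
  intro p hp hpT
  by_cases hpA : p ∈ d.A
  · exact d.hAab p hpA x hx
  · apply commute_of_conj
    rw [d.out_conj hp hpT hpA hx, ← d.out_conj hv hvT hvA hx, conj_of_commute h]

theorem cen_t {x : Γ} (hx : x ∈ d.A) (h : Commute d.t x) : ∀ y ∈ d.T, Commute y x :=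
  d.cenA hx d.htG d.htT d.htA h

theorem zcen : ∀ y ∈ d.T, Commute y d.z := d.cen_t d.zA (commute_of_conj d.tz)
theorem ιcen : ∀ y ∈ d.T, Commute y d.ι := d.cen_t d.ιA (commute_of_conj d.tι)

theorem e1not : ¬ Commute d.t d.e1 := fun h => d.e12 (by rw [← d.te1, conj_of_commute h])

/-- central in P elements are in A -/
theorem cen_mem {x : Γ} (hx : x ∈ d.G) (hxT : x ∈ d.T) (h : Commute x d.e1) : x ∈ d.A := by
  by_contra hA
  have := d.out_conj hx hxT hA d.e1A
  rw [conj_of_commute h, te1] at this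
  exact d.e12 this

theorem cen_inv {x : Γ} (hx : x ∈ d.A) (h2 : x ^ 2 = 1) (h : Commute d.t x) : x = 1 ∨ x = d.z := by
  rcases d.hinv x hx h2 with h1 | h1 | h1 | h1
  · exact Or.inl h1
  · change x = d.e1 at h1; rw [h1] at h; exact absurd h d.e1not
  · exfalso
    change x = d.e2 at h1
    have := conj_of_commute h
    rw [h1, te2] at this; exact d.e12 this
  · exact Or.inr h1

theorem inv_cases {x : Γ} (hx : x ∈ d.A) (h2 : x ^ 2 = 1) : x = 1 ∨ x = d.e1 ∨ x = d.e2 ∨ x = d.z :=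
  d.hinv x hx h2

/-- square roots of central elements -/
theorem sqrt_cen {y : Γ} (hy : y ∈ d.A) (h : Commute d.t (y ^ 2)) :
    Commute d.t y ∨ Commute d.t (y * d.e1) := by
  set w := d.t * y * d.t⁻¹ * y⁻¹ with hw
  have hy' := d.normA d.htG d.htT hy
  have hwA : w ∈ d.A := d.A.mul_mem hy' (d.A.inv_mem hy)
  have hw2 : w ^ 2 = 1 := by
    rw [hw, (d.hAab _ hy' _ (d.A.inv_mem hy)).mul_pow, conj_pow, conj_of_commute h]; group
  have htw : Commute d.t w := by
    apply commute_of_conj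
    have h1 : d.t * (d.t * y * d.t⁻¹) * d.t⁻¹ = y := by
      have := conj_of_commute (d.hAab _ (d.sqA d.htG d.htT) _ hy)
      conv_rhs => rw [← this]
      rw [pow_two]; group
    have h2 : w⁻¹ = w := by rw [inv_eq_iff_mul_eq_one, ← pow_two, hw2]
    conv_rhs => rw [← h2]
    calc d.t * w * d.t⁻¹ = (d.t * (d.t * y * d.t⁻¹) * d.t⁻¹) * (d.t * y * d.t⁻¹)⁻¹ := by rw [hw]; group
      _ = w⁻¹ := by rw [h1, hw]; group
  rcases d.cen_inv hwA hw2 htw with h1 | h1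
  · left; apply commute_of_conj
    rw [hw] at h1; exact mul_inv_eq_one.mp h1
  · right; apply commute_of_conj
    have h3 : d.t * y * d.t⁻¹ = d.z * y := by rw [← h1, hw]; group
    calc d.t * (y * d.e1) * d.t⁻¹ = (d.t * y * d.t⁻¹) * (d.t * d.e1 * d.t⁻¹) := by group
      _ = d.z * y * d.e2 := by rw [h3, te1]
      _ = y * (d.z * d.e2) := by rw [(d.hAab _ d.zA _ hy).eq, mul_assoc]
      _ = y * d.e1 := by rw [z, mul_assoc, ← pow_two, e2sq, mul_one]

theorem F1 {j : Γ} (h : ∀ a ∈ d.A, j * a * j⁻¹ ∈ d.T) :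
    ∀ a, a ∈ d.A ↔ j * a * j⁻¹ ∈ d.A := by
  have hG : ∀ a ∈ d.A, j * a * j⁻¹ ∈ d.G := fun a ha => d.conjG (d.hAG a ha) j
  have key : ∀ a ∈ d.A, j * a * j⁻¹ ∈ d.A := by
    intro a ha
    by_contra hv
    have e : ∀ k ∈ d.A, (k ^ 2) ^ 2 = 1 → k ^ 2 ≠ 1 → j * k ^ 2 * j⁻¹ = d.z := by
      intro k hk hk2 hk1
      have h1 : j * k ^ 2 * j⁻¹ ∈ d.A := by
        rw [← conj_pow]; exact d.sqA (hG k hk) (h k hk)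
      have h2 : Commute (j * a * j⁻¹) (j * k ^ 2 * j⁻¹) :=
        commute_conj_iff.mpr (d.hAab a ha _ (d.A.pow_mem hk 2))
      have h3 := d.cenA h1 (hG a ha) (h a ha) hv h2
      rcases d.cen_inv h1 (by rw [conj_pow, hk2]; simp) (h3 d.t d.htT) with h4 | h4
      · exact absurd (conj_eq_one_iff.mp h4) hk1
      · exact h4
    have h1 := e d.κ d.hκA d.e1sq d.hκ2
    have h2 := e d.κ' d.κ'A (by rw [d.κ'sq]; exact d.e2sq) (by rw [d.κ'sq]; exact d.e2ne)
    rw [← h2] at h1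
    have h3 := mul_left_cancel (mul_right_cancel h1)
    rw [d.κ'sq] at h3
    exact d.e12 h3
  intro a
  refine ⟨key a, fun ha => ?_⟩
  -- finiteness
  let F : d.A → d.A := fun x => ⟨j * x * j⁻¹, key x x.2⟩
  have hF : Function.Injective F := by
    intro x y hxy
    have := congrArg Subtype.val hxy
    exact Subtype.ext (mul_left_cancel (mul_right_cancel this))
  obtain ⟨x, hx⟩ := Finite.injective_iff_surjective.mp hF ⟨_, ha⟩
  have := congrArg Subtype.val hx
  have h2 : (x : Γ) = a := mul_left_cancel (mul_right_cancel this)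
  rw [← h2]; exact x.2

end MD
end WPf

set_option linter.unusedSectionVars false
set_option linter.unusedVariables false
namespace WPf
open Subgroup
variable {Γ : Type*} [Group Γ] [Finite Γ]

namespace MD
variable (d : MD Γ)

/-- the maximal abelian subgroup of `T` above `A` -/
def B : Subgroup Γ := (d.T : Subgroup Γ) ⊓ centralizer (d.A : Set Γ)
/-- the normalizer of the pair -/
def M : Subgroup Γ := normalizer (d.A : Set Γ) ⊓ normalizer (d.B : Set Γ)

theorem mem_B {x : Γ} : x ∈ d.B ↔ x ∈ d.T ∧ ∀ a ∈ d.A, Commute x a := by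
  rw [B, mem_inf, mem_centralizer_iff]
  exact and_congr Iff.rfl ⟨fun h a ha => (h a ha).symm, fun h a ha => (h a ha).symm⟩

theorem mem_M {x : Γ} : x ∈ d.M ↔ (∀ a, a ∈ d.A ↔ x * a * x⁻¹ ∈ d.A) ∧
    (∀ a, a ∈ d.B ↔ x * a * x⁻¹ ∈ d.B) := by
  rw [M, mem_inf, mem_normalizer_iff, mem_normalizer_iff]

theorem AB {x : Γ} (hx : x ∈ d.A) : x ∈ d.B := d.mem_B.mpr ⟨d.hAT x hx, fun a ha => d.hAab x hx a ha⟩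
theorem fB : d.f ∈ d.B := d.mem_B.mpr ⟨d.hf, fun a ha => d.hfT a (d.hAT a ha)⟩
theorem BG {x : Γ} (hx : x ∈ d.B) (hG : x ∈ d.G) : x ∈ d.A :=
  d.cen_mem hG (d.mem_B.mp hx).1 ((d.mem_B.mp hx).2 _ d.e1A)

theorem B_of {x : Γ} (hx : x ∈ d.T) (h : Commute x d.e1) : x ∈ d.B := by
  obtain ⟨p, hp, hpT, i, rfl⟩ := d.memT hx
  have hc : Commute p d.e1 := by
    have h2 : Commute (d.f ^ i) d.e1 := (d.hfT _ (d.hAT _ d.e1A)).pow_left i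
    have := h.mul_left h2.inv_left
    simpa using this
  exact d.B.mul_mem (d.AB (d.cen_mem hp hpT hc)) (d.B.pow_mem d.fB i)

theorem B_form {x : Γ} (hx : x ∈ d.B) : ∃ p ∈ d.A, ∃ i : ℕ, x = p * d.f ^ i := by
  obtain ⟨p, hp, hpT, i, rfl⟩ := d.memT (d.mem_B.mp hx).1
  refine ⟨p, d.BG ?_ hp, i, rfl⟩
  have := d.B.mul_mem hx (d.B.inv_mem (d.B.pow_mem d.fB i))
  simpa using this

theorem Bab {x y : Γ} (hx : x ∈ d.B) (hy : y ∈ d.B) : Commute x y := by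
  obtain ⟨p, hp, i, rfl⟩ := d.B_form hx
  have h1 : Commute p y := ((d.mem_B.mp hy).2 p hp).symm
  exact h1.mul_left ((d.hfT y (d.mem_B.mp hy).1).pow_left i)

theorem TA {x a : Γ} (hx : x ∈ d.T) (ha : a ∈ d.A) : x * a * x⁻¹ ∈ d.A := by
  obtain ⟨p, hp, hpT, i, rfl⟩ := d.memT hx
  have h2 : Commute (d.f ^ i) a := (d.hfT a (d.hAT _ ha)).pow_left i
  have := d.normA hp hpT ha
  rw [← conj_of_commute h2] at this
  convert this using 1; group

/-- criterion for lying in `M` -/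
theorem M_of {x : Γ} (h : ∀ b ∈ d.B, x * b * x⁻¹ ∈ d.T) : x ∈ d.M := by
  have h1 := d.F1 (j := x) (fun a ha => h a (d.AB ha))
  have key : ∀ b ∈ d.B, x * b * x⁻¹ ∈ d.B := by
    intro b hb
    rw [mem_B]
    refine ⟨h b hb, fun a ha => ?_⟩
    have h2 : x⁻¹ * a * x ∈ d.A := (h1 _).mpr (by convert ha using 1; group)
    have h3 := (d.mem_B.mp hb).2 _ h2
    rw [← commute_conj_iff (g := x)] at h3
    convert h3 using 1; group
  rw [mem_M]
  refine ⟨h1, fun b => ⟨key b, fun hb => ?_⟩⟩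
  let F : d.B → d.B := fun y => ⟨x * y * x⁻¹, key y y.2⟩
  have hF : Function.Injective F := by
    intro y w hxy
    have := congrArg Subtype.val hxy
    exact Subtype.ext (mul_left_cancel (mul_right_cancel this))
  obtain ⟨y, hy⟩ := Finite.injective_iff_surjective.mp hF ⟨_, hb⟩
  have := congrArg Subtype.val hy
  have h2 : (y : Γ) = b := mul_left_cancel (mul_right_cancel this)
  rw [← h2]; exact y.2

theorem T_le_M : (d.T : Subgroup Γ) ≤ d.M := fun x hx =>
  d.M_of (fun b hb => d.conjT (d.mem_B.mp hb).1 hx)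

theorem MA {x a : Γ} (hx : x ∈ d.M) (ha : a ∈ d.A) : x * a * x⁻¹ ∈ d.A := ((d.mem_M.mp hx).1 a).mp ha
theorem MB {x a : Γ} (hx : x ∈ d.M) (ha : a ∈ d.B) : x * a * x⁻¹ ∈ d.B := ((d.mem_M.mp hx).2 a).mp ha

theorem M_inv {x a : Γ} (hx : x ∈ d.M) (ha : a ∈ d.A) (h2 : a ^ 2 = 1) (h1 : a ≠ 1) :
    x * a * x⁻¹ = d.e1 ∨ x * a * x⁻¹ = d.e2 ∨ x * a * x⁻¹ = d.z := by
  rcases d.inv_cases (d.MA hx ha) (by rw [conj_pow, h2]; simp) with h | h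
  · exact absurd (conj_eq_one_iff.mp h) h1
  · exact h

theorem com_inv {σ x : Γ} (h1 : Commute σ d.e1) (h2 : Commute σ d.e2) (hx : x ∈ d.A) (hx2 : x ^ 2 = 1) :
    Commute σ x := by
  rcases d.inv_cases hx hx2 with h | h | h | h <;> rw [h]
  · exact Commute.one_right _
  · exact h1
  · exact h2
  · exact h1.mul_right h2

theorem cenB {σ : Γ} (hσ : σ ∈ d.M) (h1 : Commute σ d.e1) (h2 : Commute σ d.e2) :
    ∀ b ∈ d.B, Commute σ b := by
  have key : σ ∈ centralizer (d.B : Set Γ) := by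
    apply mem_of_parts
    · intro n hn
      have hM := d.M.pow_mem hσ n
      have h1 := h1.pow_left n
      have h2 := h2.pow_left n
      generalize σ ^ n = τ at *
      obtain ⟨γ, hγ, hT⟩ := sylC d.T d.M (zpowers τ) d.T_le_M (by simpa using hM) hn.zpowers
      have hB : γ * τ * γ⁻¹ ∈ d.B := by
        apply d.B_of (hT _ (mem_zpowers τ))
        have hA : γ⁻¹ * d.e1 * γ ∈ d.A := by simpa using d.MA (d.M.inv_mem hγ) d.e1A
        have := d.com_inv h1 h2 hA (by
          have := conj_pow (i := 2) (a := γ⁻¹) (b := d.e1)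
          rw [inv_inv, d.e1sq] at this; rw [this]; group)
        rw [← commute_conj_iff (g := γ)] at this
        convert this using 1; group
      have hB2 := ((d.mem_M.mp hγ).2 τ).mpr hB
      rw [mem_centralizer_iff]
      intro b hb
      exact d.Bab hb hB2
    · intro n hn
      have hM := d.M.pow_mem hσ n
      have h1 := h1.pow_left n
      have h2 := h2.pow_left n
      generalize σ ^ n = τ at *
      have hA := OA hn d.A d.hAab (fun a ha => d.twoT (d.hAT a ha)) (fun a ha => d.MA hM ha)
        (fun a ha ha2 => d.com_inv h1 h2 ha ha2)
      rw [mem_centralizer_iff]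
      intro b hb
      have hc : τ * b * τ⁻¹ * b⁻¹ ∈ d.A := d.BG (d.B.mul_mem (d.MB hM hb) (d.B.inv_mem hb)) (d.comG _ _)
      exact (odd_comm_aux hn (b := b) (c := τ * b * τ⁻¹ * b⁻¹) (by group) (hA _ hc)
        (d.twoT (d.hAT _ hc))).symm
  intro b hb
  exact ((mem_centralizer_iff.mp key) b hb).symm

theorem e2z : d.e2 = d.e1 * d.z := d.e1z.symm

theorem cenM {σ b : Γ} (hσ : σ ∈ d.M) (hz : Commute σ d.z) (hb : b ∈ d.B) (htb : Commute d.t b) :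
    Commute σ b := by
  rcases d.M_inv hσ d.e1A d.e1sq d.e1ne with h | h | h
  · have h1 := commute_of_conj h
    exact d.cenB hσ h1 (by rw [e2z]; exact h1.mul_right hz) b hb
  · have h1 : Commute (d.t * σ) d.e1 := by
      apply commute_of_conj
      calc d.t * σ * d.e1 * (d.t * σ)⁻¹ = d.t * (σ * d.e1 * σ⁻¹) * d.t⁻¹ := by group
        _ = d.e1 := by rw [h, te2]
    have hz' : Commute (d.t * σ) d.z := (d.zcen _ d.htT).mul_left hz
    have := d.cenB (d.M.mul_mem (d.T_le_M d.htT) hσ) h1 (by rw [e2z]; exact h1.mul_right hz') b hb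
    have := htb.inv_left.mul_left this
    simpa using this
  · exfalso
    rw [← conj_of_commute hz] at h
    exact d.ze1 (mul_left_cancel (mul_right_cancel h)).symm

theorem out_e1 {x : Γ} (hx : x ∈ d.T) (h : x ∉ d.B) : x * d.e1 * x⁻¹ = d.e2 := by
  obtain ⟨p, hp, hpT, i, rfl⟩ := d.memT hx
  have hpA : p ∉ d.A := fun hA => h (d.B.mul_mem (d.AB hA) (d.B.pow_mem d.fB i))
  have h2 : Commute (d.f ^ i) d.e1 := (d.hfT _ (d.hAT _ d.e1A)).pow_left i
  have := d.out_conj hp hpT hpA d.e1A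
  rw [te1, ← conj_of_commute h2] at this
  rw [← this, conj_of_commute h2]
  conv_rhs => rw [← conj_of_commute h2]
  group

theorem cenT_B {u : Γ} (hu : u ∈ d.T) (hc : ∀ x ∈ d.T, Commute x u) : u ∈ d.B :=
  d.mem_B.mpr ⟨hu, fun a ha => (hc a (d.hAT a ha)).symm⟩

/-- moving centralizers into `T` -/
theorem mover {u : Γ} (hc : ∀ x ∈ d.T, Commute x u) {γ : Γ} :
    ∃ j, j * (γ * u * γ⁻¹) * j⁻¹ = u ∧ ∀ s ∈ d.T, Commute s (γ * u * γ⁻¹) → j * s * j⁻¹ ∈ d.T := by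
  set v := γ * u * γ⁻¹ with hv
  have hSp : IsPGroup 2 (((d.T : Subgroup Γ) ⊓ centralizer {v}).map (MulAut.conj γ⁻¹).toMonoidHom) :=
    IsPGroup.map (d.T.2.to_le inf_le_left) _
  obtain ⟨δ, hδ, hδT⟩ := sylC d.T (centralizer {u})
    (((d.T : Subgroup Γ) ⊓ centralizer {v}).map (MulAut.conj γ⁻¹).toMonoidHom)
    (fun x hx => by rw [mem_centralizer_singleton_iff]; exact hc x hx)
    (by
      rintro _ ⟨x, hx, rfl⟩
      rw [mem_centralizer_singleton_iff]
      have h1 : Commute x v := mem_centralizer_singleton_iff.mp hx.2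
      rw [← commute_conj_iff (g := γ⁻¹)] at h1
      have h3 : γ⁻¹ * v * γ⁻¹⁻¹ = u := by rw [hv]; group
      rw [h3] at h1
      exact h1) hSp
  refine ⟨δ * γ⁻¹, ?_, ?_⟩
  · have : Commute δ u := mem_centralizer_singleton_iff.mp hδ
    rw [hv]
    conv_rhs => rw [← conj_of_commute this]
    group
  · intro s hs hsv
    have := hδT (γ⁻¹ * s * γ) ⟨s, ⟨hs, mem_centralizer_singleton_iff.mpr hsv⟩, by simp⟩
    convert this using 1; group

/-- isolation -/
theorem isolation {u : Γ} (hu : u ∈ d.T) (hc : ∀ x ∈ d.T, Commute x u) (hM : ∀ m ∈ d.M, Commute m u) :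
    Weak u := by
  have c1 : ∀ γ, γ * u * γ⁻¹ ∈ d.B → γ * u * γ⁻¹ = u := by
    intro γ hγ
    obtain ⟨j, hj, hjT⟩ := d.mover hc (γ := γ)
    have hjM : j ∈ d.M := d.M_of (fun b hb => hjT b (d.mem_B.mp hb).1 (d.Bab hb hγ))
    have := hM j hjM
    exact mul_left_cancel (mul_right_cancel (hj.trans (conj_of_commute this).symm))
  apply weak_of d.T
  intro γ hγ
  by_cases hB : γ * u * γ⁻¹ ∈ d.B
  · exact c1 γ hB
  exfalso
  obtain ⟨j, hj, hjT⟩ := d.mover hc (γ := γ)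
  generalize γ * u * γ⁻¹ = v at *
  have h1 := d.out_e1 hγ hB
  have h2 : d.e1 * v * d.e1⁻¹ = d.z * v := by
    have h3 : v * d.e1 = d.e2 * v := by rw [← h1]; group
    have h4 : d.e1 * v = d.z * v * d.e1 := by
      rw [mul_assoc, h3, ← mul_assoc]
      have : d.z * d.e2 = d.e1 := by rw [z, mul_assoc, ← pow_two, e2sq, mul_one]
      rw [this]
    rw [h4]; group
  have hιj : j * d.ι * j⁻¹ ∈ d.T := hjT _ (d.hAT _ d.ιA) (d.ιcen v hγ).symm
  have hzA : j * d.z * j⁻¹ ∈ d.A := by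
    rw [← d.ιsq, ← conj_pow]
    exact d.sqA (d.conjG (d.hAG _ d.ιA) j) hιj
  have h5 : (j * d.e1 * j⁻¹) * u * (j * d.e1 * j⁻¹)⁻¹ = (j * d.z * j⁻¹) * u := by
    rw [← hj]
    calc _ = j * (d.e1 * v * d.e1⁻¹) * j⁻¹ := by group
      _ = _ := by rw [h2]; group
  have h6 := c1 (j * d.e1 * j⁻¹) (by rw [h5]; exact d.B.mul_mem (d.AB hzA) (d.cenT_B hu hc))
  rw [h5] at h6
  exact d.zne (conj_eq_one_iff.mp (mul_eq_right.mp h6))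

end MD
end WPf

set_option linter.unusedSectionVars false
set_option linter.unusedVariables false
namespace WPf
open Subgroup
variable {Γ : Type*} [Group Γ] [Finite Γ]

theorem exists_inv {w : Γ} (h : TwoEl w) (h1 : w ≠ 1) : ∃ n : ℕ, w ^ n ≠ 1 ∧ (w ^ n) ^ 2 = 1 := by
  obtain ⟨k, hk⟩ := h
  induction k with
  | zero => simp at hk; exact absurd hk h1
  | succ k ih =>
    by_cases h2 : w ^ 2 ^ k = 1
    · exact ih h2
    · exact ⟨2 ^ k, h2, by rw [← pow_mul, ← pow_succ, hk]⟩

theorem normal_two_le (T : Sylow 2 Γ) {N : Subgroup Γ} (hN : N.Normal) (h2 : IsPGroup 2 N) :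
    N ≤ (T : Subgroup Γ) := by
  obtain ⟨γ, _, h⟩ := sylC T ⊤ N le_top le_top h2
  intro x hx
  have := h _ (hN.conj_mem x hx γ⁻¹)
  convert! this using 1; group

/-- the centralizer of the class of `u` -/
def Kc (u : Γ) : Subgroup Γ := centralizer {x | IsConj u x}

theorem mem_Kc {u x : Γ} : x ∈ Kc u ↔ ∀ ω, IsConj u ω → Commute x ω := by
  rw [Kc, mem_centralizer_iff]
  exact ⟨fun h ω hω => (h ω hω).symm, fun h ω hω => (h ω hω).symm⟩

theorem Kc_normal (u : Γ) : (Kc u).Normal := by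
  constructor
  intro n hn g
  rw [mem_Kc] at hn ⊢
  intro ω hω
  have h1 := hn (g⁻¹ * ω * g⁻¹⁻¹) (isConj_conj hω g⁻¹)
  rw [← commute_conj_iff (g := g)] at h1
  convert h1 using 1; group

/-- the commutator `[u, Γ]` -/
def Nu (u : Γ) : Subgroup Γ := normalClosure {x | ∃ γ, x = u⁻¹ * (γ * u * γ⁻¹)}

theorem Nu_normal (u : Γ) : (Nu u).Normal := normalClosure_normal

theorem Nu_mem (u γ : Γ) : u⁻¹ * (γ * u * γ⁻¹) ∈ Nu u := subset_normalClosure ⟨γ, rfl⟩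

theorem Nu_comm {u x y : Γ} (hx : x ∈ Kc u) (hy : y ∈ Nu u) : Commute x y := by
  have := Kc_normal u
  have h1 : Nu u ≤ centralizer (Kc u : Set Γ) := by
    apply normalClosure_le_normal
    rintro _ ⟨γ, rfl⟩
    apply mul_mem
    · apply inv_mem
      rw [mem_centralizer_iff]
      intro k hk
      exact mem_Kc.mp hk u (IsConj.refl u)
    · rw [mem_centralizer_iff]
      intro k hk
      exact mem_Kc.mp hk _ (isConj_iff.mpr ⟨γ, rfl⟩)
  exact (mem_centralizer_iff.mp (h1 hy)) x hx

namespace MD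
variable (d : MD Γ)

/-- the wanted conclusion -/
def Concl : Prop := ∃ s ∈ d.G, ∀ x ∈ d.G, Commute (d.f * s) x

theorem Nu_le (u : Γ) : Nu u ≤ d.G := by
  have := d.hG
  apply normalClosure_le_normal
  rintro _ ⟨γ, rfl⟩
  have := d.comG u⁻¹ γ
  simpa [mul_assoc] using this

theorem TR1 {R : Subgroup Γ} (hR : R.Normal) (hG : R ≤ d.G) (hne : R ≠ ⊥) : d.z ∈ R := by
  have h2 : 2 ∣ Nat.card R := by
    by_contra h; exact hne (d.hO R hR hG h)
  obtain ⟨w, hwT, hwR, hw1, hwc⟩ := meet_center d.T R hR h2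
  obtain ⟨n, hn1, hn2⟩ := exists_inv (d.twoT hwT) hw1
  have hA : w ∈ d.A := d.cen_mem (hG hwR) hwT (hwc _ (d.hAT _ d.e1A)).symm
  rcases d.cen_inv (d.A.pow_mem hA n) hn2 ((hwc _ d.htT).pow_right n) with h | h
  · exact absurd h hn1
  · rw [← h]; exact R.pow_mem hwR n

theorem TR2 {N : Subgroup Γ} (hN : N.Normal) (hG : N ≤ d.G) (hne : Rn N ≠ ⊥)
    (hw : ∀ γ ∈ Rn N, γ * d.z * γ⁻¹ ∈ d.T → γ * d.z * γ⁻¹ = d.z) :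
    ∃ v ∈ d.T, v ∈ Rn N ∧ v ∉ d.A := by
  by_contra hcon
  push Not at hcon
  have hz := d.TR1 (Rn_normal N hN) ((Rn_le N).trans hG) hne
  exact transfer_arg d.T N hN d.z d.zne d.zsq hz (d.hAT _ d.zA) hw
    (fun x hx y hy hxR hyR => d.hAab x (hcon x hx hxR) y (hcon y hy hyR))

theorem LKv {N : Subgroup Γ} (hN : N.Normal) (hG : N ≤ d.G) (h2 : ¬ IsPGroup 2 N)
    (hz : ∀ x ∈ N, Commute x d.z) : ∃ v ∈ d.T, v ∈ Rn N ∧ v ∉ d.A :=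
  d.TR2 hN hG (fun h => h2 (Rn_bot h)) (fun γ hγ _ => conj_of_commute (hz γ (Rn_le N hγ)))

theorem LK {N : Subgroup Γ} (hN : N.Normal) (hG : N ≤ d.G) (h2 : ¬ IsPGroup 2 N)
    (hz : ∀ x ∈ N, Commute x d.z) {x : Γ} (hx : x ∈ d.G) (hxT : x ∈ d.T)
    (hc : ∀ y ∈ d.T, y ∈ Rn N → Commute x y) : ∀ y ∈ d.T, Commute y x := by
  obtain ⟨v, hvT, hvR, hvA⟩ := d.LKv hN hG h2 hz
  have hvG := hG (Rn_le N hvR)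
  have hR := Rn_normal N hN
  have hδR : d.κ * v * d.κ⁻¹ * v⁻¹ ∈ Rn N := mul_mem (hR.conj_mem v hvR _) (inv_mem hvR)
  have e : d.κ * v * d.κ⁻¹ * v⁻¹ = d.κ * d.κ'⁻¹ := by
    have := d.out_conj hvG hvT hvA d.hκA
    rw [κ', ← this]; group
  rw [e] at hδR
  have hδA : d.κ * d.κ'⁻¹ ∈ d.A := d.A.mul_mem d.hκA (d.A.inv_mem d.κ'A)
  have hxA : x ∈ d.A := by
    by_contra hxA
    have h1 := d.cenA hδA hx hxT hxA (hc _ (d.hAT _ hδA) hδR) d.t d.htT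
    have h3 := conj_of_commute h1
    have h4 : d.t * (d.κ * d.κ'⁻¹) * d.t⁻¹ = d.κ' * d.κ⁻¹ := by
      calc _ = (d.t * d.κ * d.t⁻¹) * (d.t * d.κ' * d.t⁻¹)⁻¹ := by group
        _ = _ := by rw [tκ']; rfl
    rw [h4] at h3
    apply d.e12
    have hcc := d.hAab _ d.hκA _ d.κ'A
    have : d.κ' * d.κ' = d.κ * d.κ := by
      calc d.κ' * d.κ' = (d.κ' * d.κ⁻¹) * (d.κ * d.κ') := by group
        _ = d.κ * d.κ'⁻¹ * (d.κ' * d.κ) := by rw [h3, hcc.eq]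
        _ = _ := by group
    rw [← pow_two, ← pow_two, κ'sq] at this
    exact this.symm
  exact d.cenA hxA hvG hvT hvA (hc v hvT hvR).symm

theorem Nu_not {u : Γ} (hu : u ∈ d.T) (hw : Weak u) (hn : ¬ ∀ γ, Commute γ u) : ¬ IsPGroup 2 (Nu u) := by
  intro h
  have hle := normal_two_le d.T (Nu_normal u) h
  apply hn
  intro γ
  apply commute_of_conj
  apply hw.eq_of_mem d.T hu
  have := d.mulT hu (hle (Nu_mem u γ))
  simpa [mul_assoc] using this

theorem cen_z {x : Γ} (hx : x ∈ d.G) (hxT : x ∈ d.T) (hc : ∀ y ∈ d.T, Commute y x) (h2 : x ^ 2 = 1)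
    (h1 : x ≠ 1) : x = d.z := by
  have hA := d.cen_mem hx hxT (hc _ (d.hAT _ d.e1A)).symm
  exact (d.cen_inv hA h2 (hc _ d.htT)).resolve_left h1

theorem KZ {u : Γ} (h2 : ¬ IsPGroup 2 (Nu u)) (hz : d.z ∈ Kc u) :
    (∀ x ∈ d.G, x ∈ Kc u → x ∈ d.T ∧ ∀ y ∈ d.T, Commute y x) ∧ ∀ γ, Commute γ d.z := by
  have hKn : (d.G ⊓ Kc u).Normal := by
    have := d.hG; have := Kc_normal u; infer_instance
  have h1 : ∀ x ∈ d.G, x ∈ Kc u → x ∈ d.T → ∀ y ∈ d.T, Commute y x := by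
    intro x hx hxK hxT
    exact d.LK (Nu_normal u) (d.Nu_le u) h2 (fun y hy => (Nu_comm hz hy).symm) hx hxT
      (fun y _ hy => Nu_comm hxK (Rn_le _ hy))
  have hzK : d.z ∈ d.G ⊓ Kc u := ⟨d.hAG _ d.zA, hz⟩
  have hzz : ∀ γ, γ * d.z * γ⁻¹ ∈ d.T → γ * d.z * γ⁻¹ = d.z := by
    intro γ hγ
    have h3 := hKn.conj_mem _ hzK γ
    exact d.cen_z h3.1 hγ (h1 _ h3.1 h3.2 hγ) (by rw [conj_pow, d.zsq]; simp)
      (fun h => d.zne (conj_eq_one_iff.mp h))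
  have hR : Rn (d.G ⊓ Kc u) = ⊥ := by
    by_contra hne
    obtain ⟨v, hvT, hvR, hvA⟩ := d.TR2 hKn inf_le_left hne (fun γ _ => hzz γ)
    have h3 := Rn_le _ hvR
    exact hvA (d.cen_mem h3.1 hvT (h1 v h3.1 h3.2 hvT _ (d.hAT _ d.e1A)).symm)
  have hle := normal_two_le d.T hKn (Rn_bot hR)
  refine ⟨fun x hx hxK => ⟨hle ⟨hx, hxK⟩, h1 x hx hxK (hle ⟨hx, hxK⟩)⟩, fun γ => ?_⟩
  exact commute_of_conj (hzz γ (hle (hKn.conj_mem _ hzK γ)))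

theorem concl_of_two (h : Rn d.G = ⊥) : d.Concl := by
  have hle := normal_two_le d.T d.hG (Rn_bot h)
  exact ⟨1, one_mem _, fun x hx => by rw [mul_one]; exact d.hfT x (hle hx)⟩

theorem odd_mem {x : Γ} (hx : Odd (orderOf x)) : x ∈ d.G := by
  have := d.hG
  obtain ⟨g, hg, i, rfl⟩ := d.hgen x
  obtain ⟨k, hk⟩ := d.twoT d.hf
  rw [← QuotientGroup.eq_one_iff] at hg ⊢
  have h1 : ((g * d.f ^ i : Γ) : Γ ⧸ d.G) ^ (2 ^ k) = 1 := by
    rw [QuotientGroup.mk_mul, hg, one_mul, ← QuotientGroup.mk_pow, ← pow_mul, mul_comm, pow_mul, hk]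
    simp
  refine two_odd ⟨k, h1⟩ hx ?_
  rw [← QuotientGroup.mk_pow, pow_orderOf_eq_one]; rfl

theorem cent_top {w : Γ} (hw : ∀ x ∈ d.T, Commute x w) (ho : ∀ x ∈ d.G, Odd (orderOf x) → Commute x w) :
    ∀ x, Commute x w := by
  have hT : (d.T : Subgroup Γ) ≤ centralizer {w} := fun x hx =>
    mem_centralizer_singleton_iff.mpr (hw x hx)
  have key : (centralizer {w}).index = 1 := by
    by_contra hne
    obtain ⟨p, hp, hd⟩ := Nat.exists_prime_and_dvd hne
    have := Fact.mk hp
    rcases hp.eq_two_or_odd' with rfl | hodd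
    · exact d.T.not_dvd_index (hd.trans (Subgroup.index_dvd_of_le hT))
    · obtain ⟨Q⟩ : Nonempty (Sylow p Γ) := inferInstance
      have hQ : (Q : Subgroup Γ) ≤ centralizer {w} := by
        intro x hx
        have hx2 : Odd (orderOf x) := by
          obtain ⟨k, hk⟩ := Q.2 ⟨x, hx⟩
          have : x ^ p ^ k = 1 := by simpa [Subtype.ext_iff] using hk
          exact Odd.of_dvd_nat (hodd.pow) (orderOf_dvd_of_pow_eq_one this)
        exact mem_centralizer_singleton_iff.mpr (ho x (d.odd_mem hx2) hx2)
      exact Q.not_dvd_index (hd.trans (Subgroup.index_dvd_of_le hQ))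
  rw [index_eq_one] at key
  intro x
  have : x ∈ centralizer {w} := by rw [key]; trivial
  exact mem_centralizer_singleton_iff.mp this

/-- an odd power is a 2-element congruent to the element -/
theorem odd_adjust (y : Γ) (hy : y ∈ d.G) : ∃ m : ℕ, TwoEl ((d.f * y) ^ m) ∧ d.f⁻¹ * (d.f * y) ^ m ∈ d.G := by
  have := d.hG
  obtain ⟨k, q, hq, ho, h2, _⟩ := split_order (d.f * y)
  obtain ⟨K, hK⟩ := d.twoT d.hf
  have hcop : Nat.Coprime q (2 ^ K) := (Nat.Coprime.pow_right K hq.coprime_two_right)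
  obtain ⟨m, hm1, hm2⟩ := Nat.chineseRemainder hcop 0 1
  obtain ⟨c, rfl⟩ := (Nat.modEq_zero_iff_dvd.mp hm1)
  refine ⟨q * c, by rw [pow_mul]; exact h2.pow c, ?_⟩
  rw [← QuotientGroup.eq_one_iff] at hy ⊢
  rw [QuotientGroup.mk_mul, QuotientGroup.mk_pow, QuotientGroup.mk_mul, hy, mul_one]
  have : d.f ^ (q * c) = d.f := by
    conv_rhs => rw [← pow_one d.f]
    rw [pow_eq_pow_iff_modEq]
    exact hm2.of_dvd (orderOf_dvd_of_pow_eq_one hK)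
  rw [← QuotientGroup.mk_pow, this, ← QuotientGroup.mk_mul, inv_mul_cancel]; rfl

theorem PP {u : Γ} (hc : ∀ y ∈ d.T, Commute y u) (h2 : ¬ IsPGroup 2 (Nu u)) {p a : ℕ}
    (hp : p.Prime) (hodd : Odd p) (hcard : (Cn u ∅).ncard = p ^ a) : d.Concl := by
  have := Fact.mk hp
  obtain ⟨Q, y, hy, hQ⟩ := d.hCol p hp hodd
  obtain ⟨m, hm2, hmG⟩ := d.odd_adjust y hy
  set h := (d.f * y) ^ m with hh
  have hhQ : ∀ q ∈ Q, Commute h q := fun q hq => (hQ q hq).pow_left m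
  obtain ⟨γ, hγ⟩ := conj_into d.T hm2
  -- `w` commutes with `h`
  have hw : Commute h (γ⁻¹ * u * γ) := by
    have := hc _ hγ
    rw [← commute_conj_iff (g := γ)]
    convert this using 1; group
  have hwu : IsConj u (γ⁻¹ * u * γ) := isConj_iff.mpr ⟨γ⁻¹, by group⟩
  have hcls : Cn (γ⁻¹ * u * γ) ∅ = Cn u ∅ := by
    ext ω; simp only [Cn, Set.mem_ofPred_eq]
    exact and_congr ⟨fun h => hwu.trans h, fun h => hwu.symm.trans h⟩ Iff.rfl
  have hhK : h ∈ Kc u := by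
    rw [mem_Kc]
    intro ω hω
    obtain ⟨q, hq, rfl⟩ := factor Q (γ⁻¹ * u * γ) (by rw [hcls]; exact hcard) ω (hwu.symm.trans hω)
    exact ((hhQ q hq).mul_right hw).mul_right (hhQ q hq).inv_right
  have hKn := Kc_normal u
  obtain ⟨s, hs⟩ : ∃ s, γ * h * γ⁻¹ = d.f * s := ⟨d.f⁻¹ * (γ * h * γ⁻¹), by group⟩
  rw [hs] at hγ
  have hsK : d.f * s ∈ Kc u := by rw [← hs]; exact hKn.conj_mem _ hhK γ
  have hsG : s ∈ d.G := by
    have h1 : s = (d.f⁻¹ * γ * d.f * γ⁻¹) * (γ * (d.f⁻¹ * h) * γ⁻¹) := by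
      have : s = d.f⁻¹ * (d.f * s) := by group
      rw [this, ← hs]; group
    rw [h1]
    refine d.G.mul_mem ?_ (d.conjG hmG γ)
    have := d.comG d.f⁻¹ γ
    simpa using this
  have hsT : s ∈ d.T := by
    have := d.mulT (d.invT d.hf) hγ
    simpa using this
  have hcom : ∀ x, x * (d.f * s) * x⁻¹ * (d.f * s)⁻¹ ∈ d.G ⊓ Kc u := fun x =>
    ⟨d.comG _ _, (Kc u).mul_mem (hKn.conj_mem _ hsK x) ((Kc u).inv_mem hsK)⟩
  have hGKn : (d.G ⊓ Kc u).Normal := by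
    have := d.hG; infer_instance
  by_cases hz : d.z ∈ Kc u
  · obtain ⟨k1, k2⟩ := d.KZ h2 hz
    by_cases hR : Rn d.G = ⊥
    · exact d.concl_of_two hR
    have hoddc : ∀ x ∈ d.G, Odd (orderOf x) → Commute x (d.f * s) := by
      intro x hx ho
      have hxK := OA ho (d.G ⊓ Kc u)
        (fun a ha b hb => (k1 b hb.1 hb.2).2 a (k1 a ha.1 ha.2).1)
        (fun a ha => d.twoT (k1 a ha.1 ha.2).1) (fun a ha => hGKn.conj_mem a ha x)
        (fun a ha ha2 => by
          by_cases h1 : a = 1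
          · rw [h1]; exact Commute.one_right _
          · rw [d.cen_z ha.1 (k1 a ha.1 ha.2).1 (k1 a ha.1 ha.2).2 ha2 h1]; exact k2 x)
      have hcx := hcom x
      exact odd_comm_aux ho (c := x * (d.f * s) * x⁻¹ * (d.f * s)⁻¹) (by group) (hxK _ hcx)
        (d.twoT (k1 _ hcx.1 hcx.2).1)
    have hRc : Rn d.G ≤ centralizer {d.f * s} := by
      rw [Rn, closure_le]
      rintro x ⟨hx, ho⟩
      exact mem_centralizer_singleton_iff.mpr (hoddc x hx ho)
    have hsc : ∀ y ∈ d.T, Commute y s := by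
      apply d.LK d.hG le_rfl (fun h => ?_) (fun x _ => k2 x) hsG hsT
      · intro y hyT hyR
        have h1 : Commute y (d.f * s) := mem_centralizer_singleton_iff.mp (hRc hyR)
        have h3 := (d.hfT y hyT).symm.inv_right.mul_right h1
        simpa using h3.symm
      · apply hR
        rw [eq_bot_iff, Rn, closure_le]
        rintro x ⟨hx, ho⟩
        obtain ⟨k, hk⟩ := h ⟨x, hx⟩
        have : x ^ 2 ^ k = 1 := by simpa [Subtype.ext_iff] using hk
        exact two_odd ⟨k, this⟩ ho (pow_orderOf_eq_one x)
    have := d.cent_top (w := d.f * s) (fun x hx => (d.hfT x hx).symm.mul_right (hsc x hx)) hoddc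
    exact ⟨s, hsG, fun x _ => (this x).symm⟩
  · have hbot : d.G ⊓ Kc u = ⊥ := by
      by_contra hne
      exact hz (d.TR1 hGKn inf_le_left hne).2
    refine ⟨s, hsG, fun x _ => ?_⟩
    have := hcom x
    rw [hbot, mem_bot] at this
    exact (commute_of_conj (mul_inv_eq_one.mp this)).symm

end MD
end WPf

set_option linter.unusedSectionVars false
set_option linter.unusedVariables false
namespace WPf
open Subgroup
variable {Γ : Type*} [Group Γ] [Finite Γ]

theorem mem_Cn0 {u ω : Γ} : ω ∈ Cn u ∅ ↔ IsConj u ω := by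
  simp [Cn]
theorem mem_Cn1 {u x ω : Γ} : ω ∈ Cn u {x} ↔ IsConj u ω ∧ Commute x ω := by
  simp [Cn]
theorem mem_Cn2 {u x y ω : Γ} : ω ∈ Cn u {x, y} ↔ IsConj u ω ∧ Commute x ω ∧ Commute y ω := by
  simp [Cn]

theorem Cn2_cong {u x y x' y' : Γ} (h1 : ∀ ω, Commute x ω → Commute y ω → Commute x' ω ∧ Commute y' ω)
    (h2 : ∀ ω, Commute x' ω → Commute y' ω → Commute x ω ∧ Commute y ω) :
    Cn u {x, y} = Cn u {x', y'} := by
  ext ω; rw [mem_Cn2, mem_Cn2]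
  exact and_congr_right fun _ => ⟨fun h => h1 ω h.1 h.2, fun h => h2 ω h.1 h.2⟩

theorem Cn1_conj {u x : Γ} (g : Γ) : (Cn u {x}).ncard = (Cn u {g * x * g⁻¹}).ncard := by
  apply ncard_eq_of_conj g
  intro ω
  rw [mem_Cn1, mem_Cn1, isConj_conj_iff, commute_conj_iff]

theorem Cn2_conj {u x y : Γ} (g : Γ) : (Cn u {x, y}).ncard = (Cn u {g * x * g⁻¹, g * y * g⁻¹}).ncard := by
  apply ncard_eq_of_conj g
  intro ω
  rw [mem_Cn2, mem_Cn2, isConj_conj_iff, commute_conj_iff, commute_conj_iff]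

theorem com_cancel {c x ω : Γ} (hc : Commute c ω) (h : Commute (c * x) ω) : Commute x ω := by
  have := hc.inv_left.mul_left h
  simpa using this
theorem com_cancel_right {c x ω : Γ} (hc : Commute c ω) (h : Commute (x * c) ω) : Commute x ω := by
  have := h.mul_left hc.inv_left
  simpa using this

theorem Cn1_mul {u x c : Γ} (hc : ∀ γ, Commute γ c) : Cn u {c * x} = Cn u {x} := by
  ext ω; rw [mem_Cn1, mem_Cn1]
  exact and_congr_right fun _ => ⟨fun h => com_cancel (hc ω).symm h, fun h => (hc ω).symm.mul_left h⟩

theorem Cn_pos {u : Γ} {S : Set Γ} (h : ∀ s ∈ S, Commute s u) : 0 < (Cn u S).ncard := by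
  rw [Set.ncard_pos]
  exact ⟨u, IsConj.refl u, h⟩

theorem PF0 {u v : Γ} (h : Lat u) (hv : Commute v u) (hv2 : ∀ γ, Commute γ (v ^ 2)) :
    (Cn u ∅).ncard = (Cn u {v}).ncard * (Cn u {v * u}).ncard := by
  have := h.PF ∅ (by simp) hv (fun ω hω => ?_) (fun ω _ => (hv2 ω).symm)
  · simpa using this
  · rw [mem_Cn0] at hω ⊢; exact isConj_conj hω v

theorem PF1 {u v x c : Γ} (h : Lat u) (hx : Commute x u) (hv : Commute v u) (hv2 : ∀ γ, Commute γ (v ^ 2))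
    (hc : ∀ γ, Commute γ c) (hvx : v * x * v⁻¹ = c * x) :
    (Cn u {x}).ncard = (Cn u {v, x}).ncard * (Cn u {v * u, x}).ncard := by
  refine h.PF {x} (by simpa using hx) hv (fun ω hω => ?_) (fun ω _ => (hv2 ω).symm)
  rw [mem_Cn1] at hω ⊢
  refine ⟨isConj_conj hω.1 v, ?_⟩
  have := commute_conj_iff (g := v).mpr hω.2
  rw [hvx] at this
  exact com_cancel (hc _).symm this

theorem Kc_of_card {u v : Γ} (h : (Cn u ∅).ncard = (Cn u {v}).ncard) : v ∈ Kc u := by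
  have hsub : Cn u {v} ⊆ Cn u ∅ := fun ω hω => mem_Cn0.mpr (mem_Cn1.mp hω).1
  have := Set.eq_of_subset_of_ncard_le hsub h.le
  rw [mem_Kc]
  intro ω hω
  rw [← mem_Cn0, ← this, mem_Cn1] at hω
  exact hω.2

theorem central_of_card {u : Γ} (h : (Cn u ∅).ncard = 1) : ∀ γ, Commute γ u := by
  rw [ncard_class, index_eq_one] at h
  intro γ
  have : γ ∈ centralizer {u} := by rw [h]; trivial
  exact mem_centralizer_singleton_iff.mp this

theorem exists_noncentral {w : Γ} (h : TwoEl w) (h1 : ¬ ∀ γ, Commute γ w) :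
    ∃ n : ℕ, (¬ ∀ γ, Commute γ (w ^ n)) ∧ ∀ γ, Commute γ ((w ^ n) ^ 2) := by
  obtain ⟨k, hk0⟩ := h
  have hk : ∀ γ, Commute γ (w ^ 2 ^ k) := fun γ => by rw [hk0]; exact Commute.one_right _
  clear hk0
  induction k with
  | zero => simp only [pow_zero, pow_one] at hk; exact absurd hk h1
  | succ k ih =>
    by_cases h2 : ∀ γ, Commute γ (w ^ 2 ^ k)
    · exact ih h2
    · exact ⟨2 ^ k, h2, fun γ => by rw [← pow_mul, ← pow_succ]; exact hk γ⟩

namespace MD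
variable (d : MD Γ)

theorem idx_odd : Odd (d.T : Subgroup Γ).index := by
  rw [← Nat.not_even_iff_odd, even_iff_two_dvd]; exact d.T.not_dvd_index

theorem T_le_cent {u : Γ} (hc : ∀ y ∈ d.T, Commute y u) : (d.T : Subgroup Γ) ≤ centralizer {u} :=
  fun x hx => mem_centralizer_singleton_iff.mpr (hc x hx)

theorem class_dvd {u : Γ} (hc : ∀ y ∈ d.T, Commute y u) : (Cn u ∅).ncard ∣ (d.T : Subgroup Γ).index := by
  rw [ncard_class]; exact index_dvd_of_le (d.T_le_cent hc)

theorem class_le {u : Γ} (hc : ∀ y ∈ d.T, Commute y u) : (Cn u ∅).ncard ≤ 225 :=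
  (Nat.le_of_dvd d.idx_odd.pos (d.class_dvd hc)).trans d.hidx

theorem κ'4 : d.κ' ^ 4 = 1 := by rw [κ', conj_pow, d.hκ4]; simp

theorem NZ1 (hw : Weak d.z) (hn : ¬ ∀ γ, Commute γ d.z) : d.Concl := by
  have hL : Lat d.z := ⟨hw, ⟨1, by simpa using d.zsq⟩, fun γ => by rw [d.zsq]; exact Commute.one_right _⟩
  have h1 := PF0 hL (v := d.e1) (d.zcen _ (d.hAT _ d.e1A)) (fun γ => by
    rw [d.e1sq]; exact Commute.one_right _)
  rw [d.e1z] at h1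
  have h2 : (Cn d.z {d.e1}).ncard = (Cn d.z {d.e2}).ncard := by
    rw [Cn1_conj d.t, te1]
  rw [← h2] at h1
  have h3 : (Cn d.z {d.e1}).ncard % 4 = 1 := by
    apply mod_four _ d.κ' d.z d.κ'4
    · intro ω hω
      rw [mem_Cn1] at hω ⊢
      refine ⟨isConj_conj hω.1 _, ?_⟩
      have hc := d.hAab _ d.e1A _ d.κ'A
      exact (hc.mul_right hω.2).mul_right hc.inv_right
    · rw [mem_Cn1]; exact ⟨IsConj.refl _, d.zcen _ (d.hAT _ d.e1A)⟩
    · exact d.zcen _ (d.hAT _ d.κ'A)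
    · intro ω hω hc
      rw [d.κ'sq] at hc
      rw [mem_Cn1] at hω
      exact hw.comm_eq hL.two hω.1 (IsConj.refl _) (hω.2.mul_left hc).symm
  have h4 := d.class_le d.zcen
  have h5 := d.Nu_not (d.hAT _ d.zA) hw hn
  generalize (Cn d.z {d.e1}).ncard = r at *
  have h6 : r ≤ 15 := by nlinarith
  have h7 : r = 1 ∨ r = 5 ∨ r = 9 ∨ r = 13 := by omega
  rcases h7 with rfl | rfl | rfl | rfl
  · exact absurd (central_of_card h1) hn
  · exact d.PP d.zcen h5 (p := 5) (a := 2) (by norm_num) (by decide) (by rw [h1]; norm_num)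
  · exact d.PP d.zcen h5 (p := 3) (a := 4) (by norm_num) (by decide) (by rw [h1]; norm_num)
  · exact d.PP d.zcen h5 (p := 13) (a := 2) (by norm_num) (by decide) (by rw [h1]; norm_num)

/-- case `z` central -/
theorem CaseZ (hz : ∀ γ, Commute γ d.z) : d.Concl := by
  by_cases hR : Rn d.G = ⊥
  · exact d.concl_of_two hR
  by_cases hfc : ∀ γ, Commute γ d.f
  · exact ⟨1, one_mem _, fun x _ => by rw [mul_one]; exact (hfc x).symm⟩
  have hweak : ∀ x ∈ d.T, (∀ y ∈ d.T, Commute y x) → Weak x := fun x hx hc =>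
    d.isolation hx hc (fun m hm => d.cenM hm (hz m) (d.cenT_B hx hc) (hc _ d.htT))
  have h2G : ¬ IsPGroup 2 d.G := by
    intro h
    apply hR
    rw [eq_bot_iff, Rn, closure_le]
    rintro x ⟨hx, ho⟩
    obtain ⟨k, hk⟩ := h ⟨x, hx⟩
    have : x ^ 2 ^ k = 1 := by simpa [Subtype.ext_iff] using hk
    exact two_odd ⟨k, this⟩ ho (pow_orderOf_eq_one x)
  -- focal element
  obtain ⟨s, hsT, hsG, hsA, γ, hyA, hyT⟩ := focal_arg d.T d.G d.A d.hG
    (fun x hx y hy hxG hyG hxA hyA => d.hA2 x hxG hx _ (d.G.inv_mem hyG) (d.invT hy) hxA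
      (fun h => hyA (by simpa using d.A.inv_mem h)))
    (d.LKv d.hG le_rfl h2G (fun x _ => hz x))
  obtain ⟨y, hy⟩ : ∃ y, γ * s * γ⁻¹ = y := ⟨_, rfl⟩
  rw [hy] at hyA hyT
  have hs2A := d.sqA hsG hsT
  have hs2c := d.cenA hs2A hsG hsT hsA ((Commute.refl s).pow_right 2)
  have hy2 : y ^ 2 = s ^ 2 := by
    have h1 : γ * s ^ 2 * γ⁻¹ = y ^ 2 := by rw [← hy, conj_pow]
    have := (hweak _ (d.hAT _ hs2A) hs2c).eq_of_mem d.T (d.hAT _ hs2A) (γ := γ)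
      (by rw [h1]; exact d.powT hyT 2)
    rw [← h1, this]
  have hnt : ¬ Commute d.t y := by
    intro h
    have hyc := d.cen_t hyA h
    have h1 : γ⁻¹ * y * γ⁻¹⁻¹ = s := by rw [← hy]; group
    have := (hweak y hyT hyc).eq_of_mem d.T hyT (γ := γ⁻¹) (by rw [h1]; exact hsT)
    rw [h1] at this
    exact hsA (this ▸ hyA)
  have hte := (d.sqrt_cen hyA (by rw [hy2]; exact hs2c _ d.htT)).resolve_left hnt
  obtain ⟨e, he⟩ : ∃ e, y * d.e1 = e := ⟨_, rfl⟩
  rw [he] at hte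
  have heA : e ∈ d.A := by rw [← he]; exact d.A.mul_mem hyA d.e1A
  have heT := d.hAT _ heA
  have hec := d.cen_t heA hte
  have hye : e⁻¹ * y = d.e1 := by
    rw [← he, mul_inv_rev, d.e1inv]; group
  obtain ⟨δ0, hδ0, hδ0s⟩ := FC (hweak e heT hec) (d.twoT heT) (hec s hsT) (hec y hyT) hy
  obtain ⟨t', ht'⟩ : ∃ t', e⁻¹ * s = t' := ⟨_, rfl⟩
  have ht'c : δ0 * t' * δ0⁻¹ = d.e1 := by
    rw [← hye, ← hδ0s, ← ht']
    conv_rhs => rw [← conj_of_commute hδ0.inv_right]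
    group
  have ht'T : t' ∈ d.T := by rw [← ht']; exact d.mulT (d.invT heT) hsT
  have ht'G : t' ∈ d.G := by rw [← ht']; exact d.G.mul_mem (d.G.inv_mem (d.hAG _ heA)) hsG
  have ht'A : t' ∉ d.A := by
    intro h; apply hsA
    have := d.A.mul_mem heA h
    rw [← ht'] at this; simpa using this
  have ht'2 : t' ^ 2 = 1 := by
    have : (δ0 * t' * δ0⁻¹) ^ 2 = 1 := by rw [ht'c, d.e1sq]
    rw [conj_pow] at this
    exact conj_eq_one_iff.mp this
  clear ht' hδ0s hδ0 hye hec heT heA hte he e hnt hy2 hs2c hs2A hyA hyT hy hsA hsG hsT s y γ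
  -- choose `u`
  obtain ⟨u, huT, huc, hun, hu2, hcase⟩ : ∃ u ∈ d.T, (∀ y ∈ d.T, Commute y u) ∧ (¬ ∀ γ, Commute γ u) ∧
      (∀ γ, Commute γ (u ^ 2)) ∧ (u = d.ι ∨ ∀ γ, Commute γ d.ι) := by
    by_cases hι : ∀ γ, Commute γ d.ι
    · obtain ⟨n, h1, h2⟩ := exists_noncentral (d.twoT d.hf) hfc
      exact ⟨d.f ^ n, d.powT d.hf n, fun y hy => (d.hfT y hy).symm.pow_right n, h1, h2, Or.inr hι⟩
    · exact ⟨d.ι, d.hAT _ d.ιA, d.ιcen, hι, fun γ => by rw [d.ιsq]; exact hz γ, Or.inl rfl⟩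
  have huw := hweak u huT huc
  have hL : Lat u := ⟨huw, d.twoT huT, hu2⟩
  have hN := d.Nu_not huT huw hun
  have hzK : d.z ∈ Kc u := mem_Kc.mpr (fun ω _ => (hz ω).symm)
  have hKZ := (d.KZ hN hzK).1
  have hte : Commute t' u := huc _ ht'T
  have heu : Commute d.e1 u := huc _ (d.hAT _ d.e1A)
  obtain ⟨δ, hδu, hδ⟩ := FC huw (d.twoT huT) hte heu ht'c
  have one2 : ∀ {v : Γ}, v ^ 2 = 1 → ∀ γ, Commute γ (v ^ 2) := by
    intro v hv γ; rw [hv]; exact Commute.one_right _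
  have ht'm : t' * t' = 1 := by rw [← pow_two]; exact ht'2
  have he1m : d.e1 * d.e1 = 1 := by rw [← pow_two]; exact d.e1sq
  have huu : ∀ γ, Commute γ (u * u) := by intro γ; rw [← pow_two]; exact hu2 γ
  have c1 : t' * d.e1 * t'⁻¹ = d.z * d.e1 := by
    rw [d.out_conj ht'G ht'T ht'A d.e1A, te1, e2z, (hz _).eq]
  have c1' : t' * d.e1 = d.z * d.e1 * t' := by rw [← c1]; group
  have c2' : d.e1 * t' = d.z * t' * d.e1 := by
    rw [mul_assoc, c1', ← mul_assoc, ← mul_assoc, ← pow_two, d.zsq, one_mul]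
  have c2 : d.e1 * t' * d.e1⁻¹ = d.z * t' := by rw [c2']; group
  have conjmul : ∀ {x w : Γ}, t' * x * t'⁻¹ = d.z * x → Commute t' w →
      t' * (x * w) * t'⁻¹ = d.z * (x * w) := by
    intro x w hx hw
    calc t' * (x * w) * t'⁻¹ = (t' * x * t'⁻¹) * (t' * w * t'⁻¹) := by group
      _ = _ := by rw [hx, conj_of_commute hw, mul_assoc]
  have c3 : t' * (t' * d.e1) * t'⁻¹ = d.z * (t' * d.e1) := by
    calc t' * (t' * d.e1) * t'⁻¹ = t' * (t' * d.e1 * t'⁻¹) := by group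
      _ = _ := by rw [c1, ← mul_assoc, (hz t').eq, mul_assoc]
  -- products
  have n1 := PF1 hL heu hte (one2 ht'2) hz c1
  have n2 := PF1 hL hte heu (one2 d.e1sq) hz c2
  have n3 : (Cn u {t'}).ncard = (Cn u {d.e1}).ncard := by rw [Cn1_conj δ, hδ]
  have n4 := PF0 hL heu (one2 d.e1sq)
  have n5 := PF1 hL (x := d.e1 * u) (v := t') (heu.mul_left (Commute.refl u)) hte (one2 ht'2) hz
    (conjmul c1 hte)
  have n6 := PF1 hL (x := t' * d.e1) (v := t') (hte.mul_left heu) hte (one2 ht'2) hz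
    c3
  have p1 : Cn u {d.e1, t'} = Cn u {t', d.e1} :=
    Cn2_cong (fun ω h1 h2 => ⟨h2, h1⟩) (fun ω h1 h2 => ⟨h2, h1⟩)
  have p2 : Cn u {d.e1 * u, t'} = Cn u {t', d.e1 * u} :=
    Cn2_cong (fun ω h1 h2 => ⟨h2, h1⟩) (fun ω h1 h2 => ⟨h2, h1⟩)
  have p3 : Cn u {t', t' * d.e1} = Cn u {t', d.e1} :=
    Cn2_cong (fun ω h1 h2 => ⟨h1, com_cancel h1 h2⟩) (fun ω h1 h2 => ⟨h1, h1.mul_left h2⟩)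
  have q1 : (t' * u) * (t' * d.e1) = d.e1 * u := by
    rw [hte.eq, mul_assoc u, ← mul_assoc t', ht'm, one_mul, heu.eq]
  have p4 : Cn u {t' * u, t' * d.e1} = Cn u {t' * u, d.e1 * u} := by
    apply Cn2_cong
    · intro ω h1 h2
      exact ⟨h1, by rw [← q1]; exact h1.mul_left h2⟩
    · intro ω h1 h2
      exact ⟨h1, com_cancel h1 (by rw [q1]; exact h2)⟩
  rw [p1, p2] at n2
  rw [p3, p4] at n6
  rw [n5] at n4
  have hodd : Odd (Cn u ∅).ncard := d.idx_odd.of_dvd_nat (d.class_dvd huc)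
  -- strict index bound
  have hbound : (Cn u ∅).ncard * 3 ≤ 225 := by
    have hle := d.T_le_cent huc
    have h1 := relIndex_mul_index hle
    have h2 : (d.T : Subgroup Γ).relIndex (centralizer {u}) ≠ 1 := by
      intro h
      rw [relIndex_eq_one] at h
      have hδT : δ ∈ d.T := h (mem_centralizer_singleton_iff.mpr hδu)
      apply ht'A
      have := d.TA (d.invT hδT) d.e1A
      rw [← hδ] at this
      convert this using 1; group
    have h3 : Odd ((d.T : Subgroup Γ).relIndex (centralizer {u})) :=
      d.idx_odd.of_dvd_nat ⟨_, h1.symm⟩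
    have h4 : 3 ≤ (d.T : Subgroup Γ).relIndex (centralizer {u}) := by
      obtain ⟨k, hk⟩ := h3; omega
    rw [ncard_class]
    have := d.hidx
    nlinarith
  have apos : 0 < (Cn u {t', d.e1}).ncard := Cn_pos (by simp [hte, heu])
  have cpos : 0 < (Cn u {t', d.e1 * u}).ncard :=
    Cn_pos (by simp [hte, heu.mul_left (Commute.refl u)])
  have hk1 : d.e1 ∉ Kc u := fun h => d.e1not ((hKZ _ (d.hAG _ d.e1A) h).2 _ d.htT)
  have hk2 : t' * d.e1 ∉ Kc u := by
    intro h
    obtain ⟨h1, h2⟩ := hKZ _ (d.G.mul_mem ht'G (d.hAG _ d.e1A)) h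
    have := d.cen_mem (d.G.mul_mem ht'G (d.hAG _ d.e1A)) h1 (h2 _ (d.hAT _ d.e1A)).symm
    apply ht'A
    have := d.A.mul_mem this (d.A.inv_mem d.e1A)
    simpa using this
  have hκt' : d.κ * t' * d.κ⁻¹ = d.ι * (d.e1 * d.z * t') := by
    have h1 := d.out_conj ht'G ht'T ht'A (d.A.inv_mem d.hκA)
    have h2 : d.t * d.κ⁻¹ * d.t⁻¹ = d.κ'⁻¹ := by rw [κ']; group
    rw [h2] at h1
    have h3 : d.κ'⁻¹ = d.κ' * d.e2 := by
      rw [← d.κ'sq, inv_eq_iff_mul_eq_one]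
      have := d.κ'4
      calc d.κ' * (d.κ' * d.κ' ^ 2) = d.κ' ^ 4 := by group
        _ = 1 := this
    calc d.κ * t' * d.κ⁻¹ = d.κ * (t' * d.κ⁻¹ * t'⁻¹) * t' := by group
      _ = _ := by rw [h1, h3, ι, e2z]; group
  have n7 := Cn1_conj (u := u) (x := t') d.κ
  rw [hκt'] at n7
  have key : ∃ α β : ℕ, (Cn u ∅).ncard = α * β ^ 3 ∧ β ≠ 1 := by
    have q2 : d.e1 * d.z * t' = t' * d.e1 := by rw [c1', (hz d.e1).eq]
    rw [q2] at n7
    rcases hcase with hcase | hcase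
    · rw [← hcase] at n7
      have r1 : u * (t' * d.e1) = t' * (d.e1 * u) := by rw [← (hte.mul_left heu).eq, mul_assoc]
      have r2 : u * (t' * d.e1) = t' * u * d.e1 := by rw [← mul_assoc, hte.eq]
      have n8 := PF1 hL (x := u * (t' * d.e1)) (v := t')
        ((Commute.refl u).mul_left (hte.mul_left heu)) hte (one2 ht'2) hz
        (by rw [← (hte.mul_left heu).eq]; exact conjmul c3 hte)
      have p5 : Cn u {t', u * (t' * d.e1)} = Cn u {t', d.e1 * u} := by
        rw [r1]
        exact Cn2_cong (fun ω h1 h2 => ⟨h1, com_cancel h1 h2⟩) (fun ω h1 h2 => ⟨h1, h1.mul_left h2⟩)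
      have p6 : Cn u {t' * u, u * (t' * d.e1)} = Cn u {t' * u, d.e1} := by
        rw [r2]
        exact Cn2_cong (fun ω h1 h2 => ⟨h1, com_cancel h1 h2⟩) (fun ω h1 h2 => ⟨h1, h1.mul_left h2⟩)
      rw [p5, p6] at n8
      refine ⟨(Cn u {t' * u, d.e1 * u}).ncard, (Cn u {t', d.e1}).ncard, ?_, fun h1 => ?_⟩
      all_goals
        have k1 : (Cn u {t', d.e1}).ncard = (Cn u {t' * u, d.e1}).ncard := by
          rw [n7, n8, mul_comm] at n2
          exact (Nat.eq_of_mul_eq_mul_right cpos n2).symm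
        have k2 : (Cn u {t' * u, d.e1}).ncard = (Cn u {t', d.e1 * u}).ncard := by
          rw [n1, n2] at n3
          exact (Nat.eq_of_mul_eq_mul_left apos n3).symm
      · rw [n4, n1, ← k2, ← k1]; ring
      · apply hk2
        apply Kc_of_card
        rw [n4, n1, n6, ← k2, ← k1, h1]; ring
    · rw [Cn1_mul hcase] at n7
      have k1 : (Cn u {t', d.e1 * u}).ncard = (Cn u {t' * u, d.e1 * u}).ncard := by
        rw [n2, n6] at n7
        exact Nat.eq_of_mul_eq_mul_left apos n7
      have k2 : (Cn u {t' * u, d.e1}).ncard = (Cn u {t', d.e1 * u}).ncard := by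
        rw [n1, n2] at n3
        exact (Nat.eq_of_mul_eq_mul_left apos n3).symm
      refine ⟨(Cn u {t', d.e1}).ncard, (Cn u {t' * u, d.e1}).ncard, ?_, fun h1 => hk1 ?_⟩
      · rw [n4, n1, ← k1, ← k2]; ring
      · apply Kc_of_card
        rw [n4, n1, ← k1, ← k2, h1]; ring
  obtain ⟨α, β, hαβ, hβ⟩ := key
  rw [hαβ] at hodd hbound
  have hα : Odd α := Nat.Odd.of_mul_left hodd
  have hβo : Odd β := by
    have := Nat.Odd.of_mul_right hodd
    exact (Nat.odd_pow_iff (by norm_num)).mp this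
  have hβ3 : 3 ≤ β := by obtain ⟨k, hk⟩ := hβo; omega
  have hβ4 : β < 5 := by
    by_contra hlt
    push Not at hlt
    have h1 : 5 ^ 3 ≤ β ^ 3 := Nat.pow_le_pow_left hlt 3
    have := hα.pos
    nlinarith
  have hβe : β = 3 := by obtain ⟨k, hk⟩ := hβo; omega
  subst hβe
  have hαe : α = 1 := by obtain ⟨k, hk⟩ := hα; omega
  subst hαe
  exact d.PP huc hN (p := 3) (a := 3) (by norm_num) (by decide) (by rw [hαβ]; norm_num)

end MD
end WPf

set_option linter.unusedSectionVars false
set_option linter.unusedVariables false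
set_option linter.unusedSimpArgs false
namespace WPf
open Subgroup
variable {Γ : Type*} [Group Γ] [Finite Γ]
namespace MD
variable (d : MD Γ)

/-- when `z` is not weakly closed some element of `M` moves `z` to `e1` -/
theorem NZ2a (hw : ¬ Weak d.z) : ∃ j ∈ d.M, j * d.z * j⁻¹ = d.e1 := by
  have step : ∀ γ, γ * d.z * γ⁻¹ ∈ d.A → γ * d.z * γ⁻¹ ≠ d.z → ∃ j ∈ d.M, j * d.z * j⁻¹ = d.e1 := by
    intro γ hA hne
    obtain ⟨j, hj, hjT⟩ := d.mover d.zcen (γ := γ)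
    have hjM : j ∈ d.M := d.M_of (fun b hb => hjT b (d.mem_B.mp hb).1 (d.Bab hb (d.AB hA)))
    have hjM' := d.M.inv_mem hjM
    have h1 : j⁻¹ * d.z * j⁻¹⁻¹ = γ * d.z * γ⁻¹ := by
      conv_lhs => rw [← hj]
      group
    rcases d.M_inv hjM' d.zA d.zsq d.zne with h | h | h
    · exact ⟨_, hjM', h⟩
    · refine ⟨d.t * j⁻¹, d.M.mul_mem (d.T_le_M d.htT) hjM', ?_⟩
      calc d.t * j⁻¹ * d.z * (d.t * j⁻¹)⁻¹ = d.t * (j⁻¹ * d.z * j⁻¹⁻¹) * d.t⁻¹ := by group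
        _ = _ := by rw [h, te2]
    · exact absurd (h1.symm.trans h) hne
  have : ∃ γ, γ * d.z * γ⁻¹ ∈ d.T ∧ γ * d.z * γ⁻¹ ≠ d.z := by
    by_contra hcon
    push Not at hcon
    exact hw (weak_of d.T hcon)
  obtain ⟨γ, hγT, hγ⟩ := this
  by_cases hA : γ * d.z * γ⁻¹ ∈ d.A
  · exact step γ hA hγ
  obtain ⟨j, hj, hjT⟩ := d.mover d.zcen (γ := γ)
  have h1 : j * d.ι * j⁻¹ ∈ d.T := hjT _ (d.hAT _ d.ιA) (d.ιcen _ hγT).symm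
  have h2 : j * d.z * j⁻¹ = (j * d.ι * j⁻¹) ^ 2 := by rw [conj_pow, d.ιsq]
  apply step j
  · rw [h2]; exact d.sqA (d.conjG (d.hAG _ d.ιA) j) h1
  · intro h
    apply hγ
    have := hj.trans h.symm
    simpa using this

theorem NZ2F (hw : ¬ Weak d.z) : ∃ F ∈ d.T, (∀ m ∈ d.M, Commute m F) ∧ (d.f ^ 3)⁻¹ * F ∈ d.G := by
  obtain ⟨j, hjM, hj⟩ := d.NZ2a hw
  have htM := d.T_le_M d.htT
  have uniq : ∀ m ∈ d.M, ∀ n ∈ d.M, m * d.z * m⁻¹ = n * d.z * n⁻¹ → m * d.f * m⁻¹ = n * d.f * n⁻¹ := by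
    intro m hm n hn h
    have hM : n⁻¹ * m ∈ d.M := d.M.mul_mem (d.M.inv_mem hn) hm
    have hc : Commute (n⁻¹ * m) d.z := by
      apply commute_of_conj
      calc n⁻¹ * m * d.z * (n⁻¹ * m)⁻¹ = n⁻¹ * (m * d.z * m⁻¹) * n := by group
        _ = _ := by rw [h]; group
    have := conj_of_commute (d.cenM hM hc d.fB (d.hfT _ d.htT).symm)
    calc m * d.f * m⁻¹ = n * (n⁻¹ * m * d.f * (n⁻¹ * m)⁻¹) * n⁻¹ := by group
      _ = _ := by rw [this]
  have htj : d.t * j ∈ d.M := d.M.mul_mem htM hjM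
  have hz2 : (d.t * j) * d.z * (d.t * j)⁻¹ = d.e2 := by
    calc (d.t * j) * d.z * (d.t * j)⁻¹ = d.t * (j * d.z * j⁻¹) * d.t⁻¹ := by group
      _ = _ := by rw [hj, te1]
  have h2B := d.MB hjM d.fB
  have h3B := d.MB htj d.fB
  have h1B := d.fB
  obtain ⟨f2, hf2⟩ : ∃ x, j * d.f * j⁻¹ = x := ⟨_, rfl⟩
  obtain ⟨f3, hf3⟩ : ∃ x, (d.t * j) * d.f * (d.t * j)⁻¹ = x := ⟨_, rfl⟩
  have k1 : ∀ n ∈ d.M, n * d.z * n⁻¹ = d.z → n * d.f * n⁻¹ = d.f := by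
    intro n hn h
    have := uniq n hn 1 (one_mem _) (by rw [h]; simp)
    simpa using this
  have k2 : ∀ n ∈ d.M, n * d.z * n⁻¹ = d.e1 → n * d.f * n⁻¹ = f2 := fun n hn h =>
    (uniq n hn j hjM (by rw [h, hj])).trans hf2
  have k3 : ∀ n ∈ d.M, n * d.z * n⁻¹ = d.e2 → n * d.f * n⁻¹ = f3 := fun n hn h =>
    (uniq n hn _ htj (by rw [h, hz2])).trans hf3
  have kk : ∀ n ∈ d.M, (n * d.z * n⁻¹ = d.z ∧ n * d.f * n⁻¹ = d.f) ∨
      (n * d.z * n⁻¹ = d.e1 ∧ n * d.f * n⁻¹ = f2) ∨ (n * d.z * n⁻¹ = d.e2 ∧ n * d.f * n⁻¹ = f3) := by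
    intro n hn
    rcases d.M_inv hn d.zA d.zsq d.zne with h | h | h
    · exact Or.inr (Or.inl ⟨h, k2 n hn h⟩)
    · exact Or.inr (Or.inr ⟨h, k3 n hn h⟩)
    · exact Or.inl ⟨h, k1 n hn h⟩
  rw [hf2] at h2B
  rw [hf3] at h3B
  have c12 := d.Bab h1B h2B
  have c13 := d.Bab h1B h3B
  have c23 := d.Bab h2B h3B
  have e1 := d.ze1
  have e2 := d.ze2
  have e3 := d.e12
  refine ⟨d.f * f2 * f3, d.mulT (d.mulT d.hf (d.mem_B.mp h2B).1) (d.mem_B.mp h3B).1, ?_, ?_⟩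
  · intro m hm
    apply commute_of_conj
    have hmj := d.M.mul_mem hm hjM
    have hmtj := d.M.mul_mem hm htj
    have hs : m * (d.f * f2 * f3) * m⁻¹ = (m * d.f * m⁻¹) * ((m * j) * d.f * (m * j)⁻¹) *
        ((m * (d.t * j)) * d.f * (m * (d.t * j))⁻¹) := by
      rw [← hf2, ← hf3]; group
    have d1 : m * d.z * m⁻¹ ≠ (m * j) * d.z * (m * j)⁻¹ := by
      intro h
      apply e1
      have h' : (m * j) * d.z * (m * j)⁻¹ = m * (j * d.z * j⁻¹) * m⁻¹ := by group
      rw [h', hj] at h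
      simpa using h
    have d2 : m * d.z * m⁻¹ ≠ (m * (d.t * j)) * d.z * (m * (d.t * j))⁻¹ := by
      intro h
      apply e2
      have h' : (m * (d.t * j)) * d.z * (m * (d.t * j))⁻¹ = m * ((d.t * j) * d.z * (d.t * j)⁻¹) * m⁻¹ := by group
      rw [h', hz2] at h
      simpa using h
    have d3 : (m * j) * d.z * (m * j)⁻¹ ≠ (m * (d.t * j)) * d.z * (m * (d.t * j))⁻¹ := by
      intro h
      apply e3
      have h' : (m * (d.t * j)) * d.z * (m * (d.t * j))⁻¹ = m * ((d.t * j) * d.z * (d.t * j)⁻¹) * m⁻¹ := by group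
      have h'' : (m * j) * d.z * (m * j)⁻¹ = m * (j * d.z * j⁻¹) * m⁻¹ := by group
      rw [h', hz2, h'', hj] at h
      simpa using h
    rw [hs]
    have r1 : f2 * d.f = d.f * f2 := c12.symm.eq
    have r2 : f3 * d.f = d.f * f3 := c13.symm.eq
    have r3 : f3 * f2 = f2 * f3 := c23.symm.eq
    have r1' : ∀ x, f2 * (d.f * x) = d.f * (f2 * x) := fun x => by rw [← mul_assoc, r1, mul_assoc]
    have r2' : ∀ x, f3 * (d.f * x) = d.f * (f3 * x) := fun x => by rw [← mul_assoc, r2, mul_assoc]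
    have r3' : ∀ x, f3 * (f2 * x) = f2 * (f3 * x) := fun x => by rw [← mul_assoc, r3, mul_assoc]
    rcases kk m hm with ⟨a, a'⟩ | ⟨a, a'⟩ | ⟨a, a'⟩ <;>
    rcases kk _ hmj with ⟨b, b'⟩ | ⟨b, b'⟩ | ⟨b, b'⟩ <;>
    rcases kk _ hmtj with ⟨c, c'⟩ | ⟨c, c'⟩ | ⟨c, c'⟩ <;>
    first
    | exact absurd (a.trans b.symm) d1
    | exact absurd (a.trans c.symm) d2
    | exact absurd (b.trans c.symm) d3
    | (rw [a', b', c']; done)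
    | (rw [a', b', c']; simp only [mul_assoc, r1, r2, r3, r1', r2', r3']; done)
  · have := d.hG
    rw [← QuotientGroup.eq_one_iff]
    have hq : ∀ x : Γ, ((x * d.f * x⁻¹ : Γ) : Γ ⧸ d.G) = (d.f : Γ ⧸ d.G) := by
      intro x
      have := (QuotientGroup.eq_one_iff (N := d.G) _).mpr (d.comG x d.f)
      rw [QuotientGroup.mk_mul, QuotientGroup.mk_inv] at this
      exact mul_inv_eq_one.mp this
    have q2 := hq j
    have q3 := hq (d.t * j)
    rw [hf2] at q2
    rw [hf3] at q3
    rw [QuotientGroup.mk_mul, QuotientGroup.mk_mul, QuotientGroup.mk_mul, q2, q3, QuotientGroup.mk_inv,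
      QuotientGroup.mk_pow]
    group

theorem NZ2 (hw : ¬ Weak d.z) : d.Concl := by
  obtain ⟨j, hjM, hj⟩ := d.NZ2a hw
  obtain ⟨F, hFT, hFM, hFG⟩ := d.NZ2F hw
  have hjz : ¬ Commute j d.z := fun h => d.ze1 ((conj_of_commute h).symm.trans hj)
  by_cases hcen : ∀ γ, Commute γ F
  · obtain ⟨K, hK⟩ := d.twoT d.hf
    obtain ⟨m, hm⟩ : ∃ m : ℕ, 3 * m ≡ 1 [MOD 2 ^ K] := by
      by_cases hK1 : 1 < 2 ^ K
      · obtain ⟨m, hm, h⟩ := Nat.exists_mul_mod_eq_one_of_coprime (Nat.Coprime.pow_right K (by decide : Nat.Coprime 3 2)) hK1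
        exact ⟨m, by rw [Nat.ModEq, h, Nat.mod_eq_of_lt hK1]⟩
      · have : 2 ^ K = 1 := by have := Nat.one_le_two_pow (n := K); omega
        exact ⟨1, by rw [this]; exact Nat.modEq_one⟩
    have hfm : d.f ^ (3 * m) = d.f := by
      have := pow_eq_pow_iff_modEq (x := d.f).mpr (hm.of_dvd (orderOf_dvd_of_pow_eq_one hK))
      rwa [pow_one] at this
    refine ⟨d.f⁻¹ * F ^ m, ?_, fun x _ => ?_⟩
    · have := d.hG
      rw [← QuotientGroup.eq_one_iff] at hFG ⊢
      rw [QuotientGroup.mk_mul, QuotientGroup.mk_inv, inv_mul_eq_one, QuotientGroup.mk_pow] at hFG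
      rw [QuotientGroup.mk_mul, QuotientGroup.mk_inv, inv_mul_eq_one, QuotientGroup.mk_pow, ← hFG,
        ← pow_mul, ← QuotientGroup.mk_pow, hfm]
    · rw [mul_inv_cancel_left]; exact ((hcen x).pow_right m).symm
  obtain ⟨n, hun, hu2⟩ := exists_noncentral (d.twoT hFT) hcen
  have huT := d.powT hFT n
  have huM : ∀ m ∈ d.M, Commute m (F ^ n) := fun m hm => (hFM m hm).pow_right n
  generalize F ^ n = u at *
  have huc : ∀ y ∈ d.T, Commute y u := fun y hy => huM y (d.T_le_M hy)
  have huw := d.isolation huT huc huM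
  have hL : Lat u := ⟨huw, d.twoT huT, hu2⟩
  have hN := d.Nu_not huT huw hun
  have hzK : d.z ∉ Kc u := fun h => hjz ((d.KZ hN h).2 j)
  have heT := d.hAT _ d.e1A
  have he1u := huc _ heT
  have he2u := huc _ (d.hAT _ d.e2A)
  have hzu := huc _ (d.hAT _ d.zA)
  have hzuc : ∀ y ∈ d.T, Commute y (d.z * u) := fun y hy => (d.zcen y hy).mul_right (huc y hy)
  have hzuT : d.z * u ∈ d.T := d.mulT (d.hAT _ d.zA) huT
  have n1 := PF1 hL (x := d.z * u) (v := d.e1) (c := 1) (hzu.mul_left (Commute.refl u)) he1u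
    (fun γ => by rw [d.e1sq]; exact Commute.one_right _) (fun γ => Commute.one_right _)
    (by rw [one_mul]; exact conj_of_commute (hzuc _ heT))
  have q1 : d.e1 * u = d.e2 * (d.z * u) := by
    rw [e2z, mul_assoc, ← mul_assoc d.z d.z u, ← pow_two, d.zsq, one_mul]
  have p1 : Cn u {d.e1 * u, d.z * u} = Cn u {d.e2, d.z * u} := by
    rw [q1]
    exact Cn2_cong (fun ω h1 h2 => ⟨com_cancel_right h2 h1, h2⟩) (fun ω h1 h2 => ⟨h1.mul_left h2, h2⟩)
  have p2 : (Cn u {d.e1, d.z * u}).ncard = (Cn u {d.e2, d.z * u}).ncard := by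
    rw [Cn2_conj d.t, te1, conj_of_commute (hzuc _ d.htT)]
  rw [p1, ← p2] at n1
  have n2 := PF0 hL (v := d.z) hzu (fun γ => by rw [d.zsq]; exact Commute.one_right _)
  have hr : (Cn u {d.e1, d.z * u}).ncard % 4 = 1 := by
    apply mod_four _ d.κ' u d.κ'4
    · intro ω hω
      rw [mem_Cn2] at hω ⊢
      have hc := d.hAab _ d.e1A _ d.κ'A
      have hc2 := (hzuc _ (d.hAT _ d.κ'A)).symm
      exact ⟨isConj_conj hω.1 _, (hc.mul_right hω.2.1).mul_right hc.inv_right,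
        (hc2.mul_right hω.2.2).mul_right hc2.inv_right⟩
    · rw [mem_Cn2]; exact ⟨IsConj.refl _, he1u, hzu.mul_left (Commute.refl u)⟩
    · exact huc _ (d.hAT _ d.κ'A)
    · intro ω hω hc
      rw [d.κ'sq] at hc
      rw [mem_Cn2] at hω
      have hz : Commute d.z ω := hω.2.1.mul_left hc
      exact huw.comm_eq hL.two hω.1 (IsConj.refl _) (com_cancel hz hω.2.2).symm
  have hX : 25 ≤ (Cn u {d.z * u}).ncard := by
    have h1 : (Cn u {d.e1, d.z * u}).ncard ≠ 1 := by
      intro h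
      rw [h] at n1
      rw [n1, mul_one, mul_one] at n2
      exact hzK (Kc_of_card n2)
    generalize (Cn u {d.e1, d.z * u}).ncard = r at *
    have : 5 ≤ r := by omega
    rw [n1]; nlinarith
  have hsub : Cn u {d.z * u} ⊆ {ω | ∃ γ ∈ centralizer {d.z * u}, γ * u * γ⁻¹ = ω} := by
    intro ω hω
    rw [mem_Cn1] at hω
    obtain ⟨μ, hμ, he⟩ := hL.surj (IsConj.refl u) hω.1
    refine ⟨μ, mem_centralizer_singleton_iff.mpr ?_, he⟩
    exact (hL.comm_mid hμ (IsConj.refl u) he (hzu.mul_left (Commute.refl u)) hω.2).symm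
  have hX2 := hX.trans (Set.ncard_le_ncard hsub)
  rw [ncard_orbit] at hX2
  have hTD := d.T_le_cent hzuc
  have h1 := relIndex_mul_index hTD
  have h2 : (centralizer {u}).relIndex (centralizer {d.z * u}) ≤ (d.T : Subgroup Γ).relIndex (centralizer {d.z * u}) := by
    apply Nat.le_of_dvd
    · apply Nat.pos_of_ne_zero
      intro h
      rw [h, zero_mul] at h1
      have := d.idx_odd.pos
      omega
    · exact relIndex_dvd_of_le_left _ (d.T_le_cent huc)
  have h3 : (Cn (d.z * u) ∅).ncard ≤ 9 := by
    rw [ncard_class]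
    have := d.hidx
    nlinarith
  have h4 : Odd (Cn (d.z * u) ∅).ncard := d.idx_odd.of_dvd_nat (d.class_dvd hzuc)
  have hnc : ¬ ∀ γ, Commute γ (d.z * u) := fun h => hjz (by
    have := (h j).mul_right (huM j hjM).inv_right
    simpa using this)
  have h5 : (Cn (d.z * u) ∅).ncard ≠ 1 := fun h => hnc (central_of_card h)
  have hN2 : ¬ IsPGroup 2 (Nu (d.z * u)) := by
    intro h
    have hle := normal_two_le d.T (Nu_normal _) h
    by_cases hb : Nu (d.z * u) = ⊥
    · apply hnc
      intro γ
      have := Nu_mem (d.z * u) γ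
      rw [hb, mem_bot, inv_mul_eq_one] at this
      exact commute_of_conj this.symm
    · have hz := d.TR1 (Nu_normal _) (d.Nu_le _) hb
      apply hun
      intro γ
      apply commute_of_conj
      apply huw.eq_of_mem d.T huT
      have k1 := hle (Nu_mem (d.z * u) γ)
      have k2 : γ * d.z * γ⁻¹ ∈ d.T := hle ((Nu_normal _).conj_mem _ hz γ)
      have := d.mulT (d.invT k2) (d.mulT hzuT k1)
      convert! this using 1
      group
  have h6 : (Cn (d.z * u) ∅).ncard = 3 ∨ (Cn (d.z * u) ∅).ncard = 5 ∨ (Cn (d.z * u) ∅).ncard = 7 ∨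
      (Cn (d.z * u) ∅).ncard = 9 := by
    obtain ⟨k, hk⟩ := h4; omega
  rcases h6 with h | h | h | h
  · exact d.PP hzuc hN2 (p := 3) (a := 1) (by norm_num) (by decide) (by rw [h]; norm_num)
  · exact d.PP hzuc hN2 (p := 5) (a := 1) (by norm_num) (by decide) (by rw [h]; norm_num)
  · exact d.PP hzuc hN2 (p := 7) (a := 1) (by norm_num) (by decide) (by rw [h]; norm_num)
  · exact d.PP hzuc hN2 (p := 3) (a := 2) (by norm_num) (by decide) (by rw [h]; norm_num)

theorem main : d.Concl := by
  by_cases hz : ∀ γ, Commute γ d.z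
  · exact d.CaseZ hz
  by_cases hw : Weak d.z
  · exact d.NZ1 hw hz
  · exact d.NZ2 hw

end MD
end WPf

set_option linter.unusedSectionVars false
set_option linter.unusedVariables false
namespace WPf
open Subgroup

theorem W_comm {n : ℕ} (x y : Wreathed.W n) (hx : x.right = 1) (hy : y.right = 1) : x * y = y * x := by
  ext <;> simp [hx, hy, mul_comm]

theorem W_two {n : ℕ} (x y : Wreathed.W n) (hx : x.right ≠ 1) (hy : y.right ≠ 1) : (x * y).right = 1 := by
  rw [SemidirectProduct.mul_right]
  generalize x.right = a at *
  generalize y.right = b at *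
  revert a b; decide

theorem two_tors {n : ℕ} (hn : 2 ≤ n) (x : ZMod (2 ^ n)) (h : x + x = 0) : x = 0 ∨ x = (2 ^ (n - 1) : ℕ) := by
  have : NeZero (2 ^ n) := ⟨by positivity⟩
  have h1 : ((x.val + x.val : ℕ) : ZMod (2 ^ n)) = 0 := by
    push_cast; rw [ZMod.natCast_zmod_val]; exact h
  rw [ZMod.natCast_eq_zero_iff] at h1
  have h2 := x.val_lt
  obtain ⟨k, hk⟩ := h1
  have h3 : 2 ^ n = 2 * 2 ^ (n - 1) := by rw [← pow_succ']; congr 1; omega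
  have h4 : x.val = 0 ∨ x.val = 2 ^ (n - 1) := by
    have hp : 0 < 2 ^ (n - 1) := by positivity
    have : k < 2 := by
      by_contra hc
      push Not at hc
      nlinarith
    interval_cases k
    · left; omega
    · right; omega
  rcases h4 with h4 | h4
  · left; rwa [ZMod.val_eq_zero] at h4
  · right; rw [← h4, ZMod.natCast_zmod_val]

def kap (n : ℕ) : Wreathed.W n := SemidirectProduct.inl (Multiplicative.ofAdd ((2 ^ (n - 2) : ℕ) : ZMod (2 ^ n)), 1)
def tau (n : ℕ) : Wreathed.W n := SemidirectProduct.inr (Multiplicative.ofAdd 1)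

theorem kap_pow (n k : ℕ) : kap n ^ k =
    SemidirectProduct.inl (Multiplicative.ofAdd ((k * 2 ^ (n - 2) : ℕ) : ZMod (2 ^ n)), 1) := by
  rw [kap, ← map_pow, Prod.pow_mk, ← ofAdd_nsmul, one_pow, nsmul_eq_mul]
  push_cast; rfl

theorem kap_two {n : ℕ} (hn : 2 ≤ n) : kap n ^ 2 =
    SemidirectProduct.inl (Multiplicative.ofAdd ((2 ^ (n - 1) : ℕ) : ZMod (2 ^ n)), 1) := by
  rw [kap_pow, ← pow_succ']; congr 5; omega

theorem kap_four {n : ℕ} (hn : 2 ≤ n) : kap n ^ 4 = 1 := by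
  rw [kap_pow, show 4 * 2 ^ (n - 2) = 2 ^ n by
    rw [show 4 = 2 ^ 2 by norm_num, ← pow_add]; congr 1; omega, ZMod.natCast_self]
  rfl

theorem half_ne {n : ℕ} (hn : 2 ≤ n) : ((2 ^ (n - 1) : ℕ) : ZMod (2 ^ n)) ≠ 0 := by
  rw [Ne, ZMod.natCast_eq_zero_iff]
  intro h
  have := Nat.le_of_dvd (by positivity) h
  have h2 : 2 ^ (n - 1) < 2 ^ n := Nat.pow_lt_pow_right (by norm_num) (by omega)
  omega

theorem tau_conj (n : ℕ) (x : Wreathed.C n × Wreathed.C n) : tau n * SemidirectProduct.inl x * (tau n)⁻¹ =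
    SemidirectProduct.inl (x.2, x.1) := by
  rw [tau, ← map_inv, ← SemidirectProduct.inl_aut]
  rfl

theorem W_inv {n : ℕ} (hn : 2 ≤ n) (x : Wreathed.W n) (hx : x.right = 1) (h2 : x ^ 2 = 1) :
    x = 1 ∨ x = kap n ^ 2 ∨ x = tau n * kap n ^ 2 * (tau n)⁻¹ ∨
      x = kap n ^ 2 * (tau n * kap n ^ 2 * (tau n)⁻¹) := by
  obtain ⟨⟨a, b⟩, rfl⟩ : ∃ y, x = SemidirectProduct.inl y :=
    ⟨x.left, by ext <;> simp [hx]⟩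
  rw [← map_pow, ← map_one SemidirectProduct.inl, SemidirectProduct.inl_inj, pow_two, Prod.mk_mul_mk,
    Prod.mk_eq_one] at h2
  rw [kap_two hn, tau_conj, ← map_mul, ← map_one SemidirectProduct.inl]
  simp only [SemidirectProduct.inl_inj]
  have ha := two_tors hn (Multiplicative.toAdd a) h2.1
  have hb := two_tors hn (Multiplicative.toAdd b) h2.2
  have key : ∀ c : Wreathed.C n, (Multiplicative.toAdd c = 0 ∨ Multiplicative.toAdd c = (2 ^ (n - 1) : ℕ)) →
      c = 1 ∨ c = Multiplicative.ofAdd ((2 ^ (n - 1) : ℕ) : ZMod (2 ^ n)) := fun c h => h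
  rcases key a ha with rfl | rfl <;> rcases key b hb with rfl | rfl
  · exact Or.inl rfl
  · exact Or.inr (Or.inr (Or.inl rfl))
  · exact Or.inr (Or.inl rfl)
  · refine Or.inr (Or.inr (Or.inr ?_))
    rw [Prod.mk_mul_mk, mul_one, one_mul]

section
variable {G : Type*} [Group G] [Finite G]

instance fin_sd {N H : Type*} [Group N] [Group H] [Finite N] [Finite H] (φ : H →* MulAut N) :
    Finite (N ⋊[φ] H) := Finite.of_equiv _ SemidirectProduct.equivProd.symm

/-- an abelian-type reduction: the extension by `ψ` -/
abbrev Ext (ψ : MulAut G) : Type _ := G ⋊[(zpowers ψ).subtype] (zpowers ψ)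

theorem zfix {ψ : MulAut G} {P : Subgroup G} (h : ∀ x ∈ P, ψ x = x) (σ : zpowers ψ) {x : G} (hx : x ∈ P) :
    (σ : MulAut G) x = x := by
  have : zpowers ψ ≤ MulAction.stabilizer (MulAut G) x := by
    rw [zpowers_le, MulAction.mem_stabilizer_iff]; exact h x hx
  exact MulAction.mem_stabilizer_iff.mp (this σ.2)

def TT {ψ : MulAut G} {P : Subgroup G} (h : ∀ x ∈ P, ψ x = x) : Subgroup (Ext ψ) where
  carrier := {x | x.left ∈ P}
  one_mem' := by simp [P.one_mem]
  mul_mem' := by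
    intro a b ha hb
    simp only [Set.mem_ofPred_eq] at ha hb ⊢
    rw [SemidirectProduct.mul_left]
    refine P.mul_mem ha ?_
    rw [show (((zpowers ψ).subtype a.right) b.left) = b.left from zfix h a.right hb]; exact hb
  inv_mem' := by
    intro a ha
    simp only [Set.mem_ofPred_eq] at ha ⊢
    rw [SemidirectProduct.inv_left]
    rw [show (((zpowers ψ).subtype a.right⁻¹) a.left⁻¹) = a.left⁻¹ from zfix h a.right⁻¹ (P.inv_mem ha)]
    exact P.inv_mem ha

theorem mem_TT {ψ : MulAut G} {P : Subgroup G} (h : ∀ x ∈ P, ψ x = x) {x : Ext ψ} : x ∈ TT h ↔ x.left ∈ P := Iff.rfl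

theorem card_Ext (ψ : MulAut G) : Nat.card (Ext ψ) = Nat.card G * Nat.card (zpowers ψ) := by
  rw [Nat.card_congr SemidirectProduct.equivProd, Nat.card_prod]

theorem card_TT {ψ : MulAut G} {P : Subgroup G} (h : ∀ x ∈ P, ψ x = x) :
    Nat.card (TT h) = Nat.card P * Nat.card (zpowers ψ) := by
  rw [← Nat.card_prod]
  refine Nat.card_congr ⟨fun x => (⟨x.1.left, x.2⟩, x.1.right), fun y => ⟨⟨y.1, y.2⟩, y.1.2⟩, ?_, ?_⟩
  · intro x; rfl
  · intro y; rfl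

theorem index_TT {ψ : MulAut G} {P : Subgroup G} (h : ∀ x ∈ P, ψ x = x) : (TT h).index = P.index := by
  have h1 := (TT h).card_mul_index
  rw [card_TT, card_Ext, ← P.card_mul_index] at h1
  have : 0 < Nat.card P * Nat.card (zpowers ψ) := Nat.mul_pos Nat.card_pos Nat.card_pos
  apply Nat.eq_of_mul_eq_mul_left this
  rw [h1]; ring

theorem ext_conj {ψ : MulAut G} (g : G) :
    (SemidirectProduct.inr ⟨ψ, mem_zpowers ψ⟩ : Ext ψ) * SemidirectProduct.inl g *
      (SemidirectProduct.inr ⟨ψ, mem_zpowers ψ⟩)⁻¹ = SemidirectProduct.inl (ψ g) := by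
  rw [← map_inv, ← SemidirectProduct.inl_aut]; rfl

theorem inl_range {ψ : MulAut G} {x : Ext ψ} :
    x ∈ (SemidirectProduct.inl : G →* Ext ψ).range ↔ x.right = 1 := by
  rw [SemidirectProduct.range_inl_eq_ker_rightHom, MonoidHom.mem_ker]; rfl

theorem inner_of_fix (hO : ∀ N : Subgroup G, N.Normal → ¬ 2 ∣ Nat.card N → N = ⊥)
    {n : ℕ} (hn : 2 ≤ n) (P : Sylow 2 G) (e : (P : Subgroup G) ≃* Wreathed.W n)
    (hidx : (P : Subgroup G).index ≤ 225) (ψ : MulAut G) (hfix : ∀ x ∈ (P : Subgroup G), ψ x = x)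
    (hord : ∃ k : ℕ, orderOf ψ = 2 ^ k) (hcol : IsColeman ψ) : ψ ∈ innAut G := by
  obtain ⟨k, hk⟩ := hord
  have hF : Finite (MulAut G) := Finite.of_injective (fun (σ : MulAut G) => (σ : G → G)) DFunLike.coe_injective
  let g : Wreathed.W n →* Ext ψ := (SemidirectProduct.inl.comp (P : Subgroup G).subtype).comp e.symm.toMonoidHom
  have hg : Function.Injective g := by
    intro a b hab
    have h1 := SemidirectProduct.inl_injective hab
    exact e.symm.injective (Subtype.ext h1)
  have hgr : ∀ w, (g w).right = 1 := fun w => rfl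
  have hgl : ∀ w, (g w).left ∈ (P : Subgroup G) := fun w => (e.symm w).2
  have hgs : ∀ x : Ext ψ, x.right = 1 → x.left ∈ (P : Subgroup G) → ∃ w, g w = x := by
    intro x h1 h2
    refine ⟨e ⟨x.left, h2⟩, ?_⟩
    ext
    · simp [g]
    · simp [g, h1]
  have hT2 : IsPGroup 2 (TT hfix) := by
    obtain ⟨m, hm⟩ := P.2.exists_card_eq
    have : Nat.card (zpowers ψ) = 2 ^ k := by rw [Nat.card_zpowers, hk]
    exact IsPGroup.of_card (n := m + k) (by rw [card_TT, this, pow_add]; congr 1)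
  have hTi : ¬ 2 ∣ (TT hfix).index := by rw [index_TT]; exact P.not_dvd_index
  let f : Ext ψ := SemidirectProduct.inr ⟨ψ, mem_zpowers ψ⟩
  let A : Subgroup (Ext ψ) := (SemidirectProduct.rightHom : Wreathed.W n →* _).ker.map g
  have memA : ∀ {w}, g w ∈ A ↔ w.right = 1 := by
    intro w
    constructor
    · rintro ⟨v, hv, he⟩
      rw [← hg he]; exact hv
    · intro h; exact ⟨w, h, rfl⟩
  have hTT : ∀ x : Ext ψ, x ∈ hT2.toSylow hTi ↔ x.left ∈ (P : Subgroup G) := fun x => Iff.rfl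
  let D : MD (Ext ψ) :=
    { G := (SemidirectProduct.inl : G →* Ext ψ).range
      T := hT2.toSylow hTi
      f := f
      A := A
      t := g (tau n)
      κ := g (kap n)
      hG := by rw [SemidirectProduct.range_inl_eq_ker_rightHom]; infer_instance
      hf := by rw [hTT]; exact one_mem _
      hfT := by
        intro x hx
        rw [hTT] at hx
        ext
        · simp [f, SemidirectProduct.mul_left, hfix _ hx]
        · have : ∀ a b : zpowers ψ, a * b = b * a := (isMulCommutative_iff.mp inferInstance)
          exact congrArg (fun (σ : zpowers ψ) => (σ : MulAut G) _) (this f.right x.right)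
      hgen := by
        intro γ
        refine ⟨SemidirectProduct.inl γ.left, ⟨_, rfl⟩, ?_⟩
        have h1 : γ.right ∈ Submonoid.powers (⟨ψ, mem_zpowers ψ⟩ : zpowers ψ) := by
          rw [mem_powers_iff_mem_zpowers]
          obtain ⟨i, hi⟩ := mem_zpowers_iff.mp γ.right.2
          exact mem_zpowers_iff.mpr ⟨i, Subtype.ext hi⟩
        obtain ⟨i, hi⟩ := h1
        refine ⟨i, ?_⟩
        simp only [f]
        rw [← map_pow]
        simp only at hi
        rw [hi, SemidirectProduct.inl_left_mul_inr_right]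
      hAG := by rintro _ ⟨w, hw, rfl⟩; rw [inl_range]; exact hgr w
      hAT := by rintro _ ⟨w, hw, rfl⟩; rw [hTT]; exact hgl w
      hAab := by
        rintro _ ⟨v, hv, rfl⟩ _ ⟨w, hw, rfl⟩
        change g v * g w = g w * g v
        rw [← map_mul, W_comm v w hv hw, map_mul]
      hA2 := by
        intro x hx hxT y hy hyT hxA hyA
        rw [inl_range] at hx hy
        rw [hTT] at hxT hyT
        obtain ⟨v, rfl⟩ := hgs x hx hxT
        obtain ⟨w, rfl⟩ := hgs y hy hyT
        rw [memA] at hxA hyA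
        rw [← map_mul, memA]
        exact W_two v w hxA hyA
      htG := by rw [inl_range]; exact hgr _
      htT := by rw [hTT]; exact hgl _
      htA := by rw [memA]; simp [tau]
      hκA := by rw [memA]; simp [kap]
      hκ4 := by rw [← map_pow, kap_four hn, map_one]
      hκ2 := by
        rw [← map_pow, Ne, map_eq_one_iff g hg, kap_two hn, ← map_one SemidirectProduct.inl,
          SemidirectProduct.inl_inj, Prod.mk_eq_one]
        intro h; exact half_ne hn h.1
      hκt := by
        rw [← map_pow, ← map_inv, ← map_mul, ← map_mul, Ne, hg.eq_iff, kap_two hn, tau_conj,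
          SemidirectProduct.inl_inj, Prod.mk_inj]
        intro h; exact half_ne hn h.2
      hinv := by
        rintro _ ⟨w, hw, rfl⟩ h2
        rw [← map_pow, map_eq_one_iff g hg] at h2
        simp only [← map_pow, ← map_inv, ← map_mul, hg.eq_iff, map_eq_one_iff g hg]
        exact W_inv hn w hw h2
      hO := by
        intro N hN hle h2
        have h3 : N.comap (SemidirectProduct.inl : G →* Ext ψ) = ⊥ := by
          apply hO _ inferInstance
          have : (N.comap (SemidirectProduct.inl : G →* Ext ψ)).map SemidirectProduct.inl = N :=
            map_comap_eq_self hle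
          rw [← card_map_of_injective (SemidirectProduct.inl_injective (φ := (zpowers ψ).subtype)), this]
          exact h2
        rw [← map_comap_eq_self hle, h3, Subgroup.map_bot]
      hidx := by
        change (TT hfix).index ≤ 225
        rw [index_TT]; exact hidx
      hCol := by
        intro p hp ho
        have := Fact.mk hp
        obtain ⟨Q0⟩ : Nonempty (Sylow p G) := inferInstance
        obtain ⟨y, hy⟩ := hcol p hp Q0
        have hQ : IsPGroup p ((Q0 : Subgroup G).map (SemidirectProduct.inl : G →* Ext ψ)) :=
          Q0.2.map _
        have hQi : ¬ p ∣ ((Q0 : Subgroup G).map (SemidirectProduct.inl : G →* Ext ψ)).index := by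
          have h1 := ((Q0 : Subgroup G).map (SemidirectProduct.inl : G →* Ext ψ)).card_mul_index
          rw [card_map_of_injective SemidirectProduct.inl_injective, card_Ext,
            ← (Q0 : Subgroup G).card_mul_index, Nat.card_zpowers, hk, mul_assoc] at h1
          rw [Nat.eq_of_mul_eq_mul_left Nat.card_pos h1, hp.dvd_mul]
          rintro (h | h)
          · exact Q0.not_dvd_index h
          · have := (Nat.prime_dvd_prime_iff_eq hp Nat.prime_two).mp (hp.dvd_of_dvd_pow h)
            subst this; exact absurd ho (by decide)
        refine ⟨hQ.toSylow hQi, SemidirectProduct.inl (ψ⁻¹ y), ⟨_, rfl⟩, ?_⟩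
        rintro _ ⟨q, hq, rfl⟩
        apply commute_of_conj
        have h1 : f * SemidirectProduct.inl (ψ⁻¹ y) * SemidirectProduct.inl q *
            (f * SemidirectProduct.inl (ψ⁻¹ y))⁻¹ =
            f * SemidirectProduct.inl (ψ⁻¹ y * q * (ψ⁻¹ y)⁻¹) * f⁻¹ := by
          rw [map_mul, map_mul, map_inv]; group
        rw [h1, ext_conj]
        have h3 : ψ (ψ⁻¹ y * q * (ψ⁻¹ y)⁻¹) = q := by
          rw [map_mul ψ, map_mul ψ, map_inv ψ, hy q hq, MulAut.apply_inv_self]; group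
        rw [h3] }
  obtain ⟨s, ⟨s0, rfl⟩, hs⟩ := D.main
  refine ⟨(ψ s0)⁻¹, ?_⟩
  ext x
  rw [MulAut.conj_apply]
  have h1 := conj_of_commute (hs (SemidirectProduct.inl x) ⟨x, rfl⟩)
  have h2 : D.f * SemidirectProduct.inl s0 * SemidirectProduct.inl x * (D.f * SemidirectProduct.inl s0)⁻¹ =
      f * SemidirectProduct.inl (s0 * x * s0⁻¹) * f⁻¹ := by
    rw [map_mul, map_mul, map_inv]
    change f * _ * _ * (f * _)⁻¹ = _
    group
  rw [h2, ext_conj, SemidirectProduct.inl_inj, map_mul, map_mul, map_inv] at h1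
  conv_lhs => rw [← h1]
  group

theorem conj_col (y : G) : MulAut.conj y ∈ autCol G := fun p _ P => ⟨y⁻¹, fun u _ => by
  rw [MulAut.conj_apply, inv_inv]⟩

theorem caseA (hO : ∀ N : Subgroup G, N.Normal → ¬ 2 ∣ Nat.card N → N = ⊥)
    {n : ℕ} (hn : 2 ≤ n) (P : Sylow 2 G) (e : (P : Subgroup G) ≃* Wreathed.W n)
    (hidx : (P : Subgroup G).index ≤ 225) (φ : MulAut G)
    (hord : ∃ k : ℕ, orderOf φ = 2 ^ k) (hcol : IsColeman φ) : φ ∈ innAut G := by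
  have hF : Finite (MulAut G) := Finite.of_injective (fun (σ : MulAut G) => (σ : G → G)) DFunLike.coe_injective
  obtain ⟨y, hy⟩ := hcol 2 Nat.prime_two P
  obtain ⟨ψ, hψ⟩ : ∃ ψ, ψ = MulAut.conj y * φ := ⟨_, rfl⟩
  have hψc : ψ ∈ autCol G := by rw [hψ]; exact mul_mem (conj_col y) hcol
  have hψf : ∀ x ∈ (P : Subgroup G), ψ x = x := by
    intro x hx
    rw [hψ, MulAut.mul_apply, MulAut.conj_apply, hy x hx]; group
  obtain ⟨k, q, hq⟩ : ∃ k q, orderOf ψ = 2 ^ k * q ∧ ¬ 2 ∣ q := by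
    obtain ⟨k, q, h1, h2⟩ := Nat.exists_eq_pow_mul_and_not_dvd (orderOf_pos ψ).ne' 2 (by norm_num)
    exact ⟨k, q, h2, h1⟩
  have hq0 : q ≠ 0 := by rintro rfl; exact hq.2 (dvd_zero _)
  have hin : ψ ^ q ∈ innAut G := by
    apply inner_of_fix hO hn P e hidx
    · intro x hx
      exact zfix hψf ⟨ψ ^ q, pow_mem (mem_zpowers ψ) q⟩ hx
    · refine ⟨k, ?_⟩
      rw [orderOf_pow' _ hq0, hq.1, Nat.gcd_eq_right (Dvd.intro_left _ rfl), Nat.mul_div_cancel _ (Nat.pos_of_ne_zero hq0)]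
    · exact pow_mem hψc q
  have h1 : (QuotientGroup.mk ψ : MulAut G ⧸ innAut G) = QuotientGroup.mk φ := by
    rw [hψ, QuotientGroup.mk_mul, (QuotientGroup.eq_one_iff (N := innAut G) _).mpr ⟨y, rfl⟩, one_mul]
  rw [← QuotientGroup.eq_one_iff, QuotientGroup.mk_pow, h1] at hin
  rw [← QuotientGroup.eq_one_iff]
  obtain ⟨m, hm⟩ := hord
  have h2 : (QuotientGroup.mk φ : MulAut G ⧸ innAut G) ^ 2 ^ m = 1 := by
    rw [← QuotientGroup.mk_pow, ← hm, pow_orderOf_eq_one, QuotientGroup.mk_one]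
  have hc : Nat.Coprime q (2 ^ m) := Nat.Coprime.pow_right m ((Nat.Prime.coprime_iff_not_dvd Nat.prime_two).mpr hq.2).symm
  have := Nat.dvd_gcd (orderOf_dvd_of_pow_eq_one hin) (orderOf_dvd_of_pow_eq_one h2)
  rw [hc.gcd_eq_one, Nat.dvd_one, orderOf_eq_one_iff] at this
  exact this
end
end WPf

set_option linter.unusedSectionVars false
set_option linter.unusedVariables false
namespace WPf
open Subgroup

theorem num_fact : ∀ c ∈ List.range 226, c % 2 = 1 → c ≠ 1 → c ≠ 105 →
    ∃ p ∈ List.range 226, 2 ≤ p ∧ p ∣ c ∧ (∀ m ∈ List.range p, 2 ≤ m → ¬ m ∣ p) ∧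
      ∀ d ∈ List.range 226, d ∣ c → d % p = 1 → d = 1 := by
  decide +kernel

variable {G : Type*} [Group G] [Finite G]

theorem syl_char {N : Subgroup G} (hN : N.Normal) {p : ℕ} (hp : p.Prime) (hdvd : p ∣ Nat.card N)
    (P : Sylow p N) (h : (P : Subgroup N).Characteristic) :
    ∃ M : Subgroup G, M.Normal ∧ M ≠ ⊥ ∧ IsPGroup p M := by
  have := Fact.mk hp
  refine ⟨(P : Subgroup N).map N.subtype, inferInstance, ?_, P.2.map _⟩
  intro h
  rw [map_eq_bot_iff_of_injective _ N.subtype_injective] at h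
  exact P.ne_bot_of_dvd_card hdvd h

theorem caseB_aux {N : Subgroup G} (hN : N.Normal) (hne : N ≠ ⊥) (ho : ¬ 2 ∣ Nat.card N)
    (hle : Nat.card N ≤ 225) (h105 : Nat.card N ≠ 105) :
    ∃ p : ℕ, p.Prime ∧ Odd p ∧ ∃ M : Subgroup G, M.Normal ∧ M ≠ ⊥ ∧ IsPGroup p M := by
  have h1 : Nat.card N ≠ 1 := by rwa [Ne, card_eq_one]
  obtain ⟨p, hp1, hp2, hpd, hpp, hd⟩ := num_fact (Nat.card N) (List.mem_range.mpr (by omega)) (by omega) h1 h105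
  have hp : p.Prime := by
    rw [Nat.prime_def]
    refine ⟨hp2, fun m hm => ?_⟩
    by_contra hcon
    push Not at hcon
    have := Nat.le_of_dvd (by omega) hm
    have hm0 : m ≠ 0 := by rintro rfl; rw [zero_dvd_iff] at hm; omega
    exact hpp m (List.mem_range.mpr (by omega)) (by omega) hm
  have hodd : Odd p := by
    rw [← Nat.not_even_iff_odd, even_iff_two_dvd]
    intro h; exact ho (h.trans hpd)
  refine ⟨p, hp, hodd, ?_⟩
  have := Fact.mk hp
  obtain ⟨P⟩ : Nonempty (Sylow p N) := inferInstance
  have hc : Nat.card (Sylow p N) = 1 := by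
    have k1 : Nat.card (Sylow p N) ∣ Nat.card N := P.card_dvd_index.trans (index_dvd_card _)
    have k2 := card_sylow_modEq_one p N
    apply hd _ (List.mem_range.mpr _) k1
    · rw [Nat.ModEq, Nat.mod_eq_of_lt (show 1 < p by omega)] at k2; exact k2
    · have := Nat.le_of_dvd Nat.card_pos k1; omega
  have : Subsingleton (Sylow p N) := (Nat.card_eq_one_iff_unique.mp hc).1
  exact syl_char hN hp hpd P inferInstance

theorem caseB {N : Subgroup G} (hN : N.Normal) (hne : N ≠ ⊥) (ho : ¬ 2 ∣ Nat.card N)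
    (hle : Nat.card N ≤ 225) :
    ∃ p : ℕ, p.Prime ∧ Odd p ∧ ∃ M : Subgroup G, M.Normal ∧ M ≠ ⊥ ∧ IsPGroup p M := by
  by_cases h105 : Nat.card N = 105
  · have hz : IsZGroup N := by
      apply IsZGroup.of_squarefree
      rw [h105, show 105 = 3 * (5 * 7) by norm_num, Nat.squarefree_mul (by norm_num), Nat.squarefree_mul (by norm_num)]
      exact ⟨(Nat.prime_three).squarefree, Nat.prime_five.squarefree, (show Nat.Prime 7 by norm_num).squarefree⟩
    have : Group.IsSolvable N := inferInstance
    have hnt : Nontrivial N := (nontrivial_iff_ne_bot N).mpr hne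
    have hlt := Group.IsSolvable.commutator_lt_top_of_nontrivial N
    by_cases hb : commutator N = ⊥
    · have hcomm : ∀ a b : N, a * b = b * a := by
        intro a b
        have := (commutator_eq_bot_iff_center_eq_top (G := N)).mp hb
        have ha : b ∈ center N := by rw [this]; trivial
        exact mem_center_iff.mp ha a
      refine ⟨3, by norm_num, by decide, ?_⟩
      have : Fact (Nat.Prime 3) := ⟨by norm_num⟩
      obtain ⟨P⟩ : Nonempty (Sylow 3 N) := inferInstance
      refine syl_char hN (by norm_num) (by rw [h105]; norm_num) P (P.characteristic_of_normal ⟨?_⟩)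
      intro n hn g
      rw [hcomm g n, mul_inv_cancel_right]; exact hn
    · have hcard : Nat.card ((commutator N).map N.subtype) = Nat.card (commutator N) :=
        card_map_of_injective N.subtype_injective
      have hdv : Nat.card (commutator N) ∣ Nat.card N := card_subgroup_dvd_card _
      have hlt2 : Nat.card (commutator N) ≠ Nat.card N := fun h => hlt.ne (eq_top_of_card_eq _ h)
      have hle2 := Nat.le_of_dvd Nat.card_pos hdv
      apply caseB_aux (N := (commutator N).map N.subtype) inferInstance
      · rwa [Ne, map_eq_bot_iff_of_injective _ N.subtype_injective]
      · rw [hcard]; exact fun h => ho (h.trans hdv)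
      · rw [hcard]; omega
      · rw [hcard]; omega
  · exact caseB_aux hN hne ho hle h105
end WPf

set_option linter.unusedSectionVars false
set_option linter.unusedVariables false
namespace WPf
open Subgroup

/-! The group of order 7200. -/
abbrev VV : Type := ZMod 5 × ZMod 5
abbrev UU : Type := ZMod 3 × ZMod 3
abbrev KK : Type := Multiplicative (VV × UU)

def chi (g : ZMod 4) : ZMod 5 := 2 ^ g.val
def aV (g h : ZMod 4) (s : ZMod 2) (v : VV) : VV :=
  (chi g * (if s = 0 then v.1 else v.2), chi h * (if s = 0 then v.2 else v.1))
def rho (m : ZMod 4) : ZMod 3 := if m = 0 then 1 else if m = 2 then -1 else 0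
def aU (m : ZMod 4) (u : UU) : UU := (rho m * u.1 - rho (m - 1) * u.2, rho (m - 1) * u.1 + rho m * u.2)
def th (g h : ZMod 4) (s : ZMod 2) : ZMod 4 := g + h + if s = 0 then 0 else 2

theorem chi_add (g h : ZMod 4) : chi (g + h) = chi g * chi h := by revert g h; decide
theorem aU_add (m m' : ZMod 4) (u : UU) : aU (m + m') u = aU m (aU m' u) := by revert m m' u; decide +kernel
theorem aU_zero (u : UU) : aU 0 u = u := by revert u; decide
theorem aU_lin (m : ZMod 4) (u u' : UU) : aU m (u + u') = aU m u + aU m u' := by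
  ext <;> simp [aU] <;> ring
theorem aV_lin (g h : ZMod 4) (s : ZMod 2) (v v' : VV) : aV g h s (v + v') = aV g h s v + aV g h s v' := by
  unfold aV; split_ifs <;> ext <;> simp <;> ring
theorem aV_zero (v : VV) : aV 0 0 0 v = v := by
  simp [aV, chi]
theorem aV_mul (g h g' h' : ZMod 4) (s s' : ZMod 2) (v : VV) :
    aV (g + if s = 0 then g' else h') (h + if s = 0 then h' else g') (s + s') v = aV g h s (aV g' h' s' v) := by
  have : ∀ s : ZMod 2, s = 0 ∨ s = 1 := by decide
  have h11 : (1 + 1 : ZMod 2) = 0 := by decide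
  rcases this s with rfl | rfl <;> rcases this s' with rfl | rfl <;>
    simp [aV, chi_add, mul_assoc, h11]
theorem th_mul (g h g' h' : ZMod 4) (s s' : ZMod 2) :
    th (g + if s = 0 then g' else h') (h + if s = 0 then h' else g') (s + s') = th g h s + th g' h' s' := by
  revert g h g' h' s s'; decide +kernel

theorem uLem (m : ZMod 4) (hm : m ≠ 0) (u : UU) : ∃ l, u + l - aU m l = -u := by
  revert m u; decide +kernel
theorem vLem1 (g h : ZMod 4) (s : ZMod 2) (ht : th g h s = 0) (hne : ¬ (g = 0 ∧ h = 0 ∧ s = 0)) (v : VV) :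
    ∃ l, aV 1 1 0 v + l - aV g h s l = v := by
  revert g h s v; decide +kernel
theorem vLem2 (v : VV) : ∃ g h s, aV g h s v = v ∧ th g h s = 2 := by
  revert v; decide +kernel
theorem vFaith (g h : ZMod 4) (s : ZMod 2) (hv : ∀ v, aV g h s v = v) : g = 0 ∧ h = 0 ∧ s = 0 := by
  revert g h s; decide +kernel
theorem aU_two (u : UU) : aU 2 u = -u := by revert u; decide

abbrev W2 : Type := Wreathed.W 2
def wg (w : W2) : ZMod 4 := Multiplicative.toAdd w.left.1
def wh (w : W2) : ZMod 4 := Multiplicative.toAdd w.left.2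
def ws (w : W2) : ZMod 2 := Multiplicative.toAdd w.right
def wmk (g h : ZMod 4) (s : ZMod 2) : W2 := ⟨(Multiplicative.ofAdd g, Multiplicative.ofAdd h), Multiplicative.ofAdd s⟩

theorem wg_mul (w w' : W2) : wg (w * w') = wg w + if ws w = 0 then wg w' else wh w' := by
  obtain ⟨l, r⟩ := w
  rcases Wreathed.two_cases r with rfl | rfl <;> rfl
theorem wh_mul (w w' : W2) : wh (w * w') = wh w + if ws w = 0 then wh w' else wg w' := by
  obtain ⟨l, r⟩ := w
  rcases Wreathed.two_cases r with rfl | rfl <;> rfl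
theorem ws_mul (w w' : W2) : ws (w * w') = ws w + ws w' := rfl
theorem w_ext {w w' : W2} (h1 : wg w = wg w') (h2 : wh w = wh w') (h3 : ws w = ws w') : w = w' := by
  obtain ⟨⟨a, b⟩, c⟩ := w
  obtain ⟨⟨a', b'⟩, c'⟩ := w'
  have h1' : a = a' := h1
  have h2' : b = b' := h2
  have h3' : c = c' := h3
  rw [h1', h2', h3']

def wt (w : W2) : ZMod 4 := th (wg w) (wh w) (ws w)
def wV (w : W2) (v : VV) : VV := aV (wg w) (wh w) (ws w) v
theorem wt_mul (w w' : W2) : wt (w * w') = wt w + wt w' := by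
  rw [wt, wg_mul, wh_mul, ws_mul, th_mul]; rfl
theorem wV_mul (w w' : W2) (v : VV) : wV (w * w') v = wV w (wV w' v) := by
  rw [wV, wg_mul, wh_mul, ws_mul, aV_mul]; rfl
theorem wV_one (v : VV) : wV 1 v = v := aV_zero v
theorem wt_one : wt 1 = 0 := rfl

def kact (w : W2) (k : KK) : KK :=
  Multiplicative.ofAdd (wV w (Multiplicative.toAdd k).1, aU (wt w) (Multiplicative.toAdd k).2)

theorem kact_one (k : KK) : kact 1 k = k := by
  unfold kact; rw [wV_one, wt_one, aU_zero]; rfl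
theorem kact_mul (w w' : W2) (k : KK) : kact (w * w') k = kact w (kact w' k) := by
  unfold kact; rw [wV_mul, wt_mul, aU_add]; rfl
theorem kact_hom (w : W2) (k k' : KK) : kact w (k * k') = kact w k * kact w k' := by
  unfold kact
  rw [toAdd_mul, Prod.fst_add, Prod.snd_add, wV, aV_lin, aU_lin]; rfl

def kaut (w : W2) : MulAut KK where
  toFun := kact w
  invFun := kact w⁻¹
  left_inv k := by rw [← kact_mul, inv_mul_cancel, kact_one]
  right_inv k := by rw [← kact_mul, mul_inv_cancel, kact_one]
  map_mul' := kact_hom w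

def khom : W2 →* MulAut KK where
  toFun := kaut
  map_one' := MulEquiv.ext fun k => kact_one k
  map_mul' w w' := MulEquiv.ext fun k => kact_mul w w' k

abbrev HH : Type := KK ⋊[khom] W2

theorem khom_apply (w : W2) (k : KK) : khom w k = kact w k := rfl

def alp (k : KK) : KK := Multiplicative.ofAdd ((Multiplicative.toAdd k).1, -(Multiplicative.toAdd k).2)
theorem alp_alp (k : KK) : alp (alp k) = k := by
  unfold alp; simp
theorem alp_mul (k k' : KK) : alp (k * k') = alp k * alp k' := by
  unfold alp; rw [← ofAdd_add]; congr 1; ext1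
  · rfl
  · simp [add_comm]
theorem aU_neg (m : ZMod 4) (u : UU) : aU m (-u) = - aU m u := by
  ext <;> simp [aU] <;> ring
theorem alp_act (w : W2) (k : KK) : alp (kact w k) = kact w (alp k) := by
  unfold alp kact; simp [aU_neg]

def Phi : MulAut HH where
  toFun x := ⟨alp x.left, x.right⟩
  invFun x := ⟨alp x.left, x.right⟩
  left_inv x := by simp [alp_alp]
  right_inv x := by simp [alp_alp]
  map_mul' x y := by
    ext1
    · simp only [SemidirectProduct.mul_left, khom_apply, alp_mul, alp_act]
    · rfl

theorem Phi_left (x : HH) : (Phi x).left = alp x.left := rfl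
theorem Phi_right (x : HH) : (Phi x).right = x.right := rfl
theorem alp_one : alp 1 = 1 := by decide
theorem Phi_sq : Phi * Phi = 1 := by
  refine MulEquiv.ext fun x => ?_
  change (⟨alp (alp x.left), x.right⟩ : HH) = x
  rw [alp_alp]
theorem Phi_inr (w : W2) : Phi (SemidirectProduct.inr w) = SemidirectProduct.inr w := by
  ext1
  · exact alp_one
  · rfl

theorem conj_form (l k : KK) (y s : W2) (h : y * s = s * y) :
    (⟨l, y⟩ : HH) * ⟨k, s⟩ * (⟨l, y⟩)⁻¹ = ⟨l * kact y k * (kact s l)⁻¹, s⟩ := by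
  rw [mul_inv_eq_iff_eq_mul]
  ext1
  · simp [khom_apply]
  · simpa using h

theorem cen_c (s : W2) : wmk 1 1 0 * s = s * wmk 1 1 0 := by
  have h0 : ws (wmk 1 1 0) = 0 := rfl
  apply w_ext
  · rw [wg_mul, wg_mul, add_comm]
    rw [if_pos h0]
    congr 1
    split_ifs <;> rfl
  · rw [wh_mul, wh_mul, add_comm]
    rw [if_pos h0]
    congr 1
    split_ifs <;> rfl
  · rw [ws_mul, ws_mul, add_comm]

theorem Phi_class : IsClassPreserving Phi := by
  rintro ⟨k, s⟩
  obtain ⟨⟨v, u⟩, rfl⟩ : ∃ x, k = Multiplicative.ofAdd x := ⟨_, rfl⟩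
  rw [isConj_iff]
  suffices h : ∃ (y : W2) (lv : VV) (lu : UU), y * s = s * y ∧ lv + wV y v - wV s lv = v ∧
      lu + aU (wt y) u - aU (wt s) lu = -u by
    obtain ⟨y, lv, lu, h1, h2, h3⟩ := h
    refine ⟨⟨Multiplicative.ofAdd (lv, lu), y⟩, ?_⟩
    rw [conj_form _ _ _ _ h1]
    have : Phi ⟨Multiplicative.ofAdd (v, u), s⟩ = ⟨Multiplicative.ofAdd (v, -u), s⟩ := rfl
    rw [this]
    congr 1
    rw [← h3]
    conv_rhs => rw [← h2]
    unfold kact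
    rw [← ofAdd_neg, ← ofAdd_add, ← ofAdd_add]
    congr 1
    simp [sub_eq_add_neg]
  have wV0 : wV s 0 = 0 := by simp [wV, aV]
  have aU0 : ∀ m, aU m 0 = 0 := by intro m; simp [aU]
  by_cases ht : wt s = 0
  · by_cases hs : s = 1
    · subst hs
      obtain ⟨g, h, r, h1, h2⟩ := vLem2 v
      refine ⟨wmk g h r, 0, 0, by simp, ?_, ?_⟩
      · rw [wV0, sub_zero, zero_add]; exact h1
      · rw [aU0, sub_zero, zero_add]
        exact (congrArg (fun m => aU m u) h2).trans (aU_two u)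
    · obtain ⟨l, hl⟩ := vLem1 (wg s) (wh s) (ws s) ht (fun h => hs (w_ext h.1 h.2.1 h.2.2)) v
      refine ⟨wmk 1 1 0, l, 0, cen_c s, ?_, ?_⟩
      · rw [add_comm]; exact hl
      · rw [aU0, sub_zero, zero_add]
        exact aU_two u
  · obtain ⟨l, hl⟩ := uLem _ ht u
    refine ⟨1, 0, l, by simp, ?_, ?_⟩
    · rw [wV0, wV_one, sub_zero, zero_add]
    · rw [wt_one, aU_zero, add_comm l]; exact hl

theorem card_W2 : Nat.card W2 = 32 := by
  rw [Nat.card_congr SemidirectProduct.equivProd, Nat.card_prod, Nat.card_prod]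
  simp only [Wreathed.C, Nat.card_eq_fintype_card, Fintype.card_multiplicative, ZMod.card]
  norm_num

theorem card_KK : Nat.card KK = 225 := by
  rw [Nat.card_congr (Multiplicative.toAdd : KK ≃ _), Nat.card_prod, Nat.card_prod, Nat.card_prod]
  simp only [Nat.card_eq_fintype_card, ZMod.card]

instance : Finite W2 := Nat.finite_of_card_ne_zero (by rw [card_W2]; norm_num)
instance : Finite KK := Nat.finite_of_card_ne_zero (by rw [card_KK]; norm_num)

theorem card_HH : Nat.card HH = 7200 := by
  rw [Nat.card_congr SemidirectProduct.equivProd, Nat.card_prod, card_W2, card_KK]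

theorem card_P0 : Nat.card (SemidirectProduct.inr : W2 →* HH).range = 32 := by
  rw [← card_W2]
  exact (Nat.card_congr (MonoidHom.ofInjective SemidirectProduct.inr_injective).toEquiv).symm

noncomputable def P0 : Sylow 2 HH :=
  IsPGroup.toSylow (P := (SemidirectProduct.inr : W2 →* HH).range)
    (IsPGroup.of_card (n := 5) (by rw [card_P0]; norm_num)) (by
      have := (SemidirectProduct.inr : W2 →* HH).range.card_mul_index
      rw [card_P0, card_HH] at this
      omega)

theorem wreathed_HH : HasWreathedSylow2 HH := by
  refine ⟨2, le_rfl, fun P => ⟨?_⟩⟩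
  exact (P.equiv P0).trans (MonoidHom.ofInjective (f := (SemidirectProduct.inr : W2 →* HH))
    SemidirectProduct.inr_injective).symm

theorem Phi_not : Phi ∉ innAut HH := by
  rintro ⟨⟨l, y⟩, hy⟩
  have key : ∀ k : KK, kact y k = alp k := by
    intro k
    have h1 := congrArg (fun σ : MulAut HH => (σ (SemidirectProduct.inl k))) hy
    simp only [MulAut.conj_apply] at h1
    have h2 : (⟨l, y⟩ : HH) * ⟨k, 1⟩ * (⟨l, y⟩)⁻¹ = ⟨alp k, 1⟩ := h1
    rw [conj_form _ _ _ _ (by simp), kact_one] at h2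
    have h3 := congrArg SemidirectProduct.left h2
    simp only at h3
    rw [mul_comm l, mul_inv_cancel_right] at h3
    exact h3
  have h1 : ∀ v, wV y v = v := by
    intro v
    have := congrArg (fun x : KK => (Multiplicative.toAdd x).1) (key (Multiplicative.ofAdd (v, 0)))
    exact this
  have h2 := vFaith _ _ _ h1
  have h3 : y = 1 := w_ext h2.1 h2.2.1 h2.2.2
  subst h3
  have := congrArg (fun x : KK => (Multiplicative.toAdd x).2.1) (key (Multiplicative.ofAdd (0, (1, 0))))
  rw [kact_one] at this
  revert this
  decide

theorem Phi_col : IsColeman Phi := by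
  intro p hp P
  have := Fact.mk hp
  by_cases hp2 : p = 2
  · subst hp2
    obtain ⟨g, hg⟩ := MulAction.exists_smul_eq HH P0 P
    refine ⟨g * (Phi g)⁻¹, fun x hx => ?_⟩
    rw [← hg, Sylow.coe_subgroup_smul, Subgroup.mem_pointwise_smul_iff_inv_smul_mem] at hx
    obtain ⟨w, hw⟩ := hx
    have hw' : SemidirectProduct.inr w = g⁻¹ * x * g := by
      rw [hw]; simp [MulAut.smul_def]
    have hx' : x = g * SemidirectProduct.inr w * g⁻¹ := by rw [hw']; group
    have h2 : Phi x = Phi g * SemidirectProduct.inr w * (Phi g)⁻¹ := by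
      rw [hx', map_mul, map_mul, map_inv, Phi_inr]
    rw [h2, hw']; group
  have hP : ∀ x ∈ (P : Subgroup HH), ∃ j, x ^ p ^ j = 1 := by
    intro x hx
    obtain ⟨j, hj⟩ := P.2 ⟨x, hx⟩
    exact ⟨j, by simpa [Subtype.ext_iff] using hj⟩
  have hr : ∀ x ∈ (P : Subgroup HH), x.right = 1 := by
    intro x hx
    obtain ⟨j, hj⟩ := hP x hx
    have h1 : x.right ^ p ^ j = 1 := by
      have := congrArg (SemidirectProduct.rightHom : HH →* W2) hj
      rw [map_pow, map_one] at this; exact this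
    have h2 : x.right ^ 32 = 1 := by rw [← card_W2]; exact pow_card_eq_one'
    have hc : Nat.Coprime (p ^ j) 32 := by
      apply Nat.Coprime.pow_left
      rw [show 32 = 2 ^ 5 by norm_num]
      exact Nat.Coprime.pow_right _ ((Nat.coprime_primes hp Nat.prime_two).mpr hp2)
    have := Nat.dvd_gcd (orderOf_dvd_of_pow_eq_one h1) (orderOf_dvd_of_pow_eq_one h2)
    rw [hc.gcd_eq_one, Nat.dvd_one, orderOf_eq_one_iff] at this
    exact this
  have hl : ∀ x ∈ (P : Subgroup HH), ∃ j, p ^ j • Multiplicative.toAdd x.left = 0 := by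
    intro x hx
    obtain ⟨j, hj⟩ := hP x hx
    refine ⟨j, ?_⟩
    have h1 : x = SemidirectProduct.inl x.left := by
      ext1
      · rfl
      · rw [hr x hx]; rfl
    rw [h1, ← map_pow, ← map_one SemidirectProduct.inl, SemidirectProduct.inl_inj] at hj
    exact hj
  have tors : ∀ (q : ℕ) [Fact q.Prime], p ≠ q → ∀ (j : ℕ) (a : ZMod q), p ^ j • a = 0 → a = 0 := by
    intro q hq hne j a ha
    rw [nsmul_eq_mul, mul_eq_zero] at ha
    refine ha.resolve_left ?_
    push_cast
    intro h
    have h3 : ((p : ℕ) : ZMod q) = 0 := eq_zero_of_pow_eq_zero h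
    rw [ZMod.natCast_eq_zero_iff] at h3
    exact hne ((Nat.prime_dvd_prime_iff_eq hq.out hp).mp h3).symm
  have : Fact (Nat.Prime 5) := ⟨by norm_num⟩
  have : Fact (Nat.Prime 3) := ⟨by norm_num⟩
  by_cases hp3 : p = 3
  · refine ⟨(SemidirectProduct.inr (wmk 1 1 0))⁻¹, fun x hx => ?_⟩
    obtain ⟨j, hj⟩ := hl x hx
    have h0 : (Multiplicative.toAdd x.left).1 = 0 := by
      ext
      · exact tors 5 (by omega) j _ (congrArg (fun y : VV × UU => y.1.1) hj)
      · exact tors 5 (by omega) j _ (congrArg (fun y : VV × UU => y.1.2) hj)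
    have hr1 := hr x hx
    obtain ⟨k, s⟩ := x
    simp only at hr1 h0
    subst hr1
    rw [inv_inv]
    have e : (SemidirectProduct.inr (wmk 1 1 0) : HH) = ⟨1, wmk 1 1 0⟩ := rfl
    rw [e]
    have := conj_form 1 k (wmk 1 1 0) 1 (by simp)
    refine Eq.trans ?_ this.symm
    rw [kact_one, one_mul, inv_one, mul_one]
    change (⟨alp k, 1⟩ : HH) = _
    congr 1
    unfold alp kact
    rw [h0]
    congr 2
    exact (aU_two _).symm
  · refine ⟨1, fun x hx => ?_⟩
    obtain ⟨j, hj⟩ := hl x hx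
    have h0 : (Multiplicative.toAdd x.left).2 = 0 := by
      ext
      · exact tors 3 hp3 j _ (congrArg (fun y : VV × UU => y.2.1) hj)
      · exact tors 3 hp3 j _ (congrArg (fun y : VV × UU => y.2.2) hj)
    rw [inv_one, one_mul, mul_one]
    ext1
    · rw [Phi_left]
      unfold alp
      rw [h0, neg_zero, ← h0]; rfl
    · rfl

theorem HH_even : ¬ Odd (Nat.card ↥(outC HH ⊓ outCol HH)) := by
  rw [Nat.not_odd_iff_even, even_iff_two_dvd]
  let x : ↥(outC HH ⊓ outCol HH) := ⟨QuotientGroup.mk Phi, ⟨Phi, Phi_class, rfl⟩, ⟨Phi, Phi_col, rfl⟩⟩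
  have hx : orderOf x = 2 := by
    apply orderOf_eq_prime
    · apply Subtype.ext
      change (QuotientGroup.mk Phi : MulAut HH ⧸ innAut HH) ^ 2 = 1
      exact (sq _).trans (congrArg (QuotientGroup.mk' (innAut HH)) Phi_sq)
    · intro h
      have := congrArg Subtype.val h
      exact Phi_not ((QuotientGroup.eq_one_iff Phi).mp this)
  have h := orderOf_dvd_natCard x
  rwa [hx] at h

end WPf

namespace WPf
theorem card_Wn (n : ℕ) : Nat.card (Wreathed.W n) = 2 ^ n * 2 ^ n * 2 := by
  rw [Nat.card_congr SemidirectProduct.equivProd, Nat.card_prod, Nat.card_prod]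
  simp only [Wreathed.C, Nat.card_congr (Multiplicative.toAdd), Nat.card_zmod]
end WPf

/-- In a minimal counterexample, `O_{2\'}(F(G)) ≠ 1`: there is a nontrivial normal
`p`-subgroup for some odd prime `p`. -/
theorem minimal_counterexample_odd_fitting_nontrivial
    (G : Type) [Group G] [Finite G]
    (hW : HasWreathedSylow2 G)
    (φ : MulAut G) (hcp : IsClassPreserving φ) (hcol : IsColeman φ)
    (hord : ∃ k : ℕ, orderOf φ = 2 ^ k) (hni : φ ∉ innAut G)
    (hmin : ∀ (H : Type) [Group H] [Finite H], Nat.card H < Nat.card G →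
      HasWreathedSylow2 H → Odd (Nat.card ↥(outC H ⊓ outCol H))) :
    ∃ p : ℕ, p.Prime ∧ Odd p ∧ ∃ N : Subgroup G, N.Normal ∧ N ≠ ⊥ ∧ IsPGroup p N := by
  obtain ⟨n, hn, hP⟩ := hW
  have P : Sylow 2 G := default
  obtain ⟨e⟩ := hP P
  have hG : Nat.card G ≤ 7200 := by
    by_contra h
    push Not at h
    exact WPf.HH_even (hmin WPf.HH (by rw [WPf.card_HH]; exact h) WPf.wreathed_HH)
  have hc : Nat.card (P : Subgroup G) = 2 ^ n * 2 ^ n * 2 :=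
    (Nat.card_congr e.toEquiv).trans (WPf.card_Wn n)
  have h4 : 4 ≤ 2 ^ n := by
    calc 4 = 2 ^ 2 := by norm_num
      _ ≤ 2 ^ n := Nat.pow_le_pow_right (by norm_num) hn
  have h32 : 32 ≤ Nat.card (P : Subgroup G) := by rw [hc]; nlinarith
  have hmul := (P : Subgroup G).card_mul_index
  have hidx : (P : Subgroup G).index ≤ 225 := by nlinarith
  by_cases hO : ∀ N : Subgroup G, N.Normal → ¬ 2 ∣ Nat.card N → N = ⊥
  · exact absurd (WPf.caseA hO hn P e hidx φ hord hcol) hni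
  · push Not at hO
    obtain ⟨N, hN, ho, hne⟩ := hO
    refine WPf.caseB hN hne ho (le_trans (Nat.le_of_dvd ?_ ?_) hidx)
    · exact Nat.pos_of_ne_zero Subgroup.index_ne_zero_of_finite
    · have hcop : Nat.Coprime (Nat.card N) (Nat.card (P : Subgroup G)) := by
        have h2 : Nat.Coprime (Nat.card N) 2 :=
          ((Nat.Prime.coprime_iff_not_dvd Nat.prime_two).mpr ho).symm
        rw [hc]
        exact ((h2.pow_right _).mul_right (h2.pow_right _)).mul_right h2
      refine hcop.dvd_of_dvd_mul_left ?_
      rw [hmul]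
      exact N.card_subgroup_dvd_card
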